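/- Let N ≥ 2, s ∈ (0,1), and let B ⊂ ℝ^N be an open ball centered at the origin. Then the following dichotomy holds for the eigenspace E := {u ∈ H^s_{B,0} : u is an eigenfunction associated to μ₁^{(s)}(B)} ∪ {0}: either every u ∈ E is radially symmetric (a.e. equal to a function of |x|), or there exist k ∈ ℕ, radially symmetric functions w₁,…,w_k ∈ E, and continuous functions v₁,…,v_N ∈ E such that for each i = 1,…,N one has v_i(σ_{e_i}(x)) = −v_i(x) for all x (antisymmetry with respect to the coordinate hyperplane {x_i = 0}, where e_i is the i-th standard unit vector and σ_{e_i}(x) = x − 2(x·e_i)e_i), the open set {x ∈ B : v_i(x) ≠ 0} has exactly two connected components, and every u ∈ E is a linear combination of w₁,…,w_k, v₁,…,v_N. -/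

import Mathlib

open MeasureTheory Filter Topology Bornology Set
open scoped ENNReal NNReal

noncomputable section

namespace FracNeumann

abbrev Euc (N : ℕ) : Type := EuclideanSpace ℝ (Fin N)

/-- The kernel weight `|x - y| ^ (N + 2s)`. -/
def kern (N : ℕ) (s : ℝ) (x y : Euc N) : ℝ := ‖x - y‖ ^ ((N : ℝ) + 2 * s)

/-- The region `ℝ^{2N} \ (Ω^c × Ω^c)`, where `Ω^c := ℝ^N \ closure Ω`. -/
def reg (N : ℕ) (Ω : Set (Euc N)) : Set (Euc N × Euc N) :=
  {q | q.1 ∈ closure Ω ∨ q.2 ∈ closure Ω}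

/-- The squared seminorm `[u]_{H^s_{Ω,0}}²`, as an extended real number. -/
def semiSq (N : ℕ) (s : ℝ) (Ω : Set (Euc N)) (u : Euc N → ℝ) : ℝ≥0∞ :=
  ∫⁻ q in reg N Ω, ENNReal.ofReal ((u q.1 - u q.2) ^ 2 / kern N s q.1 q.2)

/-- `∫_Ω u²`, as an extended real number. -/
def l2sq (N : ℕ) (Ω : Set (Euc N)) (u : Euc N → ℝ) : ℝ≥0∞ :=
  ∫⁻ x in Ω, ENNReal.ofReal ((u x) ^ 2)

/-- Membership in `H^s_{Ω,0}`. -/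
def memHs (N : ℕ) (s : ℝ) (Ω : Set (Euc N)) (u : Euc N → ℝ) : Prop :=
  Measurable u ∧ l2sq N Ω u < ⊤ ∧ semiSq N s Ω u < ⊤

/-- The squared Gagliardo seminorm `[u]_{H^s(Ω)}²`. -/
def semiSqOn (N : ℕ) (s : ℝ) (Ω : Set (Euc N)) (u : Euc N → ℝ) : ℝ≥0∞ :=
  ∫⁻ q in Ω ×ˢ Ω, ENNReal.ofReal ((u q.1 - u q.2) ^ 2 / kern N s q.1 q.2)

/-- Membership in `H^s(Ω)` (for functions defined on all of `ℝ^N`). -/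
def memHsOn (N : ℕ) (s : ℝ) (Ω : Set (Euc N)) (u : Euc N → ℝ) : Prop :=
  Measurable u ∧ l2sq N Ω u < ⊤ ∧ semiSqOn N s Ω u < ⊤

/-- The normalizing constant `c_{N,s}` of the fractional Laplacian. -/
def cNs (N : ℕ) (s : ℝ) : ℝ :=
  (4 : ℝ) ^ s * s * Real.Gamma ((N : ℝ) / 2 + s) /
    (Real.pi ^ ((N : ℝ) / 2) * Real.Gamma (1 - s))

/-- The nonlocal Neumann derivative `𝒩_s u`. -/
def Nneu (N : ℕ) (s : ℝ) (Ω : Set (Euc N)) (u : Euc N → ℝ) (x : Euc N) : ℝ :=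
  cNs N s * ∫ y in Ω, (u x - u y) / kern N s x y

/-- Membership in `H̃^s_{Ω,0}`: members of `H^s_{Ω,0}` with `𝒩_s u = 0` a.e. in `Ω^c`. -/
def memHsTilde (N : ℕ) (s : ℝ) (Ω : Set (Euc N)) (u : Euc N → ℝ) : Prop :=
  memHs N s Ω u ∧ ∀ᵐ x ∂(volume.restrict (closure Ω)ᶜ), Nneu N s Ω u x = 0

/-- The first nontrivial Neumann eigenvalue `μ₁^{(s)}(Ω)`. -/
def mu1 (N : ℕ) (s : ℝ) (Ω : Set (Euc N)) : ℝ :=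
  sInf {t : ℝ | ∃ u : Euc N → ℝ, memHs N s Ω u ∧ (∫ x in Ω, (u x) ^ 2) = 1 ∧
    (∫ x in Ω, u x) = 0 ∧ t = cNs N s / 2 * (semiSq N s Ω u).toReal}

/-- The bilinear form (without the constant). -/
def bform (N : ℕ) (s : ℝ) (Ω : Set (Euc N)) (u v : Euc N → ℝ) : ℝ :=
  ∫ q in reg N Ω, (u q.1 - u q.2) * (v q.1 - v q.2) / kern N s q.1 q.2

/-- First nontrivial eigenfunction: weak solution associated to `μ₁^{(s)}(Ω)`. -/
def IsFirstEigen (N : ℕ) (s : ℝ) (Ω : Set (Euc N)) (u : Euc N → ℝ) : Prop :=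
  memHs N s Ω u ∧ ¬ (u =ᵐ[volume.restrict Ω] 0) ∧ (∫ x in Ω, u x) = 0 ∧
    ∀ v : Euc N → ℝ, memHs N s Ω v →
      cNs N s / 2 * bform N s Ω u v = mu1 N s Ω * ∫ x in Ω, u x * v x

/-- Reflection `σ_e(x) = x - 2(x·e)e` across the hyperplane `{x·e = 0}`. -/
def reflect (N : ℕ) (e x : Euc N) : Euc N := x - (2 * (inner ℝ x e : ℝ)) • e

/-- The polarization `P_e u` with respect to the hyperplane `{x·e = 0}`. -/
def polarize (N : ℕ) (e : Euc N) (u : Euc N → ℝ) (x : Euc N) : ℝ :=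
  if 0 ≤ (inner ℝ x e : ℝ) then min (u x) (u (reflect N e x))
  else max (u x) (u (reflect N e x))

/-- Foliated Schwarz symmetry with respect to `p`. -/
def FoliatedSchwarz (N : ℕ) (p : Euc N) (u : Euc N → ℝ) : Prop :=
  ∃ uh : ℝ → ℝ → ℝ, (∀ r : ℝ, AntitoneOn (uh r) (Icc 0 Real.pi)) ∧
    ∀ x : Euc N, x ≠ 0 → u x = uh ‖x‖ (Real.arccos ((inner ℝ x p : ℝ) / ‖x‖))

/-- Radial symmetry (pointwise). -/
def Radial (N : ℕ) (u : Euc N → ℝ) : Prop := ∃ f : ℝ → ℝ, ∀ x, u x = f ‖x‖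

/-- Radial symmetry (a.e.). -/
def RadialAE (N : ℕ) (u : Euc N → ℝ) : Prop :=
  ∃ f : ℝ → ℝ, ∀ᵐ x : Euc N ∂volume, u x = f ‖x‖

/-- The set `{x ∈ Ω : u x ≠ 0}` has exactly two connected components. -/
def TwoNodal (N : ℕ) (Ω : Set (Euc N)) (u : Euc N → ℝ) : Prop :=
  Nat.card (ConnectedComponents {x : Euc N // x ∈ Ω ∧ u x ≠ 0}) = 2

/-- Bounded Lipschitz domain: open, bounded, connected, and near every boundary point the set
is the region above the graph of a Lipschitz function in some direction `e`. -/
def IsLipschitzDomain (N : ℕ) (Ω : Set (Euc N)) : Prop :=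
  IsOpen Ω ∧ IsBounded Ω ∧ IsConnected Ω ∧
    ∀ x ∈ frontier Ω, ∃ e : Euc N, ‖e‖ = 1 ∧ ∃ r : ℝ, 0 < r ∧
      ∃ (L : NNReal) (f : Euc N → ℝ), LipschitzWith L f ∧
        ∀ y ∈ Metric.ball x r,
          (y ∈ Ω ↔ f (y - ((inner ℝ y e : ℝ)) • e) < (inner ℝ y e : ℝ))

/-- `g` is a weak gradient of `u` in `Ω`, square-integrable on `Ω`. -/
def IsWeakGradient (N : ℕ) (Ω : Set (Euc N)) (u : Euc N → ℝ) (g : Euc N → Euc N) : Prop :=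
  Measurable g ∧ (∫⁻ x in Ω, ENNReal.ofReal (‖g x‖ ^ 2)) < ⊤ ∧
    ∀ φ : Euc N → ℝ, ContDiff ℝ (⊤ : ℕ∞) φ → HasCompactSupport φ → tsupport φ ⊆ Ω →
      ∀ i : Fin N, (∫ x in Ω, u x * fderiv ℝ φ x (EuclideanSpace.single i 1)) =
        - ∫ x in Ω, g x i * φ x

/-- Membership in `H¹(Ω)`. -/
def memH1 (N : ℕ) (Ω : Set (Euc N)) (u : Euc N → ℝ) : Prop :=
  Measurable u ∧ l2sq N Ω u < ⊤ ∧ ∃ g, IsWeakGradient N Ω u g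

/-- `∫_Ω |∇u|²`, as an extended real number. -/
def gradSq (N : ℕ) (Ω : Set (Euc N)) (u : Euc N → ℝ) : ℝ≥0∞ :=
  ⨅ (g : Euc N → Euc N) (_ : IsWeakGradient N Ω u g), ∫⁻ x in Ω, ENNReal.ofReal (‖g x‖ ^ 2)

/-- Rayleigh quotient for the fractional Neumann problem. -/
def rayleighS (N : ℕ) (s : ℝ) (Ω : Set (Euc N)) (u : Euc N → ℝ) : ℝ≥0∞ :=
  ENNReal.ofReal (cNs N s / 2) * semiSq N s Ω u / l2sq N Ω u

/-- Rayleigh quotient for the local Neumann problem. -/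
def rayleigh1 (N : ℕ) (Ω : Set (Euc N)) (u : Euc N → ℝ) : ℝ≥0∞ :=
  gradSq N Ω u / l2sq N Ω u

/-- The min-max value `μ_n^{(s)}(Ω)` over `n`-dimensional subspaces of `H^s_{Ω,0} ∩ L²₀(Ω)`. -/
def muNs (N : ℕ) (s : ℝ) (Ω : Set (Euc N)) (n : ℕ) : ℝ≥0∞ :=
  ⨅ (A : Submodule ℝ (Euc N → ℝ)) (_ : Module.finrank ℝ A = n ∧
      (∀ u ∈ A, memHs N s Ω u ∧ (∫ x in Ω, u x) = 0) ∧
      (∀ u ∈ A, u =ᵐ[(volume : Measure (Euc N))] 0 → u = 0)),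
    ⨆ (u : Euc N → ℝ) (_ : u ∈ A ∧ u ≠ 0), rayleighS N s Ω u

/-- The min-max value over `n`-dimensional subspaces of `H̃^s_{Ω,0} ∩ L²₀(Ω)`. -/
def muNsTilde (N : ℕ) (s : ℝ) (Ω : Set (Euc N)) (n : ℕ) : ℝ≥0∞ :=
  ⨅ (A : Submodule ℝ (Euc N → ℝ)) (_ : Module.finrank ℝ A = n ∧
      (∀ u ∈ A, memHsTilde N s Ω u ∧ (∫ x in Ω, u x) = 0) ∧
      (∀ u ∈ A, u =ᵐ[(volume : Measure (Euc N))] 0 → u = 0)),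
    ⨆ (u : Euc N → ℝ) (_ : u ∈ A ∧ u ≠ 0), rayleighS N s Ω u

/-- The min-max value `μ_n^{(1)}(Ω)` over `n`-dimensional subspaces of `H¹(Ω) ∩ L²₀(Ω)`. -/
def muN1 (N : ℕ) (Ω : Set (Euc N)) (n : ℕ) : ℝ≥0∞ :=
  ⨅ (A : Submodule ℝ (Euc N → ℝ)) (_ : Module.finrank ℝ A = n ∧
      (∀ u ∈ A, memH1 N Ω u ∧ (∫ x in Ω, u x) = 0) ∧
      (∀ u ∈ A, u =ᵐ[volume.restrict Ω] 0 → u = 0)),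
    ⨆ (u : Euc N → ℝ) (_ : u ∈ A ∧ u ≠ 0), rayleigh1 N Ω u

/-- `μ_n^{(s)}(Ω)` including `μ₀^{(s)}(Ω) := 0`. -/
def muNsFull (N : ℕ) (s : ℝ) (Ω : Set (Euc N)) (n : ℕ) : ℝ≥0∞ :=
  if n = 0 then 0 else muNs N s Ω n

/-- `μ_n^{(1)}(Ω)` including `μ₀^{(1)}(Ω) := 0`. -/
def muN1Full (N : ℕ) (Ω : Set (Euc N)) (n : ℕ) : ℝ≥0∞ :=
  if n = 0 then 0 else muN1 N Ω n

/-- The squared `H^s_{Ω,0}`-seminorm of the `s`-minimal extension of `u`: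
the minimal value of `[v]²` over `v ∈ H^s_{Ω,0}` with `v = u` a.e. in `Ω`. -/
def minExtSemiSq (N : ℕ) (s : ℝ) (Ω : Set (Euc N)) (u : Euc N → ℝ) : ℝ≥0∞ :=
  ⨅ (v : Euc N → ℝ) (_ : memHs N s Ω v ∧ v =ᵐ[volume.restrict Ω] u), semiSq N s Ω v

/-- `ω_{N-1}`: volume of the unit ball of `ℝ^{N-1}`. -/
def omegaPrev (N : ℕ) : ℝ := (volume (Metric.ball (0 : Euc (N - 1)) 1)).toReal

/-- Membership in `L²₀(Ω)`. -/
def memL20 (N : ℕ) (Ω : Set (Euc N)) (u : Euc N → ℝ) : Prop :=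
  Measurable u ∧ l2sq N Ω u < ⊤ ∧ (∫ x in Ω, u x) = 0

/-- The functional `F_s` (value `+∞` outside `H^s(Ω)`). -/
def Fs (N : ℕ) (s : ℝ) (Ω : Set (Euc N)) (u : Euc N → ℝ) : ℝ≥0∞ :=
  ENNReal.ofReal (1 - s) * minExtSemiSq N s Ω u

/-- The functional `F₁` (value `+∞` outside `H¹(Ω)`). -/
def F1 (N : ℕ) (Ω : Set (Euc N)) (u : Euc N → ℝ) : ℝ≥0∞ :=
  ENNReal.ofReal (omegaPrev N / (2 * N)) * gradSq N Ω u

end FracNeumann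

namespace FracNeumann

/-- The kernel as a function of the difference. -/
def Kz (N : ℕ) (s : ℝ) (z : Euc N) : ℝ := (‖z‖ ^ ((N : ℝ) + 2 * s))⁻¹

/-- The integration region for the ball of radius `R`. -/
def rg (N : ℕ) (R : ℝ) : Set (Euc N × Euc N) := {q | ‖q.1‖ ≤ R ∨ ‖q.2‖ ≤ R}

/-- Membership in the space, in terms of integrability. -/
def Mem (N : ℕ) (s R : ℝ) (u : Euc N → ℝ) : Prop :=
  Measurable u ∧ IntegrableOn (fun x => (u x) ^ 2) (Metric.closedBall (0 : Euc N) R) ∧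
    IntegrableOn (fun q : Euc N × Euc N => (u q.1 - u q.2) ^ 2 * Kz N s (q.1 - q.2)) (rg N R)

/-- The bilinear form. -/
def af (N : ℕ) (s R : ℝ) (u v : Euc N → ℝ) : ℝ :=
  ∫ q in rg N R, (u q.1 - u q.2) * (v q.1 - v q.2) * Kz N s (q.1 - q.2)

lemma Kz_nonneg (N : ℕ) (s : ℝ) (z : Euc N) : 0 ≤ Kz N s z := by
  unfold Kz; positivity

lemma Kz_neg (N : ℕ) (s : ℝ) (z : Euc N) : Kz N s (-z) = Kz N s z := by
  simp [Kz]

lemma Kz_sub_comm (N : ℕ) (s : ℝ) (x y : Euc N) : Kz N s (x - y) = Kz N s (y - x) := by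
  rw [← Kz_neg, neg_sub]

lemma Kz_congr (N : ℕ) (s : ℝ) {z w : Euc N} (h : ‖z‖ = ‖w‖) : Kz N s z = Kz N s w := by
  simp [Kz, h]

lemma measurable_Kz (N : ℕ) (s : ℝ) : Measurable (Kz N s) := by
  unfold Kz; fun_prop

lemma measurable_Kz2 (N : ℕ) (s : ℝ) :
    Measurable (fun q : Euc N × Euc N => Kz N s (q.1 - q.2)) :=
  (measurable_Kz N s).comp (measurable_fst.sub measurable_snd)

lemma measurableSet_rg (N : ℕ) (R : ℝ) : MeasurableSet (rg N R) :=
  (measurableSet_le measurable_fst.norm measurable_const).union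
    (measurableSet_le measurable_snd.norm measurable_const)

lemma Kz_pos {N : ℕ} {s : ℝ} {z : Euc N} (hz : z ≠ 0) : 0 < Kz N s z := by
  have := norm_pos_iff.mpr hz
  unfold Kz; positivity

lemma Kz_anti {N : ℕ} {s : ℝ} (hs : 0 < s) {z w : Euc N} (hz : z ≠ 0) (h : ‖z‖ ≤ ‖w‖) :
    Kz N s w ≤ Kz N s z := by
  have := norm_pos_iff.mpr hz
  unfold Kz
  gcongr

lemma Kz_anti_lt {N : ℕ} {s : ℝ} (hs : 0 < s) {z w : Euc N} (hz : z ≠ 0) (h : ‖z‖ < ‖w‖) :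
    Kz N s w < Kz N s z := by
  have := norm_pos_iff.mpr hz
  unfold Kz
  gcongr

lemma Kz_le_of_le {N : ℕ} {s : ℝ} (hs : 0 < s) {z : Euc N} {r : ℝ} (hr : 0 < r) (h : r ≤ ‖z‖) :
    Kz N s z ≤ (r ^ ((N : ℝ) + 2 * s))⁻¹ := by
  unfold Kz
  gcongr

lemma le_Kz_of_le {N : ℕ} {s : ℝ} (hs : 0 < s) {z : Euc N} {r : ℝ} (hz : z ≠ 0) (h : ‖z‖ ≤ r) :
    (r ^ ((N : ℝ) + 2 * s))⁻¹ ≤ Kz N s z := by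
  have := norm_pos_iff.mpr hz
  unfold Kz
  gcongr

/-- basic integrability -/
lemma integrable_minKz {N : ℕ} (hN : 2 ≤ N) {s : ℝ} (hs0 : 0 < s) (hs1 : s < 1) :
    Integrable (fun z : Euc N => min 1 (‖z‖ ^ 2) * Kz N s z) := by
  have : Nontrivial (Euc N) := by
    have : Nonempty (Fin N) := ⟨⟨0, by omega⟩⟩
    infer_instance
  unfold Kz
  rw [integrable_fun_norm_addHaar (f := fun r : ℝ => min 1 (r ^ 2) * (r ^ ((N : ℝ) + 2 * s))⁻¹)
    (volume : Measure (Euc N))]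
  rw [finrank_euclideanSpace, Fintype.card_fin]
  have e : Ioi (0 : ℝ) = Ioc 0 1 ∪ Ioi 1 := by rw [Ioc_union_Ioi_eq_Ioi]; norm_num
  have key : ∀ y : ℝ, 0 < y → y ^ (N - 1) * (y ^ ((N : ℝ) + 2 * s))⁻¹ = y ^ (-1 - 2 * s) := by
    intro y hy
    rw [← Real.rpow_natCast, ← Real.rpow_neg hy.le, ← Real.rpow_add hy]
    congr 1
    rw [Nat.cast_sub (by omega)]; push_cast; ring
  rw [e, integrableOn_union]
  constructor
  · have h1 : IntegrableOn (fun y : ℝ => y ^ (1 - 2 * s)) (Ioc 0 1) := by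
      rw [← intervalIntegrable_iff_integrableOn_Ioc_of_le zero_le_one]
      exact intervalIntegral.intervalIntegrable_rpow' (by linarith)
    refine h1.congr_fun ?_ measurableSet_Ioc
    intro y hy
    have h2 : min 1 (y ^ 2) = y ^ 2 := min_eq_right (pow_le_one₀ hy.1.le hy.2)
    simp only [smul_eq_mul, h2]
    rw [mul_left_comm, key y hy.1, ← Real.rpow_natCast, ← Real.rpow_add hy.1]
    congr 1; push_cast; ring
  · have h1 : IntegrableOn (fun y : ℝ => y ^ (-1 - 2 * s)) (Ioi 1) :=
      integrableOn_Ioi_rpow_of_lt (by linarith) one_pos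
    refine h1.congr_fun ?_ measurableSet_Ioi
    intro y hy
    have hy' : (1 : ℝ) < y := hy
    have h2 : min 1 (y ^ 2) = 1 := min_eq_left (one_le_pow₀ hy'.le)
    simp only [smul_eq_mul, h2, one_mul]
    rw [key y (by linarith)]

/-- total mass of the truncated kernel -/
def I0 (N : ℕ) (s : ℝ) : ℝ := ∫ z : Euc N, min 1 (‖z‖ ^ 2) * Kz N s z

lemma I0_nonneg (N : ℕ) (s : ℝ) : 0 ≤ I0 N s :=
  integral_nonneg (fun z => mul_nonneg (by positivity) (Kz_nonneg _ _ _))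

lemma Kz_smul {N : ℕ} {s : ℝ} {t : ℝ} (ht : 0 < t) (z : Euc N) :
    Kz N s (t • z) = (t ^ ((N : ℝ) + 2 * s))⁻¹ * Kz N s z := by
  unfold Kz
  rw [norm_smul, Real.norm_of_nonneg ht.le, Real.mul_rpow ht.le (norm_nonneg _), mul_inv]

lemma scaled_fun {N : ℕ} {s : ℝ} {t : ℝ} (ht : 0 < t) (z : Euc N) :
    min 1 (‖t⁻¹ • z‖ ^ 2) * Kz N s (t⁻¹ • z) =
      t ^ ((N : ℝ) + 2 * s) * (min 1 (‖z‖ ^ 2 / t ^ 2) * Kz N s z) := by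
  rw [Kz_smul (inv_pos.mpr ht), norm_smul, Real.norm_of_nonneg (inv_nonneg.mpr ht.le),
    Real.inv_rpow ht.le, inv_inv, mul_pow, inv_pow]
  rw [show (t ^ 2)⁻¹ * ‖z‖ ^ 2 = ‖z‖ ^ 2 / t ^ 2 by field_simp]
  ring

lemma integrable_scaled {N : ℕ} (hN : 2 ≤ N) {s : ℝ} (hs0 : 0 < s) (hs1 : s < 1)
    {t : ℝ} (ht : 0 < t) :
    Integrable (fun z : Euc N => min 1 (‖z‖ ^ 2 / t ^ 2) * Kz N s z) := by
  have h := (integrable_minKz hN hs0 hs1).comp_smul (inv_ne_zero ht.ne')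
  have h2 := h.const_mul (t ^ ((N : ℝ) + 2 * s))⁻¹
  refine h2.congr (Eventually.of_forall fun z => ?_)
  simp only
  rw [scaled_fun ht, ← mul_assoc, inv_mul_cancel₀ (Real.rpow_pos_of_pos ht _).ne', one_mul]

lemma integral_scaled {N : ℕ} {s : ℝ} {t : ℝ} (ht : 0 < t) :
    ∫ z : Euc N, min 1 (‖z‖ ^ 2 / t ^ 2) * Kz N s z = t ^ (-(2 * s)) * I0 N s := by
  have h := Measure.integral_comp_smul (volume : Measure (Euc N))
    (fun z => min 1 (‖z‖ ^ 2) * Kz N s z) t⁻¹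
  simp_rw [scaled_fun ht] at h
  rw [integral_const_mul, finrank_euclideanSpace, Fintype.card_fin] at h
  have hp : 0 < t ^ ((N : ℝ) + 2 * s) := Real.rpow_pos_of_pos ht _
  have h3 : |((t⁻¹) ^ N)⁻¹| = t ^ N := by
    rw [inv_pow, inv_inv, abs_of_pos (by positivity)]
  rw [h3] at h
  have : t ^ (-(2 * s)) = (t ^ ((N : ℝ) + 2 * s))⁻¹ * t ^ N := by
    rw [← Real.rpow_neg ht.le, ← Real.rpow_natCast, ← Real.rpow_add ht]; congr 1; ring
  rw [this, mul_assoc]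
  unfold I0
  rw [smul_eq_mul] at h
  rw [← h, ← mul_assoc, inv_mul_cancel₀ hp.ne', one_mul]

lemma integrableOn_Kz {N : ℕ} (hN : 2 ≤ N) {s : ℝ} (hs0 : 0 < s) (hs1 : s < 1)
    {t : ℝ} (ht : 0 < t) : IntegrableOn (Kz N s) {z | t < ‖z‖} := by
  refine (integrable_scaled hN hs0 hs1 ht).integrableOn.congr_fun ?_
    (measurableSet_lt measurable_const measurable_norm)
  intro z hz
  have hz' : t < ‖z‖ := hz
  have : 1 ≤ ‖z‖ ^ 2 / t ^ 2 := by
    rw [one_le_div (by positivity)]; gcongr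
  simp [min_eq_left this]

end FracNeumann

namespace FracNeumann

variable {N : ℕ} {s R : ℝ}

lemma Mem.meas {u : Euc N → ℝ} (h : Mem N s R u) : Measurable u := h.1

lemma meas_diff {u : Euc N → ℝ} (h : Measurable u) :
    Measurable (fun q : Euc N × Euc N => u q.1 - u q.2) :=
  (h.comp measurable_fst).sub (h.comp measurable_snd)

lemma Mem.of_le {u v w : Euc N → ℝ} (hu : Mem N s R u) (hv : Mem N s R v) (hw : Measurable w)
    (C : ℝ) (h1 : ∀ x, |w x| ≤ C * (|u x| + |v x|))
    (h2 : ∀ x y, |w x - w y| ≤ C * (|u x - u y| + |v x - v y|)) : Mem N s R w := by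
  have key : ∀ a b c : ℝ, |a| ≤ C * (|b| + |c|) → a ^ 2 ≤ 2 * C ^ 2 * (b ^ 2 + c ^ 2) := by
    intro a b c h
    have h0 := abs_nonneg a
    have : |a| ^ 2 ≤ (C * (|b| + |c|)) ^ 2 := by gcongr
    rw [sq_abs] at this
    refine this.trans ?_
    have h3 : (|b| + |c|) ^ 2 ≤ 2 * (b ^ 2 + c ^ 2) := by
      nlinarith [sq_nonneg (|b| - |c|), sq_abs b, sq_abs c]
    nlinarith [sq_nonneg C]
  refine ⟨hw, ?_, ?_⟩
  · refine Integrable.mono' ((hu.2.1.add hv.2.1).const_mul (2 * C ^ 2))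
      (hw.pow_const 2).aestronglyMeasurable (Eventually.of_forall fun x => ?_)
    rw [Real.norm_of_nonneg (sq_nonneg _)]
    exact key _ _ _ (h1 x)
  · refine Integrable.mono' ((hu.2.2.add hv.2.2).const_mul (2 * C ^ 2))
      (((meas_diff hw).pow_const 2).mul (measurable_Kz2 N s)).aestronglyMeasurable
      (Eventually.of_forall fun q => ?_)
    have hk := Kz_nonneg N s (q.1 - q.2)
    rw [Real.norm_of_nonneg (mul_nonneg (sq_nonneg _) hk)]
    have := mul_le_mul_of_nonneg_right (key _ _ _ (h2 q.1 q.2)) hk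
    refine this.trans (le_of_eq ?_)
    simp only [Pi.add_apply]
    ring

lemma Mem.const (c : ℝ) : Mem N s R (fun _ => c) := by
  refine ⟨measurable_const, ?_, ?_⟩
  · exact integrableOn_const (by exact (isCompact_closedBall _ _).measure_lt_top.ne)
  · simp

lemma Mem.zero : Mem N s R (0 : Euc N → ℝ) := Mem.const 0

lemma Mem.add {u v : Euc N → ℝ} (hu : Mem N s R u) (hv : Mem N s R v) : Mem N s R (u + v) := by
  refine hu.of_le hv (hu.1.add hv.1) 1 ?_ ?_
  · intro x; rw [one_mul]; exact abs_add_le _ _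
  · intro x y; rw [one_mul]
    simp only [Pi.add_apply]
    rw [add_sub_add_comm]; exact abs_add_le _ _

lemma Mem.smul {u : Euc N → ℝ} (c : ℝ) (hu : Mem N s R u) : Mem N s R (c • u) := by
  refine hu.of_le hu (hu.1.const_smul c) |c| ?_ ?_
  · intro x; simp only [Pi.smul_apply, smul_eq_mul, abs_mul]
    gcongr; linarith [abs_nonneg (u x)]
  · intro x y; simp only [Pi.smul_apply, smul_eq_mul, ← mul_sub, abs_mul]
    gcongr; linarith [abs_nonneg (u x - u y)]

lemma Mem.neg {u : Euc N → ℝ} (hu : Mem N s R u) : Mem N s R (-u) := by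
  simpa using hu.smul (-1)

lemma Mem.sub {u v : Euc N → ℝ} (hu : Mem N s R u) (hv : Mem N s R v) : Mem N s R (u - v) := by
  rw [sub_eq_add_neg]; exact hu.add hv.neg

lemma Mem.pos {u : Euc N → ℝ} (hu : Mem N s R u) : Mem N s R (fun x => max (u x) 0) := by
  refine hu.of_le hu (hu.1.max measurable_const) 1 ?_ ?_
  · intro x; rw [one_mul, abs_of_nonneg (le_max_right _ _)]
    refine max_le ?_ (by positivity)
    linarith [le_abs_self (u x), abs_nonneg (u x)]
  · intro x y; rw [one_mul]
    refine (abs_max_sub_max_le_abs _ _ _).trans ?_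
    linarith [abs_nonneg (u x - u y)]

lemma Mem.integrable_af {u v : Euc N → ℝ} (hu : Mem N s R u) (hv : Mem N s R v) :
    IntegrableOn (fun q : Euc N × Euc N =>
      (u q.1 - u q.2) * (v q.1 - v q.2) * Kz N s (q.1 - q.2)) (rg N R) := by
  refine Integrable.mono' (hu.2.2.add hv.2.2)
      (((meas_diff hu.1).mul (meas_diff hv.1)).mul (measurable_Kz2 N s)).aestronglyMeasurable
      (Eventually.of_forall fun q => ?_)
  have hk := Kz_nonneg N s (q.1 - q.2)
  rw [norm_mul, Real.norm_of_nonneg hk, Real.norm_eq_abs]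
  simp only [Pi.add_apply]
  rw [← add_mul]
  gcongr
  rw [abs_le]
  constructor <;> nlinarith [sq_nonneg ((u q.1 - u q.2) + (v q.1 - v q.2)),
    sq_nonneg ((u q.1 - u q.2) - (v q.1 - v q.2)), sq_nonneg (u q.1 - u q.2),
    sq_nonneg (v q.1 - v q.2)]

lemma Mem.integrable_mul {u v : Euc N → ℝ} (hu : Mem N s R u) (hv : Mem N s R v) :
    IntegrableOn (fun x => u x * v x) (Metric.closedBall (0 : Euc N) R) := by
  refine Integrable.mono' (hu.2.1.add hv.2.1) (hu.1.mul hv.1).aestronglyMeasurable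
      (Eventually.of_forall fun x => ?_)
  rw [Real.norm_eq_abs]
  simp only [Pi.add_apply]
  rw [abs_le]
  constructor <;> nlinarith [sq_nonneg (u x + v x), sq_nonneg (u x - v x), sq_nonneg (u x),
    sq_nonneg (v x)]

lemma Mem.integrableOn {u : Euc N → ℝ} (hu : Mem N s R u) :
    IntegrableOn u (Metric.closedBall (0 : Euc N) R) := by
  simpa using hu.integrable_mul (Mem.const 1)

lemma af_comm (u v : Euc N → ℝ) : af N s R u v = af N s R v u := by
  unfold af; congr 1; ext q; ring

lemma af_add_left {u u' v : Euc N → ℝ} (hu : Mem N s R u) (hu' : Mem N s R u')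
    (hv : Mem N s R v) : af N s R (u + u') v = af N s R u v + af N s R u' v := by
  unfold af
  rw [← integral_add (hu.integrable_af hv) (hu'.integrable_af hv)]
  congr 1; ext q; simp only [Pi.add_apply]; ring

lemma af_smul_left (c : ℝ) (u v : Euc N → ℝ) : af N s R (c • u) v = c * af N s R u v := by
  unfold af
  rw [← integral_const_mul]
  congr 1; ext q; simp only [Pi.smul_apply, smul_eq_mul]; ring

lemma af_neg_left (u v : Euc N → ℝ) : af N s R (-u) v = - af N s R u v := by
  have := af_smul_left (N := N) (s := s) (R := R) (-1) u v
  simpa using this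

lemma af_sub_left {u u' v : Euc N → ℝ} (hu : Mem N s R u) (hu' : Mem N s R u')
    (hv : Mem N s R v) : af N s R (u - u') v = af N s R u v - af N s R u' v := by
  rw [sub_eq_add_neg, af_add_left hu hu'.neg hv, af_neg_left, sub_eq_add_neg]

lemma af_const_left (c : ℝ) (v : Euc N → ℝ) : af N s R (fun _ => c) v = 0 := by
  simp [af]

lemma ae_prod_of {P : Euc N → Prop} (h : ∀ᵐ x : Euc N, P x) :
    ∀ᵐ q : Euc N × Euc N, P q.1 ∧ P q.2 := by
  have h1 := (Measure.quasiMeasurePreserving_fst (μ := (volume : Measure (Euc N)))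
    (ν := (volume : Measure (Euc N)))).ae h
  have h2 := (Measure.quasiMeasurePreserving_snd (μ := (volume : Measure (Euc N)))
    (ν := (volume : Measure (Euc N)))).ae h
  exact h1.and h2

lemma Mem.congr {u v : Euc N → ℝ} (hu : Mem N s R u) (hv : Measurable v) (h : u =ᵐ[volume] v) :
    Mem N s R v := by
  refine ⟨hv, ?_, ?_⟩
  · refine hu.2.1.congr ?_
    filter_upwards [ae_restrict_of_ae h] with x hx
    rw [hx]
  · refine hu.2.2.congr ?_
    filter_upwards [ae_restrict_of_ae (ae_prod_of h)] with q hq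
    rw [hq.1, hq.2]

lemma af_congr {u u' v : Euc N → ℝ} (h : u =ᵐ[volume] u') : af N s R u v = af N s R u' v := by
  unfold af
  apply integral_congr_ae
  filter_upwards [ae_restrict_of_ae (ae_prod_of h)] with q hq
  rw [hq.1, hq.2]

section Iso
variable (g : Euc N ≃ₗᵢ[ℝ] Euc N)

lemma mp_prod : MeasurePreserving (fun q : Euc N × Euc N => (g q.1, g q.2)) :=
  g.measurePreserving.prod g.measurePreserving

lemma me_prod : MeasurableEmbedding (fun q : Euc N × Euc N => (g q.1, g q.2)) :=
  (g.toHomeomorph.toMeasurableEquiv.prodCongr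
    g.toHomeomorph.toMeasurableEquiv).measurableEmbedding

lemma pre_rg : (fun q : Euc N × Euc N => (g q.1, g q.2)) ⁻¹' (rg N R) = rg N R := by
  ext q; simp [rg]

lemma pre_ball : g ⁻¹' (Metric.closedBall (0 : Euc N) R) = Metric.closedBall (0 : Euc N) R := by
  ext q; simp

lemma setInt_comp (f : Euc N → ℝ) : ∫ x in Metric.closedBall (0 : Euc N) R, f (g x) =
    ∫ x in Metric.closedBall (0 : Euc N) R, f x := by
  have := g.measurePreserving.setIntegral_preimage_emb
    g.toHomeomorph.toMeasurableEquiv.measurableEmbedding f (Metric.closedBall (0 : Euc N) R)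
  rwa [pre_ball] at this

lemma Mem.comp {u : Euc N → ℝ} (hu : Mem N s R u) : Mem N s R (fun x => u (g x)) := by
  refine ⟨hu.1.comp g.continuous.measurable, ?_, ?_⟩
  · have := (g.measurePreserving.integrableOn_comp_preimage
      g.toHomeomorph.toMeasurableEquiv.measurableEmbedding).2 hu.2.1
    rwa [pre_ball] at this
  · have := ((mp_prod g).integrableOn_comp_preimage (me_prod g)).2 hu.2.2
    rw [pre_rg] at this
    refine this.congr_fun ?_ (measurableSet_rg N R)
    intro q _
    simp only [Function.comp]
    rw [← map_sub, Kz_congr N s (g.norm_map (q.1 - q.2))]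

lemma af_comp (u v : Euc N → ℝ) : af N s R (fun x => u (g x)) (fun x => v (g x)) =
    af N s R u v := by
  unfold af
  have := (mp_prod g).setIntegral_preimage_emb (me_prod g) (fun q : Euc N × Euc N =>
      (u q.1 - u q.2) * (v q.1 - v q.2) * Kz N s (q.1 - q.2)) (rg N R)
  rw [pre_rg] at this
  rw [← this]
  congr 1; ext q
  rw [← map_sub, Kz_congr N s (g.norm_map (q.1 - q.2))]
end Iso

/-- `φ(x) f(x-y)` is integrable on the product -/
lemma integrable_conv1 {φ f : Euc N → ℝ} (hφ : Integrable φ) (hf : Integrable f) :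
    Integrable (fun q : Euc N × Euc N => φ q.1 * f (q.1 - q.2)) := by
  have h := (hφ.convolution_integrand (ContinuousLinearMap.mul ℝ ℝ) (hf.comp_neg)).swap
  refine h.congr (Eventually.of_forall fun q => ?_)
  simp [Function.comp]

lemma integrable_conv2 {φ f : Euc N → ℝ} (hφ : Integrable φ) (hf : Integrable f) :
    Integrable (fun q : Euc N × Euc N => φ q.2 * f (q.1 - q.2)) := by
  have h := (hφ.convolution_integrand (ContinuousLinearMap.mul ℝ ℝ) hf)
  refine h.congr (Eventually.of_forall fun q => ?_)
  simp

lemma integrableOn_rg_conv {f : Euc N → ℝ} (hf : Integrable f) :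
    IntegrableOn (fun q : Euc N × Euc N => f (q.1 - q.2)) (rg N R) := by
  have hB : Integrable ((Metric.closedBall (0 : Euc N) R).indicator (fun _ => (1 : ℝ))) :=
    (integrable_indicator_iff Metric.isClosed_closedBall.measurableSet).2
      (integrableOn_const (isCompact_closedBall _ _).measure_lt_top.ne)
  have e : rg N R = {q | ‖q.1‖ ≤ R} ∪ {q | ‖q.2‖ ≤ R} := rfl
  rw [e, integrableOn_union]
  constructor
  · rw [← integrable_indicator_iff (measurableSet_le measurable_fst.norm measurable_const)]
    refine (integrable_conv1 hB hf).congr (Eventually.of_forall fun q => ?_)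
    by_cases h : ‖q.1‖ ≤ R <;> simp [indicator, h]
  · rw [← integrable_indicator_iff (measurableSet_le measurable_snd.norm measurable_const)]
    refine (integrable_conv2 hB hf).congr (Eventually.of_forall fun q => ?_)
    by_cases h : ‖q.2‖ ≤ R <;> simp [indicator, h]

lemma Mem.bump (hN : 2 ≤ N) (hs0 : 0 < s) (hs1 : s < 1) {β : Euc N → ℝ} (hβ : Measurable β)
    {C t : ℝ} (ht : 0 < t) (h1 : ∀ x, |β x| ≤ 1)
    (h2 : ∀ x y, (β x - β y) ^ 2 ≤ C * min 1 (‖x - y‖ ^ 2 / t ^ 2)) : Mem N s R β := by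
  refine ⟨hβ, ?_, ?_⟩
  · refine Integrable.mono' (integrableOn_const (C := (1 : ℝ))
      (isCompact_closedBall _ _).measure_lt_top.ne)
      (hβ.pow_const 2).aestronglyMeasurable (Eventually.of_forall fun x => ?_)
    rw [Real.norm_of_nonneg (sq_nonneg _), ← sq_abs]
    exact pow_le_one₀ (abs_nonneg _) (h1 x)
  · refine Integrable.mono' ((integrableOn_rg_conv (integrable_scaled hN hs0 hs1 ht)).const_mul C)
      (((meas_diff hβ).pow_const 2).mul (measurable_Kz2 N s)).aestronglyMeasurable
      (Eventually.of_forall fun q => ?_)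
    have hk := Kz_nonneg N s (q.1 - q.2)
    rw [Real.norm_of_nonneg (mul_nonneg (sq_nonneg _) hk), ← mul_assoc]
    exact mul_le_mul_of_nonneg_right (h2 q.1 q.2) hk

end FracNeumann

namespace FracNeumann

variable {N : ℕ} {s R : ℝ}

/-- closed ball -/
abbrev CB (N : ℕ) (R : ℝ) : Set (Euc N) := Metric.closedBall (0 : Euc N) R

/-- Weak solutions. -/
def WS (N : ℕ) (s R lam : ℝ) (u : Euc N → ℝ) : Prop :=
  Mem N s R u ∧ (∫ x in CB N R, u x) = 0 ∧
    ∀ v : Euc N → ℝ, Mem N s R v → af N s R u v = lam * ∫ x in CB N R, u x * v x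

/-- Poincare inequality. -/
def MinH (N : ℕ) (s R lam : ℝ) : Prop := ∀ φ : Euc N → ℝ, Mem N s R φ →
  (∫ x in CB N R, φ x) = 0 → lam * (∫ x in CB N R, φ x ^ 2) ≤ af N s R φ φ

lemma measCB : MeasurableSet (CB N R) := Metric.isClosed_closedBall.measurableSet

lemma restrict_ball : (volume : Measure (Euc N)).restrict (Metric.ball 0 R) =
    volume.restrict (CB N R) ∨ R = 0 := by
  by_cases h : R = 0
  · exact Or.inr h
  · left
    apply Measure.restrict_congr_set
    have h1 : (Metric.sphere (0 : Euc N) R) =ᵐ[volume] (∅ : Set (Euc N)) :=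
      ae_eq_empty.2 (Measure.addHaar_sphere_of_ne_zero _ _ h)
    have := (ae_eq_refl (Metric.ball (0 : Euc N) R) (μ := volume)).union h1
    rw [Metric.ball_union_sphere, union_empty] at this
    exact this.symm

lemma restr_eq (hR : 0 < R) : (volume : Measure (Euc N)).restrict (Metric.ball 0 R) =
    volume.restrict (CB N R) := by
  rcases restrict_ball (N := N) (R := R) with h | h
  · exact h
  · exact absurd h hR.ne'

lemma reg_eq (hR : 0 < R) : reg N (Metric.ball 0 R) = rg N R := by
  ext q; simp [reg, rg, closure_ball (0 : Euc N) hR.ne']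

lemma div_kern (a : ℝ) (x y : Euc N) : a / kern N s x y = a * Kz N s (x - y) := by
  simp [kern, Kz, div_eq_mul_inv]

lemma memHs_iff (hR : 0 < R) (u : Euc N → ℝ) : memHs N s (Metric.ball 0 R) u ↔ Mem N s R u := by
  unfold memHs Mem l2sq semiSq
  rw [restr_eq hR, reg_eq hR]
  refine and_congr_right fun hm => and_congr ?_ ?_
  · rw [IntegrableOn, Integrable, hasFiniteIntegral_iff_ofReal
      (Eventually.of_forall fun x => sq_nonneg _)]
    exact ⟨fun h => ⟨(hm.pow_const 2).aestronglyMeasurable, h⟩, fun h => h.2⟩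
  · simp_rw [div_kern]
    rw [IntegrableOn, Integrable, hasFiniteIntegral_iff_ofReal
      (Eventually.of_forall fun x => mul_nonneg (sq_nonneg _) (Kz_nonneg _ _ _))]
    exact ⟨fun h => ⟨(((meas_diff hm).pow_const 2).mul (measurable_Kz2 N s)).aestronglyMeasurable, h⟩,
      fun h => h.2⟩

lemma bform_eq (hR : 0 < R) (u v : Euc N → ℝ) :
    bform N s (Metric.ball 0 R) u v = af N s R u v := by
  unfold bform af; rw [reg_eq hR]; simp_rw [div_kern]

lemma semiSq_eq (hR : 0 < R) {u : Euc N → ℝ} (hu : Mem N s R u) :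
    (semiSq N s (Metric.ball 0 R) u).toReal = af N s R u u := by
  unfold semiSq af; rw [reg_eq hR]; simp_rw [div_kern, ← pow_two]
  rw [integral_eq_lintegral_of_nonneg_ae
    (Eventually.of_forall fun x => mul_nonneg (sq_nonneg _) (Kz_nonneg _ _ _)) hu.2.2.1]

lemma cNs_pos (hN : 2 ≤ N) (hs : s ∈ Ioo (0 : ℝ) 1) : 0 < cNs N s := by
  have h1 := Real.Gamma_pos_of_pos (show 0 < (N : ℝ) / 2 + s by have := hs.1; positivity)
  have h2 := Real.Gamma_pos_of_pos (show 0 < 1 - s by linarith [hs.2])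
  have := hs.1
  unfold cNs; positivity

/-- rescaled eigenvalue -/
def lam1 (N : ℕ) (s R : ℝ) : ℝ := 2 * mu1 N s (Metric.ball 0 R) / cNs N s

lemma af_self_nonneg (u : Euc N → ℝ) : 0 ≤ af N s R u u := by
  unfold af
  exact integral_nonneg fun q => mul_nonneg (mul_self_nonneg _) (Kz_nonneg _ _ _)

lemma mu1_nonneg (hN : 2 ≤ N) (hs : s ∈ Ioo (0 : ℝ) 1) : 0 ≤ mu1 N s (Metric.ball 0 R) := by
  have := cNs_pos hN hs
  apply Real.sInf_nonneg
  rintro t ⟨u, _, _, _, rfl⟩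
  positivity

lemma lam1_nonneg (hN : 2 ≤ N) (hs : s ∈ Ioo (0 : ℝ) 1) : 0 ≤ lam1 N s R := by
  have := cNs_pos hN hs
  have := mu1_nonneg (R := R) hN hs
  unfold lam1; positivity

lemma isFirst_iff (hN : 2 ≤ N) (hs : s ∈ Ioo (0 : ℝ) 1) (hR : 0 < R) (u : Euc N → ℝ) :
    IsFirstEigen N s (Metric.ball 0 R) u ↔ WS N s R (lam1 N s R) u ∧
      ¬ (u =ᵐ[volume.restrict (CB N R)] 0) := by
  have hc := cNs_pos hN hs
  unfold IsFirstEigen WS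
  simp_rw [memHs_iff hR, bform_eq hR, restr_eq hR]
  have key : ∀ v, (cNs N s / 2 * af N s R u v = mu1 N s (Metric.ball 0 R) * ∫ x in CB N R, u x * v x)
      ↔ af N s R u v = lam1 N s R * ∫ x in CB N R, u x * v x := by
    intro v
    unfold lam1
    constructor
    · intro h
      rw [div_mul_eq_mul_div, eq_div_iff hc.ne']
      linarith
    · intro h
      rw [h]; field_simp
  simp_rw [key]
  tauto

lemma minH (hN : 2 ≤ N) (hs : s ∈ Ioo (0 : ℝ) 1) (hR : 0 < R) : MinH N s R (lam1 N s R) := by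
  have hc := cNs_pos hN hs
  intro φ hφ h0
  have hI : 0 ≤ ∫ x in CB N R, φ x ^ 2 := integral_nonneg fun x => sq_nonneg _
  rcases hI.eq_or_lt with h | h
  · rw [← h, mul_zero]; exact af_self_nonneg _
  · set I := ∫ x in CB N R, φ x ^ 2 with hIdef
    set c := (Real.sqrt I)⁻¹ with hcdef
    have hc2 : c ^ 2 = I⁻¹ := by rw [hcdef, inv_pow, Real.sq_sqrt hI]
    have hm : Mem N s R (c • φ) := hφ.smul c
    have hle : mu1 N s (Metric.ball 0 R) ≤ cNs N s / 2 * af N s R (c • φ) (c • φ) := by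
      apply csInf_le
      · refine ⟨0, ?_⟩
        rintro t ⟨u, _, _, _, rfl⟩
        positivity
      · refine ⟨c • φ, (memHs_iff hR _).2 hm, ?_, ?_, ?_⟩
        · rw [restr_eq hR]
          simp only [Pi.smul_apply, smul_eq_mul, mul_pow]
          rw [integral_const_mul, hc2, ← hIdef, inv_mul_cancel₀ h.ne']
        · rw [restr_eq hR]
          simp only [Pi.smul_apply, smul_eq_mul]
          rw [integral_const_mul, h0, mul_zero]
        · rw [semiSq_eq hR hm]
    rw [af_smul_left, af_comm, af_smul_left, ← mul_assoc c, ← pow_two, hc2] at hle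
    unfold lam1
    rw [div_mul_eq_mul_div, div_le_iff₀ hc]
    have : mu1 N s (Metric.ball 0 R) * I ≤ (cNs N s / 2 * (I⁻¹ * af N s R φ φ)) * I := by gcongr
    have e : (cNs N s / 2 * (I⁻¹ * af N s R φ φ)) * I = cNs N s / 2 * af N s R φ φ := by
      field_simp
    rw [e] at this
    linarith

section ops
variable {lam : ℝ}

lemma WS.add {u v : Euc N → ℝ} (hu : WS N s R lam u) (hv : WS N s R lam v) :
    WS N s R lam (u + v) := by
  refine ⟨hu.1.add hv.1, ?_, fun w hw => ?_⟩
  · simp only [Pi.add_apply]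
    rw [integral_add hu.1.integrableOn hv.1.integrableOn, hu.2.1, hv.2.1, add_zero]
  · rw [af_add_left hu.1 hv.1 hw, hu.2.2 w hw, hv.2.2 w hw, ← mul_add,
      ← integral_add (hu.1.integrable_mul hw) (hv.1.integrable_mul hw)]
    simp only [Pi.add_apply, add_mul]

lemma WS.smul {u : Euc N → ℝ} (c : ℝ) (hu : WS N s R lam u) : WS N s R lam (c • u) := by
  refine ⟨hu.1.smul c, ?_, fun w hw => ?_⟩
  · simp only [Pi.smul_apply, smul_eq_mul]
    rw [integral_const_mul, hu.2.1, mul_zero]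
  · rw [af_smul_left, hu.2.2 w hw]
    simp only [Pi.smul_apply, smul_eq_mul, mul_assoc]
    rw [integral_const_mul]; ring

lemma WS.zero : WS N s R lam (0 : Euc N → ℝ) := by
  refine ⟨Mem.zero, by simp, fun w hw => ?_⟩
  simp [af]

lemma WS.neg {u : Euc N → ℝ} (hu : WS N s R lam u) : WS N s R lam (-u) := by
  simpa using hu.smul (-1)

lemma WS.sub {u v : Euc N → ℝ} (hu : WS N s R lam u) (hv : WS N s R lam v) :
    WS N s R lam (u - v) := by
  rw [sub_eq_add_neg]; exact hu.add hv.neg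

lemma WS.comp {u : Euc N → ℝ} (hu : WS N s R lam u) (g : Euc N ≃ₗᵢ[ℝ] Euc N) :
    WS N s R lam (fun x => u (g x)) := by
  refine ⟨hu.1.comp g, ?_, fun w hw => ?_⟩
  · rw [setInt_comp g u, hu.2.1]
  · have h := hu.2.2 _ (hw.comp g.symm)
    have h2 := af_comp (N := N) (s := s) (R := R) g u (fun x => w (g.symm x))
    have h3 := setInt_comp (R := R) g (fun x => u x * w (g.symm x))
    simp only [LinearIsometryEquiv.symm_apply_apply] at h2 h3
    rw [h2, h, h3]

lemma WS.congr {u v : Euc N → ℝ} (hu : WS N s R lam u) (hv : Measurable v) (h : u =ᵐ[volume] v) :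
    WS N s R lam v := by
  refine ⟨hu.1.congr hv h, ?_, fun w hw => ?_⟩
  · rw [← hu.2.1]
    exact integral_congr_ae (ae_restrict_of_ae h.symm)
  · rw [← af_congr h, hu.2.2 w hw]
    congr 1
    apply integral_congr_ae
    filter_upwards [ae_restrict_of_ae h] with x hx
    rw [hx]

end ops

end FracNeumann

namespace FracNeumann

variable {N : ℕ} {s R lam : ℝ}

/-- volume of the unit ball -/
def cw (N : ℕ) : ℝ := (volume : Measure (Euc N)).real (Metric.ball 0 1)

lemma cw_pos : 0 < cw N := by
  unfold cw
  exact ENNReal.toReal_pos (Metric.measure_ball_pos _ _ one_pos).ne' measure_ball_lt_top.ne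

lemma vol_ball (x : Euc N) {r : ℝ} (hr : 0 < r) :
    (volume : Measure (Euc N)) (Metric.ball x r) = ENNReal.ofReal (r ^ N * cw N) := by
  rw [Measure.addHaar_ball_of_pos _ _ hr, finrank_euclideanSpace, Fintype.card_fin,
    ENNReal.ofReal_mul (by positivity), cw, Measure.real, ENNReal.ofReal_toReal measure_ball_lt_top.ne]

lemma vol_lower (hR : 0 < R) {x : Euc N} (hx : ‖x‖ ≤ R) {ρ : ℝ} (hρ : 0 < ρ) (hρR : ρ ≤ R) :
    ENNReal.ofReal ((ρ / 2) ^ N * cw N) ≤ volume (CB N R ∩ Metric.ball x ρ) := by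
  rw [← vol_ball ((1 - ρ / (2 * R)) • x) (half_pos hρ)]
  apply measure_mono
  have hq : ρ / (2 * R) ≤ 1 := by rw [div_le_one (by positivity)]; linarith
  have hq0 : 0 ≤ ρ / (2 * R) := by positivity
  have hqR : ρ / (2 * R) * R = ρ / 2 := by field_simp
  intro y hy
  rw [Metric.mem_ball, dist_eq_norm] at hy
  constructor
  · rw [mem_closedBall_zero_iff]
    have h1 : ‖y‖ ≤ ‖y - (1 - ρ / (2 * R)) • x‖ + ‖(1 - ρ / (2 * R)) • x‖ := by
      simpa using norm_add_le (y - (1 - ρ / (2 * R)) • x) ((1 - ρ / (2 * R)) • x)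
    have h2 : ‖(1 - ρ / (2 * R)) • x‖ ≤ (1 - ρ / (2 * R)) * R := by
      rw [norm_smul, Real.norm_of_nonneg (by linarith)]
      gcongr
    linarith
  · rw [Metric.mem_ball, dist_eq_norm]
    have h1 : ‖y - x‖ ≤ ‖y - (1 - ρ / (2 * R)) • x‖ + ‖(ρ / (2 * R)) • x‖ := by
      have e : y - x = (y - (1 - ρ / (2 * R)) • x) - (ρ / (2 * R)) • x := by
        rw [sub_smul, one_smul]; abel
      rw [e]; exact norm_sub_le _ _
    have h2 : ‖(ρ / (2 * R)) • x‖ ≤ (ρ / (2 * R)) * R := by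
      rw [norm_smul, Real.norm_of_nonneg hq0]
      gcongr
    linarith

lemma LB {F : Euc N × Euc N → ℝ} (hF : IntegrableOn F (rg N R)) (h0 : ∀ q ∈ rg N R, 0 ≤ F q)
    {S : Set (Euc N × Euc N)} (hS : MeasurableSet S) (hSr : S ⊆ rg N R) {f : Euc N → ℝ}
    (hf0 : ∀ x, 0 ≤ f x) (hfi : Integrable f)
    (h : ∀ q ∈ S, f q.1 ≤ F q) {m : ℝ} (hm0 : 0 ≤ m)
    (hm : ∀ x, f x ≠ 0 → ENNReal.ofReal m ≤ volume {y | (x, y) ∈ S}) :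
    m * ∫ x, f x ≤ ∫ q in rg N R, F q := by
  have hfm : AEMeasurable (fun x => ENNReal.ofReal (f x)) :=
    hfi.1.aemeasurable.ennreal_ofReal
  have h1 : ENNReal.ofReal m * ∫⁻ x, ENNReal.ofReal (f x) ≤ ENNReal.ofReal (∫ q in rg N R, F q) := by
    rw [ofReal_integral_eq_lintegral_ofReal hF
      (by filter_upwards [ae_restrict_mem (measurableSet_rg N R)] with q hq using h0 q hq)]
    calc ENNReal.ofReal m * ∫⁻ x, ENNReal.ofReal (f x)
        = ∫⁻ x, ENNReal.ofReal m * ENNReal.ofReal (f x) := (lintegral_const_mul'' _ hfm).symm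
      _ ≤ ∫⁻ x, ∫⁻ y, S.indicator (fun q => ENNReal.ofReal (f q.1)) (x, y) := by
          apply lintegral_mono
          intro x
          by_cases hx : f x = 0
          · simp [hx]
          have e : ∀ y, S.indicator (fun q : Euc N × Euc N => ENNReal.ofReal (f q.1)) (x, y)
              = {y | (x, y) ∈ S}.indicator (fun _ => ENNReal.ofReal (f x)) y := by
            intro y; simp [indicator]
          simp_rw [e]
          have hms : MeasurableSet {y | (x, y) ∈ S} := measurable_prodMk_left hS
          rw [lintegral_indicator_const hms, mul_comm]
          gcongr
          exact hm x hx
      _ = ∫⁻ q, S.indicator (fun q => ENNReal.ofReal (f q.1)) q := by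
          rw [Measure.volume_eq_prod, lintegral_prod]
          refine AEMeasurable.indicator ?_ hS
          exact hfm.comp_quasiMeasurePreserving Measure.quasiMeasurePreserving_fst
      _ = ∫⁻ q in S, ENNReal.ofReal (f q.1) := lintegral_indicator hS _
      _ ≤ ∫⁻ q in S, ENNReal.ofReal (F q) := by
          apply setLIntegral_mono' hS
          intro q hq
          exact ENNReal.ofReal_le_ofReal (h q hq)
      _ ≤ ∫⁻ q in rg N R, ENNReal.ofReal (F q) := lintegral_mono_set hSr
  rw [← ofReal_integral_eq_lintegral_ofReal hfi (Eventually.of_forall hf0),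
    ← ENNReal.ofReal_mul hm0] at h1
  exact (ENNReal.ofReal_le_ofReal_iff (setIntegral_nonneg (measurableSet_rg N R) h0)).1 h1

lemma bdd_unif (hN : 2 ≤ N) (hs0 : 0 < s) (hR : 0 < R) (lam : ℝ) : ∃ m : ℝ, 0 < m ∧
    ∀ (u : Euc N → ℝ) (_ : WS N s R lam u), ∀ᵐ x ∂(volume.restrict (CB N R)),
      u x ≤ 2 * ((∫ x in CB N R, |u x|) / m + 1) := by
  have hcw := cw_pos (N := N)
  -- choose ρ
  obtain ⟨ρ, hρ, hρR, hρl⟩ : ∃ ρ : ℝ, 0 < ρ ∧ ρ ≤ R ∧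
      lam < (1 / 2 * ((ρ / 2) ^ N * cw N)) * (1 / 2 * (ρ ^ ((N : ℝ) + 2 * s))⁻¹) := by
    have ht : Tendsto (fun ρ : ℝ => (cw N / 4 / 2 ^ N) * ρ ^ (-(2 * s))) (𝓝[>] 0) atTop :=
      (tendsto_rpow_neg_nhdsGT_zero (by linarith)).const_mul_atTop (by positivity)
    have h1 := (ht.eventually_gt_atTop lam).and
      ((eventually_mem_nhdsWithin (s := Ioi (0 : ℝ)) (a := 0)).and
      (mem_nhdsWithin_of_mem_nhds (Iic_mem_nhds hR)))
    obtain ⟨ρ, h2, h3, h4⟩ := h1.exists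
    have h3' : 0 < ρ := h3
    refine ⟨ρ, h3, h4, ?_⟩
    refine h2.trans_eq ?_
    have : ρ ^ (-(2 * s)) = ρ ^ N * (ρ ^ ((N : ℝ) + 2 * s))⁻¹ := by
      rw [← Real.rpow_neg h3'.le, ← Real.rpow_natCast, ← Real.rpow_add h3']; congr 1; ring
    rw [this, div_pow]; ring
  set m : ℝ := 1 / 2 * ((ρ / 2) ^ N * cw N) with hm
  have hm0 : 0 < m := by positivity
  set κ : ℝ := 1 / 2 * (ρ ^ ((N : ℝ) + 2 * s))⁻¹ with hκ
  have hκ0 : 0 < κ := by positivity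
  refine ⟨m, hm0, fun u hu => ?_⟩
  set I := ∫ x in CB N R, |u x| with hI
  have hI0 : 0 ≤ I := integral_nonneg fun x => abs_nonneg _
  set k : ℝ := 2 * (I / m + 1) with hk
  have hk0 : 0 < k := by positivity
  have hbad : volume (CB N R ∩ {x | k / 2 < u x}) ≤ ENNReal.ofReal m := by
    have h1 := mul_meas_ge_le_integral_of_nonneg (μ := volume.restrict (CB N R))
      (f := fun x => |u x|) (Eventually.of_forall fun x => abs_nonneg _) hu.1.integrableOn.abs (k / 2)
    rw [Measure.real, Measure.restrict_apply (measurableSet_le measurable_const hu.1.1.abs), ← hI] at h1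
    have hfin : volume ({a | k / 2 ≤ |u a|} ∩ CB N R) ≠ ⊤ :=
      ((measure_mono inter_subset_right).trans_lt (isCompact_closedBall _ _).measure_lt_top).ne
    have h2 : volume (CB N R ∩ {x | k / 2 < u x}) ≤ volume ({a | k / 2 ≤ |u a|} ∩ CB N R) := by
      apply measure_mono
      rintro x ⟨h1, h2⟩
      exact ⟨(le_of_lt h2).trans (le_abs_self (u x)), h1⟩
    refine h2.trans ?_
    rw [← ENNReal.ofReal_toReal hfin]
    apply ENNReal.ofReal_le_ofReal
    have h3 : k / 2 = I / m + 1 := by rw [hk]; ring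
    rw [h3] at h1 ⊢
    set V := (volume ({a | I / m + 1 ≤ |u a|} ∩ CB N R)).toReal
    have hV : 0 ≤ V := ENNReal.toReal_nonneg
    by_contra hcon
    push Not at hcon
    have : I < (I / m + 1) * V := by
      calc I = I / m * m := by field_simp
        _ ≤ I / m * V := by gcongr
        _ < (I / m + 1) * V := by nlinarith
    linarith
  change ∀ᵐ x ∂(volume.restrict (CB N R)), u x ≤ k
  set φ : Euc N → ℝ := fun x => max (u x - k) 0 with hφ
  have hφm : Mem N s R φ := (hu.1.sub (Mem.const k)).pos
  have hF := hu.1.integrable_af hφm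
  have hφu : ∀ x, 0 ≤ φ x * u x := by
    intro x
    rcases le_total (u x) k with h | h
    · simp [hφ, h]
    · exact mul_nonneg (le_max_right _ _) (by linarith)
  have hfi : Integrable ((CB N R).indicator (fun x => κ * (φ x * u x))) :=
    (integrable_indicator_iff measCB).2 ((hφm.integrable_mul hu.1).const_mul κ)
  have key := LB (R := R) (m := m) hF ?_
    (S := {q | ‖q.1‖ ≤ R ∧ ‖q.2‖ ≤ R ∧ u q.2 ≤ k / 2 ∧ ‖q.1 - q.2‖ < ρ}) ?_ ?_ ?_ hfi ?_ hm0.le ?_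
  · have e := hu.2.2 φ hφm
    unfold af at e
    rw [e, integral_indicator measCB, integral_const_mul] at key
    have e2 : ∫ x in CB N R, u x * φ x = ∫ x in CB N R, φ x * u x := by
      congr 1; ext x; ring
    rw [e2] at key
    have hI0 : 0 ≤ ∫ x in CB N R, φ x * u x := integral_nonneg hφu
    have hz : ∫ x in CB N R, φ x * u x = 0 := by
      by_contra hne
      have : 0 < ∫ x in CB N R, φ x * u x := lt_of_le_of_ne hI0 (Ne.symm hne)
      nlinarith
    rw [integral_eq_zero_iff_of_nonneg hφu (hφm.integrable_mul hu.1)] at hz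
    filter_upwards [hz] with x hx
    by_contra hcon
    push Not at hcon
    have h1 : 0 < φ x := lt_max_of_lt_left (by linarith)
    have h2 : 0 < u x := by linarith
    have : 0 < φ x * u x := by positivity
    exact this.ne' hx
  · intro q _
    refine mul_nonneg ?_ (Kz_nonneg _ _ _)
    rcases le_total (u q.1) (u q.2) with h | h
    · have : φ q.1 ≤ φ q.2 := max_le_max (by linarith) le_rfl
      nlinarith
    · have : φ q.2 ≤ φ q.1 := max_le_max (by linarith) le_rfl
      nlinarith
  · have m1 := measurableSet_le (measurable_fst (α := Euc N) (β := Euc N)).norm (measurable_const (a := R))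
    have m2 := measurableSet_le (measurable_snd (α := Euc N) (β := Euc N)).norm (measurable_const (a := R))
    have m3 : MeasurableSet {q : Euc N × Euc N | u q.2 ≤ k / 2} :=
      measurableSet_le (hu.1.1.comp measurable_snd) measurable_const
    have m4 := measurableSet_lt ((measurable_fst (α := Euc N) (β := Euc N)).sub measurable_snd).norm
      (measurable_const (a := ρ))
    exact m1.inter (m2.inter (m3.inter m4))
  · intro q hq; exact Or.inl hq.1
  · intro x
    refine indicator_nonneg (fun x _ => ?_) x
    have := hφu x
    positivity
  · rintro ⟨x, y⟩ ⟨hx, hy, huy, hxy⟩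
    simp only at hx hy huy hxy ⊢
    rw [indicator_of_mem (by simpa using hx)]
    have hφy : φ y = 0 := max_eq_right (by linarith)
    rcases le_or_gt (u x) k with h | h
    · have hφx : φ x = 0 := max_eq_right (by linarith)
      simp [hφx, hφy]
    · have hne : x - y ≠ 0 := by
        intro h0; rw [sub_eq_zero] at h0; rw [h0] at h; linarith
      have h1 := le_Kz_of_le (N := N) hs0 hne hxy.le
      have hφx : 0 ≤ φ x := le_max_right _ _
      rw [hφy, sub_zero]
      have hd : 1 / 2 * u x ≤ u x - u y := by linarith
      have hd0 : 0 ≤ u x - u y := by linarith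
      calc κ * (φ x * u x) = (1 / 2 * u x) * φ x * (ρ ^ ((N : ℝ) + 2 * s))⁻¹ := by rw [hκ]; ring
        _ ≤ (u x - u y) * φ x * Kz N s (x - y) := by gcongr
  · intro x hx
    have hxC : ‖x‖ ≤ R := by
      by_contra h
      exact hx (indicator_of_notMem (by simpa using h) _)
    have h1 := vol_lower (N := N) hR hxC hρ hρR
    have h2 : CB N R ∩ Metric.ball x ρ ⊆ {y | (x, y) ∈ {q : Euc N × Euc N | ‖q.1‖ ≤ R ∧ ‖q.2‖ ≤ R ∧ u q.2 ≤ k / 2 ∧ ‖q.1 - q.2‖ < ρ}} ∪ (CB N R ∩ {x | k / 2 < u x}) := by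
      rintro y ⟨hy1, hy2⟩
      rcases le_or_gt (u y) (k / 2) with h | h
      · left
        refine ⟨hxC, by simpa using hy1, h, ?_⟩
        rw [Metric.mem_ball, dist_comm, dist_eq_norm] at hy2
        exact hy2
      · right; exact ⟨hy1, h⟩
    have h3 := h1.trans ((measure_mono h2).trans (measure_union_le _ _))
    have e : (ρ / 2) ^ N * cw N = m + m := by rw [hm]; ring
    rw [e, ENNReal.ofReal_add hm0.le hm0.le] at h3
    exact (ENNReal.add_le_add_iff_right ENNReal.ofReal_ne_top).1 (h3.trans (by gcongr))

lemma WS.bdd_above (hN : 2 ≤ N) (hs0 : 0 < s) (hR : 0 < R) {u : Euc N → ℝ}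
    (hu : WS N s R lam u) : ∃ M, ∀ᵐ x ∂(volume.restrict (CB N R)), u x ≤ M := by
  obtain ⟨m, -, h⟩ := bdd_unif hN hs0 hR lam
  exact ⟨_, h u hu⟩

lemma WS.bdd (hN : 2 ≤ N) (hs0 : 0 < s) (hR : 0 < R) {u : Euc N → ℝ}
    (hu : WS N s R lam u) : ∃ M, 0 < M ∧ ∀ᵐ x ∂(volume.restrict (CB N R)), |u x| ≤ M := by
  obtain ⟨M1, h1⟩ := hu.bdd_above hN hs0 hR
  obtain ⟨M2, h2⟩ := hu.neg.bdd_above hN hs0 hR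
  refine ⟨max (max M1 M2) 1, by positivity, ?_⟩
  filter_upwards [h1, h2] with x h1 h2
  have h2' : -u x ≤ M2 := h2
  have := le_max_left (max M1 M2) 1
  have := le_max_left M1 M2
  have := le_max_right M1 M2
  rw [abs_le]; constructor <;> linarith

end FracNeumann

namespace FracNeumann

variable {N : ℕ} {s R lam : ℝ}

lemma Mem.indicator_out (hs0 : 0 < s) {T : Set (Euc N)} (hT : MeasurableSet T) {δ : ℝ}
    (hδ : 0 < δ) (hTR : ∀ x ∈ T, R + δ < ‖x‖) (hfin : volume T ≠ ⊤) :
    Mem N s R (T.indicator fun _ => (1 : ℝ)) := by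
  refine ⟨measurable_const.indicator hT, ?_, ?_⟩
  · refine (integrableOn_zero).congr_fun ?_ measCB
    intro x hx
    have hx' : ‖x‖ ≤ R := by simpa using hx
    have : x ∉ T := fun h => by linarith [hTR x h]
    simp [this]
  · have hCf : volume (CB N R) ≠ ⊤ := (isCompact_closedBall _ _).measure_lt_top.ne
    have hp : volume (T ×ˢ CB N R ∪ CB N R ×ˢ T) ≠ ⊤ := by
      refine ((measure_union_le _ _).trans_lt ?_).ne
      rw [Measure.volume_eq_prod, Measure.prod_prod, Measure.prod_prod]
      exact ENNReal.add_lt_top.2 ⟨ENNReal.mul_lt_top hfin.lt_top hCf.lt_top,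
        ENNReal.mul_lt_top hCf.lt_top hfin.lt_top⟩
    have hm : MeasurableSet (T ×ˢ CB N R ∪ CB N R ×ˢ T) := (hT.prod measCB).union (measCB.prod hT)
    have hi : Integrable ((T ×ˢ CB N R ∪ CB N R ×ˢ T).indicator
        (fun _ : Euc N × Euc N => (δ ^ ((N : ℝ) + 2 * s))⁻¹)) :=
      (integrable_indicator_iff hm).2 (integrableOn_const hp)
    refine Integrable.mono' hi.integrableOn ((((meas_diff (measurable_const.indicator hT)).pow_const 2).mul
      (measurable_Kz2 N s)).aestronglyMeasurable) ?_
    filter_upwards [ae_restrict_mem (measurableSet_rg N R)] with q hq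
    rw [Real.norm_of_nonneg (mul_nonneg (sq_nonneg _) (Kz_nonneg _ _ _))]
    have hδp : 0 ≤ (δ ^ ((N : ℝ) + 2 * s))⁻¹ := by positivity
    by_cases h1 : q.1 ∈ T
    · have h2 : ‖q.2‖ ≤ R := by
        rcases hq with h | h
        · linarith [hTR _ h1]
        · exact h
      have h2T : q.2 ∉ T := fun h => by linarith [hTR _ h]
      rw [indicator_of_mem (s := T ×ˢ CB N R ∪ CB N R ×ˢ T) (Or.inl ⟨h1, by simpa using h2⟩)]
      simp only [indicator_of_mem h1, indicator_of_notMem h2T]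
      norm_num
      refine Kz_le_of_le hs0 hδ ?_
      have := norm_sub_norm_le q.1 q.2
      linarith [hTR _ h1]
    · by_cases h2T : q.2 ∈ T
      · have h2 : ‖q.1‖ ≤ R := by
          rcases hq with h | h
          · exact h
          · linarith [hTR _ h2T]
        rw [indicator_of_mem (s := T ×ˢ CB N R ∪ CB N R ×ˢ T) (Or.inr ⟨by simpa using h2, h2T⟩)]
        simp only [indicator_of_mem h2T, indicator_of_notMem h1]
        norm_num
        refine Kz_le_of_le hs0 hδ ?_
        have := norm_sub_norm_le q.2 q.1
        rw [norm_sub_rev] at this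
        linarith [hTR _ h2T]
      · simp only [indicator_of_notMem h1, indicator_of_notMem h2T]
        simp only [sub_self, ne_eq, OfNat.ofNat_ne_zero, not_false_eq_true, zero_pow, zero_mul]
        exact indicator_nonneg (fun _ _ => hδp) _

lemma ext_aux (hs0 : 0 < s) {u : Euc N → ℝ} (hu : WS N s R lam u) {T : Set (Euc N)}
    (hT : MeasurableSet T) {δ : ℝ} (hδ : 0 < δ) (hTR : ∀ x ∈ T, R + δ < ‖x‖) (hfin : volume T ≠ ⊤) :
    IntegrableOn (fun q : Euc N × Euc N => (u q.1 - u q.2) * Kz N s (q.1 - q.2)) (T ×ˢ CB N R) ∧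
    ∫ q in T ×ˢ CB N R, (u q.1 - u q.2) * Kz N s (q.1 - q.2) = 0 := by
  have hv := Mem.indicator_out (N := N) hs0 hT hδ hTR hfin
  have hF := hu.1.integrable_af hv
  have hmS : MeasurableSet (T ×ˢ CB N R) := hT.prod measCB
  have hSr : T ×ˢ CB N R ⊆ rg N R := fun q hq => Or.inr (by simpa using hq.2)
  have hTC : ∀ x ∈ T, ¬ ‖x‖ ≤ R := fun x h => by linarith [hTR x h]
  have hG : IntegrableOn (fun q : Euc N × Euc N => (u q.1 - u q.2) * Kz N s (q.1 - q.2))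
      (T ×ˢ CB N R) := by
    refine (hF.mono_set hSr).congr_fun ?_ hmS
    intro q hq
    have h2 : q.2 ∉ T := fun h => hTC _ h (by simpa using hq.2)
    simp only [indicator_of_mem hq.1, indicator_of_notMem h2]
    ring
  refine ⟨hG, ?_⟩
  set g : Euc N × Euc N → ℝ := (T ×ˢ CB N R).indicator
    (fun q : Euc N × Euc N => (u q.1 - u q.2) * Kz N s (q.1 - q.2)) with hg
  have hgi : Integrable g := (integrable_indicator_iff hmS).2 hG
  have e1 : af N s R u (T.indicator fun _ => (1 : ℝ)) = ∫ q, (g q + g q.swap) := by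
    unfold af
    rw [← integral_indicator (measurableSet_rg N R)]
    congr 1; ext q
    by_cases h1 : q.1 ∈ T
    · have h2' : g q.swap = 0 := indicator_of_notMem (fun h => hTC _ h1 (by simpa using h.2)) _
      rw [h2', add_zero]
      by_cases h2 : ‖q.2‖ ≤ R
      · have hq : q ∈ T ×ˢ CB N R := ⟨h1, by simpa using h2⟩
        have h2T : q.2 ∉ T := fun h => hTC _ h h2
        rw [hg, indicator_of_mem hq, indicator_of_mem (hSr hq)]
        simp only [indicator_of_mem h1, indicator_of_notMem h2T]; ring
      · rw [hg, indicator_of_notMem (s := T ×ˢ CB N R) (fun h => h2 (by simpa using h.2)),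
          indicator_of_notMem]
        rintro (h | h)
        · exact hTC _ h1 h
        · exact h2 h
    · have h1' : g q = 0 := indicator_of_notMem (fun h => h1 h.1) _
      rw [h1', zero_add]
      by_cases h2T : q.2 ∈ T
      · by_cases h2 : ‖q.1‖ ≤ R
        · have hq : q.swap ∈ T ×ˢ CB N R := ⟨h2T, by simpa using h2⟩
          rw [hg, indicator_of_mem hq, indicator_of_mem (show q ∈ rg N R from Or.inl h2)]
          simp only [indicator_of_mem h2T, indicator_of_notMem h1, Prod.fst_swap, Prod.snd_swap]
          rw [Kz_sub_comm N s q.2]; ring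
        · rw [hg, indicator_of_notMem (s := T ×ˢ CB N R) (fun h => h2 (by simpa using h.2)),
            indicator_of_notMem]
          rintro (h | h)
          · exact h2 h
          · exact hTC _ h2T h
      · have h2' : g q.swap = 0 := indicator_of_notMem (fun h => h2T h.1) _
        rw [h2']
        by_cases h : q ∈ rg N R
        · rw [indicator_of_mem h]
          simp [h1, h2T]
        · rw [indicator_of_notMem h]
  have e2 : ∫ q : Euc N × Euc N, g q.swap = ∫ q, g q := by
    rw [Measure.volume_eq_prod]; exact integral_prod_swap g
  have hgs : Integrable (fun q : Euc N × Euc N => g q.swap) := hgi.swap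
  rw [integral_add hgi hgs, e2, hu.2.2 _ hv] at e1
  have e3 : ∫ x in CB N R, u x * T.indicator (fun _ => (1 : ℝ)) x = 0 := by
    rw [setIntegral_congr_fun (g := fun _ => (0 : ℝ)) measCB]
    · simp
    · intro x hx
      have : x ∉ T := fun h => hTC _ h (by simpa using hx)
      simp [this]
  rw [e3, hg, integral_indicator hmS] at e1
  linarith

lemma WS.ext (hs0 : 0 < s) {u : Euc N → ℝ} (hu : WS N s R lam u) :
    ∀ᵐ x : Euc N, R < ‖x‖ → ∫ y in CB N R, (u x - u y) * Kz N s (x - y) = 0 := by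
  set A : ℕ → Set (Euc N) := fun n => {x | R + 1 / ((n : ℝ) + 1) < ‖x‖ ∧ ‖x‖ < n} with hA
  have hAm : ∀ n, MeasurableSet (A n) := fun n =>
    (measurableSet_lt measurable_const measurable_norm).inter
      (measurableSet_lt measurable_norm measurable_const)
  have hAfin : ∀ n, volume (A n) ≠ ⊤ := fun n => by
    refine ((measure_mono ?_).trans_lt (measure_ball_lt_top (x := (0 : Euc N)) (r := n))).ne
    intro x hx; simpa using hx.2
  have key : ∀ n, ∀ᵐ x : Euc N, x ∈ A n → ∫ y in CB N R, (u x - u y) * Kz N s (x - y) = 0 := by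
    intro n
    have hδ : (0 : ℝ) < 1 / ((n : ℝ) + 1) := by positivity
    rw [← ae_restrict_iff' (hAm n)]
    have hI := (ext_aux hs0 hu (hAm n) hδ (fun x hx => hx.1) (hAfin n)).1
    rw [IntegrableOn, Measure.volume_eq_prod, ← Measure.prod_restrict] at hI
    refine Integrable.ae_eq_zero_of_forall_setIntegral_eq_zero hI.integral_prod_left ?_
    intro T hT _
    rw [Measure.restrict_restrict hT]
    have h2 := ext_aux hs0 hu (hT.inter (hAm n)) hδ (fun x hx => hx.2.1)
      ((measure_mono inter_subset_right).trans_lt (hAfin n).lt_top).ne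
    rw [← h2.2, Measure.volume_eq_prod, setIntegral_prod _ h2.1]
  have key' := ae_all_iff.2 key
  filter_upwards [key'] with x hx hxR
  obtain ⟨n1, h1⟩ := exists_nat_one_div_lt (sub_pos.2 hxR)
  obtain ⟨n2, h2⟩ := exists_nat_gt ‖x‖
  refine hx (max n1 n2) ⟨?_, ?_⟩
  · have : 1 / (((max n1 n2 : ℕ) : ℝ) + 1) ≤ 1 / ((n1 : ℝ) + 1) := by
      gcongr; exact le_max_left _ _
    linarith
  · refine h2.trans_le ?_
    exact_mod_cast le_max_right _ _

lemma integrableOn_K_out (hs0 : 0 < s) {x : Euc N} (hx : R < ‖x‖) :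
    IntegrableOn (fun y => Kz N s (x - y)) (CB N R) := by
  refine Integrable.mono' (g := fun _ => ((‖x‖ - R) ^ ((N : ℝ) + 2 * s))⁻¹)
    (integrableOn_const (isCompact_closedBall _ _).measure_lt_top.ne)
    ((measurable_Kz N s).comp (measurable_const.sub measurable_id)).aestronglyMeasurable ?_
  filter_upwards [ae_restrict_mem measCB] with y hy
  rw [Real.norm_of_nonneg (Kz_nonneg _ _ _)]
  refine Kz_le_of_le hs0 (sub_pos.2 hx) ?_
  have : ‖y‖ ≤ R := by simpa using hy
  have := norm_sub_norm_le x y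
  linarith

lemma integrableOn_uK_out (hs0 : 0 < s) {u : Euc N → ℝ} (hu : Mem N s R u) {x : Euc N}
    (hx : R < ‖x‖) : IntegrableOn (fun y => u y * Kz N s (x - y)) (CB N R) := by
  refine Integrable.mono' (g := fun y => |u y| * ((‖x‖ - R) ^ ((N : ℝ) + 2 * s))⁻¹)
    (hu.integrableOn.abs.mul_const _)
    (hu.1.mul ((measurable_Kz N s).comp (measurable_const.sub measurable_id))).aestronglyMeasurable ?_
  filter_upwards [ae_restrict_mem measCB] with y hy
  rw [norm_mul, Real.norm_of_nonneg (Kz_nonneg _ _ _), Real.norm_eq_abs]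
  refine mul_le_mul_of_nonneg_left ?_ (abs_nonneg _)
  refine Kz_le_of_le hs0 (sub_pos.2 hx) ?_
  have : ‖y‖ ≤ R := by simpa using hy
  have := norm_sub_norm_le x y
  linarith

/-- mass of the kernel -/
def kP (N : ℕ) (s R : ℝ) (x : Euc N) : ℝ := ∫ y in CB N R, Kz N s (x - y)

/-- extension operator -/
def PP (N : ℕ) (s R : ℝ) (u : Euc N → ℝ) (x : Euc N) : ℝ :=
  (∫ y in CB N R, u y * Kz N s (x - y)) / kP N s R x

lemma kP_pos (hs0 : 0 < s) (hR : 0 < R) {x : Euc N} (hx : R < ‖x‖) : 0 < kP N s R x := by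
  unfold kP
  rw [setIntegral_pos_iff_support_of_nonneg_ae (Eventually.of_forall fun y => Kz_nonneg _ _ _)
    (integrableOn_K_out hs0 hx)]
  refine lt_of_lt_of_le (Metric.measure_ball_pos volume (0 : Euc N) hR) (measure_mono ?_)
  intro y hy
  have hy' : ‖y‖ < R := by simpa using hy
  refine ⟨?_, by simpa using hy'.le⟩
  rw [Function.mem_support]
  refine (Kz_pos ?_).ne'
  intro h; rw [sub_eq_zero] at h; rw [h] at hx; linarith

lemma WS.eq_PP (hs0 : 0 < s) (hR : 0 < R) {u : Euc N → ℝ} (hu : WS N s R lam u) :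
    ∀ᵐ x : Euc N, R < ‖x‖ → u x = PP N s R u x := by
  filter_upwards [hu.ext hs0] with x hx hxR
  have h := hx hxR
  simp only [sub_mul] at h
  rw [integral_sub ((integrableOn_K_out hs0 hxR).const_mul _) (integrableOn_uK_out hs0 hu.1 hxR),
    integral_const_mul] at h
  unfold PP
  rw [eq_div_iff (kP_pos hs0 hR hxR).ne']
  unfold kP
  linarith

lemma PP_bound (hs0 : 0 < s) (hR : 0 < R) {u : Euc N → ℝ} (hu : Mem N s R u) {M : ℝ}
    (hM : ∀ᵐ x ∂(volume.restrict (CB N R)), |u x| ≤ M) {x : Euc N} (hx : R < ‖x‖) :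
    |PP N s R u x| ≤ M := by
  have hk := kP_pos (N := N) hs0 hR hx
  unfold PP
  rw [abs_div, abs_of_pos hk, div_le_iff₀ hk]
  refine (abs_integral_le_integral_abs).trans ?_
  unfold kP
  rw [← integral_const_mul]
  refine integral_mono_ae (integrableOn_uK_out hs0 hu hx).abs ((integrableOn_K_out hs0 hx).const_mul M) ?_
  filter_upwards [hM] with y hy
  rw [abs_mul, abs_of_nonneg (Kz_nonneg _ _ _)]
  exact mul_le_mul_of_nonneg_right hy (Kz_nonneg _ _ _)

lemma WS.bdd_all (hN : 2 ≤ N) (hs0 : 0 < s) (hR : 0 < R) {u : Euc N → ℝ}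
    (hu : WS N s R lam u) : ∃ M, 0 < M ∧ ∀ᵐ x : Euc N, |u x| ≤ M := by
  obtain ⟨M, hM, h⟩ := hu.bdd hN hs0 hR
  refine ⟨M, hM, ?_⟩
  have h' := (ae_restrict_iff' measCB).1 h
  filter_upwards [h', hu.eq_PP hs0 hR] with x h1 h2
  rcases le_or_gt ‖x‖ R with hx | hx
  · exact h1 (by simpa using hx)
  · rw [h2 hx]; exact PP_bound hs0 hR hu.1 h hx

lemma WS.ae_zero (hs0 : 0 < s) (hR : 0 < R) {u : Euc N → ℝ} (hu : WS N s R lam u)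
    (h : u =ᵐ[volume.restrict (CB N R)] 0) : u =ᵐ[volume] 0 := by
  have h' := (ae_restrict_iff' measCB).1 h
  have hM : ∀ᵐ x ∂(volume.restrict (CB N R)), |u x| ≤ 0 := by
    filter_upwards [h] with x hx
    rw [hx]; simp
  filter_upwards [h', hu.eq_PP hs0 hR] with x h1 h2
  rcases le_or_gt ‖x‖ R with hx | hx
  · exact h1 (by simpa using hx)
  · rw [h2 hx]
    have := PP_bound hs0 hR hu.1 hM hx
    exact abs_nonpos_iff.1 this

lemma PP_num_cont (hs0 : 0 < s) {u : Euc N → ℝ} (hu : Mem N s R u) {x : Euc N}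
    (hx : R < ‖x‖) : ContinuousAt (fun x => ∫ y in CB N R, u y * Kz N s (x - y)) x := by
  set δ := (‖x‖ - R) / 2 with hδ
  have hδ0 : 0 < δ := by rw [hδ]; linarith
  refine continuousAt_of_dominated (bound := fun y => |u y| * (δ ^ ((N : ℝ) + 2 * s))⁻¹) ?_ ?_
    (hu.integrableOn.abs.mul_const _) ?_
  · exact Eventually.of_forall fun x => (hu.1.mul
      ((measurable_Kz N s).comp (measurable_const.sub measurable_id))).aestronglyMeasurable
  · filter_upwards [Metric.ball_mem_nhds x hδ0] with z hz
    filter_upwards [ae_restrict_mem measCB] with y hy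
    rw [norm_mul, Real.norm_of_nonneg (Kz_nonneg _ _ _), Real.norm_eq_abs]
    refine mul_le_mul_of_nonneg_left ?_ (abs_nonneg _)
    refine Kz_le_of_le hs0 hδ0 ?_
    have h1 : ‖y‖ ≤ R := by simpa using hy
    have h2 := norm_sub_norm_le z y
    have h3 := norm_sub_norm_le x z
    rw [Metric.mem_ball, dist_eq_norm, norm_sub_rev] at hz
    linarith
  · filter_upwards [ae_restrict_mem measCB] with y hy
    have h1 : ‖y‖ ≤ R := by simpa using hy
    have hne : ‖x - y‖ ≠ 0 := by
      have h2 := norm_sub_norm_le x y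
      intro h; linarith
    unfold Kz
    refine continuousAt_const.mul (ContinuousAt.inv₀ ?_ ?_)
    · exact ContinuousAt.rpow_const (by fun_prop) (Or.inl hne)
    · exact (Real.rpow_pos_of_pos (lt_of_le_of_ne (norm_nonneg _) (Ne.symm hne)) _).ne'

lemma PP_cont (hs0 : 0 < s) (hR : 0 < R) {u : Euc N → ℝ} (hu : Mem N s R u) {x : Euc N}
    (hx : R < ‖x‖) : ContinuousAt (PP N s R u) x := by
  have h1 := PP_num_cont hs0 hu hx
  have h2 : ContinuousAt (kP N s R) x := by
    have := PP_num_cont hs0 (Mem.const (N := N) (s := s) (R := R) 1) hx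
    simp only [one_mul] at this
    exact this
  exact h1.div h2 (kP_pos hs0 hR hx).ne'

end FracNeumann

namespace FracNeumann

variable {N : ℕ} {s R lam : ℝ}

/-- reflection through the line spanned by x -/
def lref (x : Euc N) : Euc N ≃ₗᵢ[ℝ] Euc N := (Submodule.span ℝ {x}).reflection

lemma lref_self (x : Euc N) : lref x x = x :=
  Submodule.reflection_mem_subspace_eq_self (Submodule.mem_span_singleton_self x)

lemma lemA (hN : 2 ≤ N) (hs0 : 0 < s) (hs1 : s < 1) {β φ : Euc N → ℝ} (hβ : Mem N s R β)
    (hβ1 : ∀ x, |β x| ≤ 1) (hφ : Mem N s R φ) (hφi : Integrable φ) (hφ0 : ∀ x, 0 ≤ φ x) {L : ℝ}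
    (hL0 : 0 ≤ L)
    (h : ∀ ε > 0, ∀ x, φ x ≠ 0 →
      |∫ y in {y | (x, y) ∈ rg N R ∧ ε < ‖x - y‖}, (β x - β y) * Kz N s (x - y)| ≤ L) :
    |af N s R β φ| ≤ 2 * L * ∫ x, φ x := by
  set F : Euc N × Euc N → ℝ := fun q => (β q.1 - β q.2) * (φ q.1 - φ q.2) * Kz N s (q.1 - q.2) with hFd
  have hF : IntegrableOn F (rg N R) := hβ.integrable_af hφ
  set S : ℝ → Set (Euc N × Euc N) := fun ε => {q | q ∈ rg N R ∧ ε < ‖q.1 - q.2‖} with hS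
  have hSm : ∀ ε, MeasurableSet (S ε) := fun ε => (measurableSet_rg N R).inter
    (measurableSet_lt measurable_const (measurable_fst.sub measurable_snd).norm)
  have main : ∀ ε > 0, |∫ q in S ε, F q| ≤ 2 * L * ∫ x, φ x := by
    intro ε hε
    set g : Euc N × Euc N → ℝ :=
      (S ε).indicator fun q => (β q.1 - β q.2) * φ q.1 * Kz N s (q.1 - q.2) with hg
    have hk := integrableOn_Kz hN hs0 hs1 hε
    have hmz : MeasurableSet {z : Euc N | ε < ‖z‖} := measurableSet_lt measurable_const measurable_norm
    have hk' := (integrable_indicator_iff hmz).2 hk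
    have hgi : Integrable g := by
      refine Integrable.mono' ((integrable_conv1 hφi hk').const_mul 2) ?_ ?_
      · exact ((((meas_diff hβ.1).mul (hφ.1.comp measurable_fst)).mul (measurable_Kz2 N s)).indicator
          (hSm ε)).aestronglyMeasurable
      · refine Eventually.of_forall fun q => ?_
        have hKn := Kz_nonneg N s (q.1 - q.2)
        by_cases hq : q ∈ S ε
        · rw [hg, indicator_of_mem hq, indicator_of_mem (show q.1 - q.2 ∈ {z : Euc N | ε < ‖z‖} from hq.2),
            norm_mul, norm_mul, Real.norm_of_nonneg hKn, Real.norm_of_nonneg (hφ0 _), Real.norm_eq_abs]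
          have h2 : |β q.1 - β q.2| ≤ 2 := by
            have := abs_sub (β q.1) (β q.2)
            linarith [hβ1 q.1, hβ1 q.2]
          have := hφ0 q.1
          rw [mul_assoc]
          gcongr
        · rw [hg, indicator_of_notMem hq, norm_zero]
          have := hφ0 q.1
          have := indicator_nonneg (s := {z : Euc N | ε < ‖z‖}) (fun z _ => Kz_nonneg N s z) (q.1 - q.2)
          positivity
    have hgs : Integrable (fun q : Euc N × Euc N => g q.swap) := hgi.swap
    have e1 : ∫ q in S ε, F q = ∫ q, (g q + g q.swap) := by
      rw [← integral_indicator (hSm ε)]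
      congr 1; ext q
      by_cases hq : q ∈ S ε
      · have hq' : q.swap ∈ S ε := by
          refine ⟨hq.1.symm, ?_⟩
          rw [Prod.fst_swap, Prod.snd_swap, norm_sub_rev]; exact hq.2
        rw [hg, indicator_of_mem hq, indicator_of_mem hq, indicator_of_mem hq']
        simp only [hFd, Prod.fst_swap, Prod.snd_swap]
        rw [Kz_sub_comm N s q.2]; ring
      · have hq' : q.swap ∉ S ε := by
          intro hh
          apply hq
          refine ⟨hh.1.symm, ?_⟩
          have := hh.2
          rwa [Prod.fst_swap, Prod.snd_swap, norm_sub_rev] at this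
        rw [hg, indicator_of_notMem hq, indicator_of_notMem hq, indicator_of_notMem hq', add_zero]
    have e2 : ∫ q : Euc N × Euc N, g q.swap = ∫ q, g q := by
      rw [Measure.volume_eq_prod]; exact integral_prod_swap g
    have e3 : ∫ q, g q = ∫ x, ∫ y, g (x, y) := by
      rw [Measure.volume_eq_prod] at hgi ⊢
      exact integral_prod g hgi
    have e4 : ∀ x, |∫ y, g (x, y)| ≤ L * φ x := by
      intro x
      have hmx : MeasurableSet {y | (x, y) ∈ rg N R ∧ ε < ‖x - y‖} := measurable_prodMk_left (hSm ε)
      have : ∫ y, g (x, y) = φ x * ∫ y in {y | (x, y) ∈ rg N R ∧ ε < ‖x - y‖}, (β x - β y) * Kz N s (x - y) := by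
        rw [← integral_const_mul, ← integral_indicator hmx]
        congr 1; ext y
        by_cases hq : (x, y) ∈ S ε
        · rw [hg, indicator_of_mem hq,
            indicator_of_mem (show y ∈ {y | (x, y) ∈ rg N R ∧ ε < ‖x - y‖} from hq)]
          ring
        · rw [hg, indicator_of_notMem hq,
            indicator_of_notMem (show y ∉ {y | (x, y) ∈ rg N R ∧ ε < ‖x - y‖} from hq)]
      rw [this, abs_mul, abs_of_nonneg (hφ0 x)]
      by_cases hx : φ x = 0
      · simp [hx]
      · rw [mul_comm]
        exact mul_le_mul_of_nonneg_right (h ε hε x hx) (hφ0 x)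
    rw [e1, integral_add hgi hgs, e2, e3]
    have : |∫ x, ∫ y, g (x, y)| ≤ L * ∫ x, φ x := by
      rw [← integral_const_mul]
      refine (abs_integral_le_integral_abs).trans ?_
      refine integral_mono_of_nonneg (Eventually.of_forall fun x => abs_nonneg _) (hφi.const_mul L)
        (Eventually.of_forall e4)
    rw [← two_mul, abs_mul, abs_two]
    linarith
  have hmono : Monotone (fun n : ℕ => S (1 / ((n : ℝ) + 1))) := by
    intro a b hab q hq
    refine ⟨hq.1, lt_of_le_of_lt ?_ hq.2⟩
    have : (a : ℝ) ≤ b := by exact_mod_cast hab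
    gcongr
  have hU : IntegrableOn F (⋃ n : ℕ, S (1 / ((n : ℝ) + 1))) :=
    hF.mono_set (iUnion_subset fun n q hq => hq.1)
  have hlim := tendsto_setIntegral_of_monotone (fun n => hSm _) hmono hU
  have e : ∫ q in (⋃ n : ℕ, S (1 / ((n : ℝ) + 1))), F q = af N s R β φ := by
    unfold af
    have hsub : (⋃ n : ℕ, S (1 / ((n : ℝ) + 1))) ⊆ rg N R := iUnion_subset fun n q hq => hq.1
    refine (setIntegral_eq_of_subset_of_forall_sdiff_eq_zero (measurableSet_rg N R) hsub ?_).symm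
    rintro q ⟨hq1, hq2⟩
    have : q.1 = q.2 := by
      by_contra hne
      apply hq2
      obtain ⟨n, hn⟩ := exists_nat_one_div_lt (norm_pos_iff.2 (sub_ne_zero.2 hne))
      exact mem_iUnion.2 ⟨n, hq1, hn⟩
    simp [hFd, this]
  rw [e] at hlim
  exact le_of_tendsto hlim.abs (Eventually.of_forall fun n => main _ (by positivity))

lemma lemB (hN : 2 ≤ N) (hs0 : 0 < s) (hs1 : s < 1) {β : Euc N → ℝ} (hβ : Measurable β)
    (hβ1 : ∀ x, |β x| ≤ 1) {x : Euc N} {S : Set (Euc N)} (hS : MeasurableSet S) {ε : ℝ}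
    (hε : 0 < ε) (hSε : ∀ y ∈ S, ε < ‖x - y‖) {T : Euc N → Euc N}
    (hT : MeasurePreserving T) (hTe : MeasurableEmbedding T) (hTS : T ⁻¹' S = S)
    (hTx : ∀ y, ‖x - T y‖ = ‖x - y‖) {c t : ℝ} (hc : 0 ≤ c) (ht : 0 < t)
    (h : ∀ y ∈ S, |2 * β x - β y - β (T y)| ≤ c * min 1 (‖x - y‖ ^ 2 / t ^ 2)) :
    |∫ y in S, (β x - β y) * Kz N s (x - y)| ≤ c / 2 * (t ^ (-(2 * s)) * I0 N s) := by
  set f : Euc N → ℝ := fun y => (β x - β y) * Kz N s (x - y) with hf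
  have hmz : MeasurableSet {z : Euc N | ε < ‖z‖} := measurableSet_lt measurable_const measurable_norm
  have hk := ((integrable_indicator_iff hmz).2 (integrableOn_Kz hN hs0 hs1 hε)).comp_sub_left x
  have hfm : Measurable f := (measurable_const.sub hβ).mul
    ((measurable_Kz N s).comp (measurable_const.sub measurable_id))
  have hfi : IntegrableOn f S := by
    refine Integrable.mono' (hk.const_mul 2).integrableOn hfm.aestronglyMeasurable ?_
    filter_upwards [ae_restrict_mem hS] with y hy
    rw [indicator_of_mem (show x - y ∈ {z : Euc N | ε < ‖z‖} from hSε y hy), hf]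
    simp only
    rw [norm_mul, Real.norm_of_nonneg (Kz_nonneg _ _ _), Real.norm_eq_abs]
    refine mul_le_mul_of_nonneg_right ?_ (Kz_nonneg _ _ _)
    have := abs_sub (β x) (β y)
    linarith [hβ1 x, hβ1 y]
  have e1 : ∫ y in S, f (T y) = ∫ y in S, f y := by
    have := hT.setIntegral_preimage_emb hTe f S
    rwa [hTS] at this
  have hfi2 : IntegrableOn (fun y => f (T y)) S := by
    have := (hT.integrableOn_comp_preimage hTe (f := f) (s := S)).2 hfi
    rwa [hTS] at this
  have e2 : 2 * ∫ y in S, f y = ∫ y in S, (2 * β x - β y - β (T y)) * Kz N s (x - y) := by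
    rw [two_mul]
    nth_rewrite 2 [← e1]
    rw [← integral_add hfi hfi2]
    congr 1; ext y
    simp only [hf]
    rw [Kz_congr N s (hTx y)]; ring
  have hsc := (integrable_scaled hN hs0 hs1 ht).comp_sub_left x
  have h3 : |∫ y in S, (2 * β x - β y - β (T y)) * Kz N s (x - y)| ≤
      ∫ y, c * (min 1 (‖x - y‖ ^ 2 / t ^ 2) * Kz N s (x - y)) := by
    refine (abs_integral_le_integral_abs).trans ?_
    refine (integral_mono_of_nonneg (Eventually.of_forall fun y => abs_nonneg _)
      (hsc.const_mul c).integrableOn ?_).trans (setIntegral_le_integral (hsc.const_mul c) ?_)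
    · filter_upwards [ae_restrict_mem hS] with y hy
      rw [abs_mul, abs_of_nonneg (Kz_nonneg _ _ _), ← mul_assoc]
      exact mul_le_mul_of_nonneg_right (h y hy) (Kz_nonneg _ _ _)
    · refine Eventually.of_forall fun y => ?_
      have := Kz_nonneg N s (x - y)
      simp only [Pi.zero_apply]
      positivity
  rw [integral_const_mul, integral_sub_left_eq_self (fun z => min 1 (‖z‖ ^ 2 / t ^ 2) * Kz N s z),
    integral_scaled ht, ← e2, abs_mul, abs_two] at h3
  linarith

lemma lemAB (hN : 2 ≤ N) (hs0 : 0 < s) (hs1 : s < 1) {β φ : Euc N → ℝ} (hβ : Mem N s R β)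
    (hβ1 : ∀ x, |β x| ≤ 1) (hφ : Mem N s R φ) (hφi : Integrable φ) (hφ0 : ∀ x, 0 ≤ φ x)
    {c t : ℝ} (hc : 0 ≤ c) (ht : 0 < t)
    (h1 : ∀ x, φ x ≠ 0 → ‖x‖ ≤ R → ∀ y,
      |2 * β x - β y - β ((2 : ℝ) • x - y)| ≤ c * min 1 (‖x - y‖ ^ 2 / t ^ 2))
    (h2 : ∀ x, φ x ≠ 0 → R < ‖x‖ → ∀ y, ‖y‖ ≤ R →
      |2 * β x - β y - β (lref x y)| ≤ c * min 1 (‖x - y‖ ^ 2 / t ^ 2)) :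
    |af N s R β φ| ≤ c * t ^ (-(2 * s)) * I0 N s * ∫ x, φ x := by
  have hI := I0_nonneg N s
  have := lemA hN hs0 hs1 hβ hβ1 hφ hφi hφ0 (L := c / 2 * (t ^ (-(2 * s)) * I0 N s))
    (by positivity) ?_
  · refine this.trans_eq ?_
    ring
  · intro ε hε x hx
    have hm : MeasurableSet {y | (x, y) ∈ rg N R ∧ ε < ‖x - y‖} :=
      (measurable_prodMk_left (measurableSet_rg N R)).inter
        (measurableSet_lt measurable_const (measurable_const.sub measurable_id).norm)
    rcases le_or_gt ‖x‖ R with hxR | hxR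
    · refine lemB hN hs0 hs1 hβ.1 hβ1 hm hε (fun y hy => hy.2) (T := fun y => (2 : ℝ) • x - y)
        (Measure.measurePreserving_sub_left volume _) (MeasurableEquiv.subLeft ((2 : ℝ) • x)).measurableEmbedding
        ?_ ?_ hc ht (fun y _ => h1 x hx hxR y)
      · ext y
        simp only [mem_preimage, mem_ofPred_eq, rg, hxR, true_or, true_and]
        rw [show x - ((2 : ℝ) • x - y) = -(x - y) by rw [two_smul]; abel, norm_neg]
      · intro y
        rw [show x - ((2 : ℝ) • x - y) = -(x - y) by rw [two_smul]; abel, norm_neg]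
    · have hTx : ∀ y, ‖x - lref x y‖ = ‖x - y‖ := by
        intro y
        nth_rewrite 1 [← lref_self x]
        rw [← map_sub, LinearIsometryEquiv.norm_map]
      refine lemB hN hs0 hs1 hβ.1 hβ1 hm hε (fun y hy => hy.2) (T := lref x)
        (lref x).measurePreserving (lref x).toHomeomorph.toMeasurableEquiv.measurableEmbedding
        ?_ hTx hc ht (fun y hy => h2 x hx hxR y ?_)
      · ext y
        simp only [mem_preimage, mem_ofPred_eq, rg, hTx, LinearIsometryEquiv.norm_map]
      · rcases hy.1 with h | h
        · simp only at h; linarith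
        · exact h

end FracNeumann

namespace FracNeumann

variable {N : ℕ} {s R lam : ℝ}

/-- profile -/
def Hf (τ : ℝ) : ℝ := (max 0 (1 - τ)) ^ 2

lemma Hf_nonneg (τ : ℝ) : 0 ≤ Hf τ := sq_nonneg _

lemma Hf_le_one {τ : ℝ} (h : 0 ≤ τ) : Hf τ ≤ 1 := by
  unfold Hf
  have h1 : max 0 (1 - τ) ≤ 1 := max_le (by norm_num) (by linarith)
  have h2 : 0 ≤ max 0 (1 - τ) := le_max_left _ _
  nlinarith

lemma Hf_cont : Continuous Hf := by unfold Hf; fun_prop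

lemma Hf_zero {τ : ℝ} (h : 1 ≤ τ) : Hf τ = 0 := by
  unfold Hf; rw [max_eq_left (by linarith)]; norm_num

lemma Hf_taylor (a b : ℝ) : |Hf b - Hf a + 2 * max 0 (1 - a) * (b - a)| ≤ (b - a) ^ 2 := by
  unfold Hf
  rcases le_total 0 (1 - a) with h1 | h1 <;> rcases le_total 0 (1 - b) with h2 | h2
  · rw [max_eq_right h1, max_eq_right h2, abs_le]; constructor <;> nlinarith
  · rw [max_eq_right h1, max_eq_left h2, abs_le]; constructor <;> nlinarith
  · rw [max_eq_left h1, max_eq_right h2, abs_le]; constructor <;> nlinarith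
  · rw [max_eq_left h1, max_eq_left h2, abs_le]; constructor <;> nlinarith

lemma Hf_lip {a b : ℝ} (ha : 0 ≤ a) (hb : 0 ≤ b) : |Hf a - Hf b| ≤ 2 * |a - b| := by
  unfold Hf
  have h1 : |max 0 (1 - a) - max 0 (1 - b)| ≤ |a - b| := by
    have := abs_max_sub_max_le_abs (1 - a) (1 - b) 0
    rw [max_comm 0, max_comm 0]
    refine this.trans_eq ?_
    rw [abs_sub_comm]; congr 1; ring
  have h2 : max 0 (1 - a) ≤ 1 := max_le (by norm_num) (by linarith)
  have h3 : 0 ≤ max 0 (1 - a) := le_max_left _ _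
  have h4 : max 0 (1 - b) ≤ 1 := max_le (by norm_num) (by linarith)
  have h5 : 0 ≤ max 0 (1 - b) := le_max_left _ _
  rw [sq_sub_sq, abs_mul]
  have h6 : |max 0 (1 - a) + max 0 (1 - b)| ≤ 2 := by rw [abs_le]; constructor <;> linarith
  exact mul_le_mul h6 h1 (abs_nonneg _) (by norm_num)

/-- Second difference estimate for the profile. -/
lemma Hf_second {a b1 b2 d e : ℝ} (ha : 0 ≤ a) (h1 : |b1 - a| ≤ d) (h2 : |b2 - a| ≤ d)
    (h3 : |2 * a - b1 - b2| ≤ e) : |2 * Hf a - Hf b1 - Hf b2| ≤ 2 * e + 2 * d ^ 2 := by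
  have t1 := Hf_taylor a b1
  have t2 := Hf_taylor a b2
  have d1 : (b1 - a) ^ 2 ≤ d ^ 2 := by rw [← sq_abs]; gcongr
  have d2 : (b2 - a) ^ 2 ≤ d ^ 2 := by rw [← sq_abs]; gcongr
  set p := 2 * max 0 (1 - a) with hp
  have hp0 : 0 ≤ p := by have := le_max_left 0 (1 - a); positivity
  have hp2 : p ≤ 2 := by
    have : max 0 (1 - a) ≤ 1 := max_le (by norm_num) (by linarith)
    linarith
  have h4 : |p * (2 * a - b1 - b2)| ≤ 2 * e := by
    rw [abs_mul, abs_of_nonneg hp0]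
    exact mul_le_mul hp2 h3 (abs_nonneg _) (by norm_num)
  rw [abs_le] at *
  constructor <;> nlinarith

/-- Admissible quasi-distance functions at a point of the closed ball. -/
structure Adm (N : ℕ) (R : ℝ) (q : Euc N → ℝ) (x0 : Euc N) (T0 : ℝ) : Prop where
  pos : 0 < T0
  nonneg : ∀ x, 0 ≤ q x
  cont : Continuous q
  zero : q x0 = 0
  low : ∀ x, 1 / 2 * ‖x - x0‖ ^ 2 ≤ q x
  hd : ∀ x y, q x ≤ T0 ^ 2 → ‖x - y‖ ≤ T0 → |q x - q y| ≤ 200 * ‖x - y‖ * (√(q x) + ‖x - y‖)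
  hs : ∀ x z, q x ≤ T0 ^ 2 → ‖z‖ ≤ T0 → |2 * q x - q (x + z) - q (x - z)| ≤ 200 * ‖z‖ ^ 2
  hr : ∀ x y, q x ≤ T0 ^ 2 → ‖x - y‖ ≤ T0 → R < ‖x‖ → ‖y‖ ≤ R →
    |2 * q x - q y - q (lref x y)| ≤ 200 * ‖x - y‖ ^ 2

/-- the bump -/
def bmp (q : Euc N → ℝ) (t : ℝ) (y : Euc N) : ℝ := Hf (q y / t ^ 2)

section bump
variable {q : Euc N → ℝ} {x0 : Euc N} {T0 : ℝ}

lemma Adm.bmp_nonneg (t : ℝ) (x : Euc N) : 0 ≤ bmp q t x := Hf_nonneg _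

lemma Adm.bmp_le (h : Adm N R q x0 T0) (t : ℝ) (x : Euc N) : bmp q t x ≤ 1 :=
  Hf_le_one (by have := h.nonneg x; positivity)

lemma Adm.bmp_abs (h : Adm N R q x0 T0) (t : ℝ) (x : Euc N) : |bmp q t x| ≤ 1 := by
  rw [abs_of_nonneg (Adm.bmp_nonneg (q := q) t x)]; exact h.bmp_le t x

lemma Adm.bmp_zero {t : ℝ} (ht : 0 < t) {x : Euc N} (hx : t ^ 2 ≤ q x) : bmp q t x = 0 :=
  Hf_zero (by rw [le_div_iff₀ (by positivity)]; linarith)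

lemma Adm.bmp_cont (h : Adm N R q x0 T0) (t : ℝ) : Continuous (bmp q t) :=
  Hf_cont.comp (h.cont.div_const _)

lemma Adm.hd' (h : Adm N R q x0 T0) {t : ℝ} (ht : 0 < t) (htT : t ≤ T0) {x y : Euc N}
    (hx : q x ≤ t ^ 2) (hr : ‖x - y‖ ≤ t) : |q y / t ^ 2 - q x / t ^ 2| ≤ 400 * ‖x - y‖ / t := by
  have h1 := h.hd x y (hx.trans (by gcongr)) (hr.trans htT)
  have h2 : √(q x) ≤ t := Real.sqrt_le_iff.2 ⟨ht.le, hx⟩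
  have h3 : |q x - q y| ≤ 200 * ‖x - y‖ * (t + t) := h1.trans (by gcongr)
  rw [← sub_div, abs_div, abs_of_pos (show 0 < t ^ 2 by positivity), abs_sub_comm,
    div_le_iff₀ (by positivity)]
  refine h3.trans_eq ?_
  field_simp; ring

lemma Adm.bmp_mem (h : Adm N R q x0 T0) (hN : 2 ≤ N) (hs0 : 0 < s) (hs1 : s < 1) {t : ℝ}
    (ht : 0 < t) (htT : t ≤ T0) : Mem N s R (bmp q t) := by
  refine Mem.bump hN hs0 hs1 (h.bmp_cont t).measurable (C := 800 ^ 2) ht (h.bmp_abs t) ?_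
  have key : ∀ x y, ‖x - y‖ ≤ t → q x ≤ t ^ 2 →
      (bmp q t x - bmp q t y) ^ 2 ≤ 800 ^ 2 * (‖x - y‖ ^ 2 / t ^ 2) := by
    intro x y hr hx
    have h1 := h.hd' ht htT hx hr
    have h2 : |bmp q t y - bmp q t x| ≤ 2 * (400 * ‖x - y‖ / t) :=
      (Hf_lip (by have := h.nonneg y; positivity) (by have := h.nonneg x; positivity)).trans
        (by gcongr)
    rw [← sq_abs, abs_sub_comm]
    calc |bmp q t y - bmp q t x| ^ 2 ≤ (2 * (400 * ‖x - y‖ / t)) ^ 2 := by gcongr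
      _ = _ := by field_simp; ring
  intro x y
  rcases le_or_gt ‖x - y‖ t with hr | hr
  · have hm : min 1 (‖x - y‖ ^ 2 / t ^ 2) = ‖x - y‖ ^ 2 / t ^ 2 := by
      apply min_eq_right
      rw [div_le_one (by positivity)]
      gcongr
    rw [hm]
    rcases le_or_gt (q x) (t ^ 2) with hx | hx
    · exact key x y hr hx
    · rcases le_or_gt (q y) (t ^ 2) with hy | hy
      · have := key y x (by rwa [norm_sub_rev]) hy
        rw [norm_sub_rev] at this
        refine le_trans (le_of_eq ?_) this
        ring
      · rw [Adm.bmp_zero ht hx.le, Adm.bmp_zero ht hy.le]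
        simp only [sub_self, ne_eq, OfNat.ofNat_ne_zero, not_false_eq_true, zero_pow]
        positivity
  · have hm : min 1 (‖x - y‖ ^ 2 / t ^ 2) = 1 := by
      apply min_eq_left
      rw [one_le_div (by positivity)]
      gcongr
    rw [hm]
    have h1 := h.bmp_le t x
    have h2 := h.bmp_le t y
    have h3 : 0 ≤ bmp q t x := Hf_nonneg _
    have h4 : 0 ≤ bmp q t y := Hf_nonneg _
    nlinarith

lemma Adm.bmp_second (h : Adm N R q x0 T0) {t : ℝ} (ht : 0 < t) (htT : t ≤ T0) {x y y' : Euc N}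
    (hx : q x ≤ t ^ 2) (hyy : ‖x - y'‖ = ‖x - y‖)
    (hs : ‖x - y‖ ≤ T0 → |2 * q x - q y - q y'| ≤ 200 * ‖x - y‖ ^ 2) :
    |2 * bmp q t x - bmp q t y - bmp q t y'| ≤ 400000 * min 1 (‖x - y‖ ^ 2 / t ^ 2) := by
  rcases le_or_gt ‖x - y‖ t with hr | hr
  · have hm : min 1 (‖x - y‖ ^ 2 / t ^ 2) = ‖x - y‖ ^ 2 / t ^ 2 := by
      apply min_eq_right
      rw [div_le_one (by positivity)]
      gcongr
    rw [hm]
    have h1 := h.hd' ht htT hx hr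
    have h2 := h.hd' ht htT hx (hyy.le.trans hr)
    rw [hyy] at h2
    have h3 : |2 * (q x / t ^ 2) - q y / t ^ 2 - q y' / t ^ 2| ≤ 200 * ‖x - y‖ ^ 2 / t ^ 2 := by
      have e : 2 * (q x / t ^ 2) - q y / t ^ 2 - q y' / t ^ 2 = (2 * q x - q y - q y') / t ^ 2 := by
        ring
      rw [e, abs_div, abs_of_pos (show 0 < t ^ 2 by positivity)]
      gcongr
      exact hs (hr.trans htT)
    refine (Hf_second (by have := h.nonneg x; positivity) h1 h2 h3).trans ?_
    have e : 2 * (200 * ‖x - y‖ ^ 2 / t ^ 2) + 2 * (400 * ‖x - y‖ / t) ^ 2 =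
        320400 * (‖x - y‖ ^ 2 / t ^ 2) := by field_simp; ring
    rw [e]
    gcongr
    norm_num
  · have hm : min 1 (‖x - y‖ ^ 2 / t ^ 2) = 1 := by
      apply min_eq_left
      rw [one_le_div (by positivity)]
      gcongr
    rw [hm]
    have h1 := h.bmp_le t x
    have h2 := h.bmp_le t y
    have h3 : 0 ≤ bmp q t x := Hf_nonneg _
    have h4 : 0 ≤ bmp q t y := Hf_nonneg _
    have h5 := h.bmp_le t y'
    have h6 : 0 ≤ bmp q t y' := Hf_nonneg _
    rw [abs_le]; constructor <;> linarith

/-- constant -/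
def Cb (N : ℕ) (s : ℝ) : ℝ := 400000 * I0 N s

lemma Cb_nonneg : 0 ≤ Cb N s := by have := I0_nonneg N s; unfold Cb; positivity

lemma Adm.bmp_af (h : Adm N R q x0 T0) (hN : 2 ≤ N) (hs0 : 0 < s) (hs1 : s < 1) {t : ℝ}
    (ht : 0 < t) (htT : t ≤ T0) {φ : Euc N → ℝ} (hφ : Mem N s R φ) (hφi : Integrable φ)
    (hφ0 : ∀ x, 0 ≤ φ x) (hsupp : ∀ x, φ x ≠ 0 → q x ≤ t ^ 2) :
    |af N s R (bmp q t) φ| ≤ Cb N s * t ^ (-(2 * s)) * ∫ x, φ x := by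
  refine (lemAB hN hs0 hs1 (h.bmp_mem hN hs0 hs1 ht htT) (h.bmp_abs t) hφ hφi hφ0
    (c := 400000) (by norm_num) ht ?_ ?_).trans_eq ?_
  · intro x hx hxR y
    refine h.bmp_second ht htT (hsupp x hx) ?_ ?_
    · rw [show x - ((2 : ℝ) • x - y) = -(x - y) by rw [two_smul]; abel, norm_neg]
    · intro hr
      have := h.hs x (x - y) ((hsupp x hx).trans (by gcongr)) hr
      rw [show x + (x - y) = (2 : ℝ) • x - y by rw [two_smul]; abel, sub_sub_cancel] at this
      rw [sub_right_comm] at this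
      exact this
  · intro x hx hxR y hy
    refine h.bmp_second ht htT (hsupp x hx) ?_ ?_
    · nth_rewrite 1 [← lref_self x]
      rw [← map_sub, LinearIsometryEquiv.norm_map]
    · intro hr
      exact h.hr x y ((hsupp x hx).trans (by gcongr)) hr hxR hy
  · unfold Cb; ring

end bump

lemma Adm.interior {x0 : Euc N} (hx0 : ‖x0‖ < R) {T0 : ℝ} (hT0 : 0 < T0) (hT : T0 ≤ R - ‖x0‖) :
    Adm N R (fun y => ‖y - x0‖ ^ 2) x0 T0 := by
  refine ⟨hT0, fun x => by positivity, by fun_prop, by simp, fun x => ?_, ?_, ?_, ?_⟩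
  · have := sq_nonneg ‖x - x0‖; linarith
  · intro x y _ _
    rw [Real.sqrt_sq (norm_nonneg _)]
    have h1 := abs_norm_sub_norm_le (x - x0) (y - x0)
    rw [sub_sub_sub_cancel_right] at h1
    have h2 : ‖y - x0‖ ≤ ‖x - x0‖ + ‖x - y‖ := by
      have := (abs_le.1 h1).1; linarith
    rw [sq_sub_sq, abs_mul, abs_of_nonneg (show 0 ≤ ‖x - x0‖ + ‖y - x0‖ by positivity)]
    have h3 := norm_nonneg (x - x0)
    have h4 := norm_nonneg (x - y)
    calc (‖x - x0‖ + ‖y - x0‖) * |‖x - x0‖ - ‖y - x0‖|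
        ≤ (2 * (‖x - x0‖ + ‖x - y‖)) * ‖x - y‖ := by gcongr; linarith
      _ ≤ _ := by nlinarith [mul_nonneg h4 h3, mul_nonneg h4 h4]
  · intro x z _ _
    rw [show x + z - x0 = (x - x0) + z by abel, show x - z - x0 = (x - x0) - z by abel,
      norm_add_sq_real (x - x0) z, norm_sub_sq_real (x - x0) z, abs_le]
    have := sq_nonneg ‖z‖
    constructor <;> linarith
  · intro x y hq _ hxR
    exfalso
    have h1 : ‖x - x0‖ ≤ T0 := abs_le_of_sq_le_sq' hq hT0.le |>.2
    have := norm_sub_norm_le x x0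
    linarith

end FracNeumann

namespace FracNeumann

variable {N : ℕ} {s R lam : ℝ}

lemma abs_mul_le {a b A B : ℝ} (h1 : |a| ≤ A) (h2 : |b| ≤ B) : |a * b| ≤ A * B := by
  rw [abs_mul]; exact mul_le_mul h1 h2 (abs_nonneg _) ((abs_nonneg _).trans h1)

lemma scal_low {X α ε : ℝ} (he : |ε| ≤ X) : 1 / 2 * X ^ 2 ≤ X ^ 2 + α ^ 2 / 2 - α * ε := by
  have h : ε ^ 2 ≤ X ^ 2 := by rw [← sq_abs]; gcongr
  nlinarith [sq_nonneg (α - ε)]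

lemma scal_hd {X X' α α' ε ε' r Q : ℝ} (hr : 0 ≤ r) (hX0 : 0 ≤ X) (hXQ : X ≤ 2 * Q)
    (hX : |X ^ 2 - X' ^ 2| ≤ r * (2 * X + r)) (hα : |α| ≤ 4 * X) (hΔ : |α - α'| ≤ 7 * r)
    (he : |ε| ≤ X) (hΔe : |ε - ε'| ≤ r) :
    |(X ^ 2 + α ^ 2 / 2 - α * ε) - (X' ^ 2 + α' ^ 2 / 2 - α' * ε')| ≤ 200 * r * (Q + r) := by
  have e1 : (X ^ 2 + α ^ 2 / 2 - α * ε) - (X' ^ 2 + α' ^ 2 / 2 - α' * ε') =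
    (X ^ 2 - X' ^ 2) + ((α - α') * α - (α - α') * (α - α') / 2) - (α * (ε - ε')
      + ((α - α') * ε - (α - α') * (ε - ε'))) := by ring
  have h1 := abs_mul_le hΔ hα
  have h2 := abs_mul_le hΔ hΔ
  have h3 := abs_mul_le hα hΔe
  have h4 := abs_mul_le hΔ he
  have h5 := abs_mul_le hΔ hΔe
  have h6 : r * X ≤ r * (2 * Q) := by gcongr
  have h7 : 0 ≤ r * X := by positivity
  have h8 : 0 ≤ r * r := by positivity
  rw [e1]
  rw [abs_le] at *
  constructor <;> nlinarith

lemma scal_hs {X1 X2 X α ε p ρ w r : ℝ} (hR : 0 < R) (hX : 2 * X ^ 2 - X1 ^ 2 - X2 ^ 2 = - 2 * r ^ 2)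
    (hα : |α| ≤ 8 * R) (he : |ε| ≤ 2 * R) (hp : |p| ≤ 6 * r) (hρ : ρ = r ^ 2 / R) (hr : 0 ≤ r)
    (hrR : r ≤ R) (hw : |w| ≤ r) :
    |2 * (X ^ 2 + α ^ 2 / 2 - α * ε) - (X1 ^ 2 + (α + p + ρ) ^ 2 / 2 - (α + p + ρ) * (ε - w))
      - (X2 ^ 2 + (α - p + ρ) ^ 2 / 2 - (α - p + ρ) * (ε + w))| ≤ 200 * r ^ 2 := by
  have e1 : 2 * (X ^ 2 + α ^ 2 / 2 - α * ε) - (X1 ^ 2 + (α + p + ρ) ^ 2 / 2 - (α + p + ρ) * (ε - w))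
      - (X2 ^ 2 + (α - p + ρ) ^ 2 / 2 - (α - p + ρ) * (ε + w)) =
      (2 * X ^ 2 - X1 ^ 2 - X2 ^ 2) - (p * p + ρ * ρ + 2 * (α * ρ)) - (2 * (p * w) - 2 * (ε * ρ)) := by
    ring
  have hρ0 : 0 ≤ ρ := by rw [hρ]; positivity
  have hρR : R * ρ = r ^ 2 := by rw [hρ]; field_simp
  have hρa : |ρ| ≤ ρ := (abs_of_nonneg hρ0).le
  have hρr : ρ ≤ r := by rw [hρ, div_le_iff₀ hR]; nlinarith
  have h1 := abs_mul_le hp hp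
  have h2 : ρ * ρ ≤ r * r := by gcongr
  have h3 := abs_mul_le hα hρa
  have h4 := abs_mul_le hp hw
  have h5 := abs_mul_le he hρa
  have h6 := mul_nonneg hρ0 hρ0
  rw [e1, hX]
  rw [abs_le] at *
  constructor <;> nlinarith

lemma scal_hr {α β ε n r : ℝ} (hR : 0 < R) (hr : 0 ≤ r) (hrR : r ≤ R) (hα : 0 ≤ α)
    (hαR : α ≤ 3 * R) (hβ : β ≤ 0) (hβR : -R ≤ β) (hΔ : α - β ≤ 3 * r) (he : |ε| ≤ 2 * R)
    (heR : |ε - R| ≤ 3 * R) (hn : 2 * n * (R + α) = α - β + r ^ 2 / R) :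
    |2 * R * (α - β) + α ^ 2 - β ^ 2 - 2 * ε * (α - β) + 2 * n * (2 * R - β) * (ε - R)| ≤
      200 * r ^ 2 := by
  have hp : 0 < R + α := by linarith
  have e1 : (2 * R * (α - β) + α ^ 2 - β ^ 2 - 2 * ε * (α - β) + 2 * n * (2 * R - β) * (ε - R))
      * (R + α) = (α - β) * (3 * R * α + 2 * R * β + α * α + α * β - 2 * (α * ε) - β * ε)
        + (r ^ 2 / R) * ((2 * R - β) * (ε - R)) := by
    have : 2 * n * (2 * R - β) * (ε - R) * (R + α) = (2 * n * (R + α)) * ((2 * R - β) * (ε - R)) := by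
      ring
    rw [add_mul, this, hn]; ring
  set Δ := α - β with hΔd
  have hΔ0 : 0 ≤ Δ := by linarith
  have hαΔ : |α| ≤ Δ := by rw [abs_of_nonneg hα]; linarith
  have hβΔ : |β| ≤ Δ := by rw [abs_of_nonpos hβ]; linarith
  have hα3 : |α| ≤ 3 * R := by rw [abs_of_nonneg hα]; linarith
  have k1 := abs_mul_le hα3 hαΔ
  have k2 := abs_mul_le hα3 hβΔ
  have k3 := abs_mul_le hαΔ he
  have k4 := abs_mul_le hβΔ he
  have k5 : |3 * R * α + 2 * R * β + α * α + α * β - 2 * (α * ε) - β * ε| ≤ 17 * R * Δ := by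
    have l1 : 0 ≤ R * α := by positivity
    have l2 : R * α ≤ R * Δ := by gcongr; linarith
    have l3 : R * β ≤ 0 := mul_nonpos_of_nonneg_of_nonpos hR.le hβ
    have l4 : -(R * Δ) ≤ R * β := by nlinarith
    rw [abs_le] at *
    constructor <;> nlinarith
  have k6 := abs_mul_le (show |Δ| ≤ Δ from (abs_of_nonneg hΔ0).le) k5
  have k7 : |2 * R - β| ≤ 3 * R := by rw [abs_of_nonneg] <;> linarith
  have k8 := abs_mul_le (show |r ^ 2 / R| ≤ r ^ 2 / R from (abs_of_nonneg (by positivity)).le)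
    (abs_mul_le k7 heR)
  have k9 : r ^ 2 / R * (3 * R * (3 * R)) = 9 * (R * r ^ 2) := by field_simp; norm_num
  have k10 : Δ * (17 * R * Δ) ≤ 153 * (R * r ^ 2) := by
    have : Δ * Δ ≤ (3 * r) * (3 * r) := by gcongr
    have := mul_le_mul_of_nonneg_left this hR.le
    nlinarith
  have k11 : |2 * R * Δ + α ^ 2 - β ^ 2 - 2 * ε * Δ + 2 * n * (2 * R - β) * (ε - R)| * (R + α)
      ≤ 200 * r ^ 2 * (R + α) := by
    rw [← abs_of_pos hp, ← abs_mul, abs_of_pos hp, e1]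
    refine (abs_add_le _ _).trans ?_
    have l1 : 0 ≤ R * r ^ 2 := by positivity
    have l2 : 0 ≤ α * r ^ 2 := by positivity
    have l3 : 200 * r ^ 2 * (R + α) = 200 * (R * r ^ 2) + 200 * (α * r ^ 2) := by ring
    rw [k9] at k8
    rw [l3]
    linarith
  exact le_of_mul_le_mul_right k11 hp

/-- The quasi distance at a boundary point. -/
def qb (R : ℝ) (x0 y : Euc N) : ℝ :=
  ‖y - x0‖ ^ 2 + ((‖y‖ ^ 2 - R ^ 2) / R) ^ 2 / 2 -
    ((‖y‖ ^ 2 - R ^ 2) / R) * ((R ^ 2 - inner ℝ y x0) / R)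

lemma lref_apply (x y : Euc N) : lref x y = (2 * (inner ℝ x y / ‖x‖ ^ 2)) • x - y := by
  unfold lref
  rw [Submodule.reflection_apply, Submodule.starProjection_singleton]
  simp only [RCLike.ofReal_real_eq_id, id]
  rw [two_smul, two_mul, add_smul]

lemma Adm.boundary (hR : 0 < R) {x0 : Euc N} (hx0 : ‖x0‖ = R) : Adm N R (qb R x0) x0 R := by
  have heps : ∀ y : Euc N, |(R ^ 2 - inner ℝ y x0) / R| ≤ ‖y - x0‖ := by
    intro y
    rw [abs_div, abs_of_pos hR, div_le_iff₀ hR]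
    have : R ^ 2 - inner ℝ y x0 = inner ℝ (x0 - y) x0 := by
      rw [inner_sub_left, real_inner_self_eq_norm_sq, hx0]
    rw [this, norm_sub_rev]
    refine (abs_real_inner_le_norm _ _).trans_eq (by rw [hx0])
  have hdeps : ∀ x y : Euc N, |(R ^ 2 - inner ℝ x x0) / R - (R ^ 2 - inner ℝ y x0) / R| ≤ ‖x - y‖ := by
    intro x y
    rw [← sub_div, abs_div, abs_of_pos hR, div_le_iff₀ hR]
    have : R ^ 2 - inner ℝ x x0 - (R ^ 2 - inner ℝ y x0) = inner ℝ (y - x) x0 := by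
      rw [inner_sub_left]; ring
    rw [this, norm_sub_rev]
    refine (abs_real_inner_le_norm _ _).trans_eq (by rw [hx0])
  have hlow : ∀ x : Euc N, 1 / 2 * ‖x - x0‖ ^ 2 ≤ qb R x0 x := fun x => scal_low (heps x)
  have hX2 : ∀ x : Euc N, qb R x0 x ≤ R ^ 2 → ‖x - x0‖ ≤ 2 * R := by
    intro x hx
    have := hlow x
    refine abs_le_of_sq_le_sq' ?_ (by linarith) |>.2
    nlinarith
  have hn3 : ∀ x : Euc N, qb R x0 x ≤ R ^ 2 → ‖x‖ ≤ 3 * R := by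
    intro x hx
    have := hX2 x hx
    have := norm_sub_norm_le x x0
    linarith
  have hal : ∀ x : Euc N, qb R x0 x ≤ R ^ 2 → |(‖x‖ ^ 2 - R ^ 2) / R| ≤ 4 * ‖x - x0‖ := by
    intro x hx
    have h1 := hX2 x hx
    have h2 := hn3 x hx
    have h3 := abs_norm_sub_norm_le x x0
    rw [hx0] at h3
    rw [abs_div, abs_of_pos hR, div_le_iff₀ hR, sq_sub_sq]
    have h4 : |‖x‖ + R| ≤ 4 * R := by rw [abs_of_nonneg (by positivity)]; linarith
    exact (abs_mul_le h4 h3).trans_eq (by ring)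
  have hdal : ∀ x y : Euc N, ‖x‖ ≤ 3 * R → ‖x - y‖ ≤ R →
      |(‖x‖ ^ 2 - R ^ 2) / R - (‖y‖ ^ 2 - R ^ 2) / R| ≤ 7 * ‖x - y‖ := by
    intro x y hx hr
    have h3 := abs_norm_sub_norm_le x y
    have h5 : ‖y‖ ≤ ‖x‖ + ‖x - y‖ := by have := (abs_le.1 h3).1; linarith
    rw [← sub_div, abs_div, abs_of_pos hR, div_le_iff₀ hR, sub_sub_sub_cancel_right, sq_sub_sq]
    have h4 : |‖x‖ + ‖y‖| ≤ 7 * R := by rw [abs_of_nonneg (by positivity)]; linarith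
    exact (abs_mul_le h4 h3).trans_eq (by ring)
  refine ⟨hR, fun x => le_trans (by positivity) (hlow x), ?_, ?_, hlow, ?_, ?_, ?_⟩
  · unfold qb; fun_prop
  · simp [qb, hx0]
  · intro x y hx hr
    refine scal_hd (norm_nonneg _) (norm_nonneg _) ?_ ?_ (hal x hx) (hdal x y (hn3 x hx) hr) (heps x)
      (hdeps x y)
    · have h1 := hlow x
      have h2 : ‖x - x0‖ ^ 2 ≤ 4 * qb R x0 x := by
        have := sq_nonneg ‖x - x0‖
        linarith
      have := Real.sqrt_le_sqrt h2
      rw [Real.sqrt_sq (norm_nonneg _), Real.sqrt_mul (by norm_num),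
        show (4 : ℝ) = 2 ^ 2 by norm_num, Real.sqrt_sq (by norm_num)] at this
      exact this
    · have h1 := abs_norm_sub_norm_le (x - x0) (y - x0)
      rw [sub_sub_sub_cancel_right] at h1
      have h2 : ‖y - x0‖ ≤ ‖x - x0‖ + ‖x - y‖ := by
        have := (abs_le.1 h1).1; linarith
      rw [sq_sub_sq, mul_comm]
      refine abs_mul_le h1 ?_
      rw [abs_of_nonneg (by positivity)]
      linarith
  · intro x z hx hr
    have e1 : (‖x + z‖ ^ 2 - R ^ 2) / R = (‖x‖ ^ 2 - R ^ 2) / R + 2 * inner ℝ x z / R + ‖z‖ ^ 2 / R := by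
      rw [norm_add_sq_real]; ring
    have e2 : (‖x - z‖ ^ 2 - R ^ 2) / R = (‖x‖ ^ 2 - R ^ 2) / R - 2 * inner ℝ x z / R + ‖z‖ ^ 2 / R := by
      rw [norm_sub_sq_real]; ring
    have e3 : (R ^ 2 - inner ℝ (x + z) x0) / R = (R ^ 2 - inner ℝ x x0) / R - inner ℝ z x0 / R := by
      rw [inner_add_left]; ring
    have e4 : (R ^ 2 - inner ℝ (x - z) x0) / R = (R ^ 2 - inner ℝ x x0) / R + inner ℝ z x0 / R := by
      rw [inner_sub_left]; ring
    have h1 := hX2 x hx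
    have h2 := hn3 x hx
    unfold qb
    rw [e1, e2, e3, e4]
    refine scal_hs hR ?_ ((hal x hx).trans (by linarith)) ((heps x).trans h1) ?_ rfl (norm_nonneg _) hr ?_
    · rw [show x + z - x0 = (x - x0) + z by abel, show x - z - x0 = (x - x0) - z by abel,
        norm_add_sq_real (x - x0) z, norm_sub_sq_real (x - x0) z]; ring
    · rw [abs_div, abs_of_pos hR, div_le_iff₀ hR, abs_mul, abs_of_pos (by norm_num : (0:ℝ) < 2)]
      have h3 := abs_real_inner_le_norm x z
      have h4 : ‖x‖ * ‖z‖ ≤ 3 * R * ‖z‖ := by gcongr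
      linarith
    · rw [abs_div, abs_of_pos hR, div_le_iff₀ hR]
      refine (abs_real_inner_le_norm _ _).trans_eq (by rw [hx0])
  · intro x y hx hr hxR hyR
    have hx0' : 0 < ‖x‖ := hR.trans hxR
    have hnx := norm_nonneg y
    have h1 := hX2 x hx
    have h2 := norm_sub_norm_le x y
    have hny : ‖lref x y‖ = ‖y‖ := LinearIsometryEquiv.norm_map _ _
    have hr2 : ‖x - y‖ ^ 2 = ‖x‖ ^ 2 - 2 * inner ℝ x y + ‖y‖ ^ 2 := norm_sub_sq_real x y
    have hsq : ∀ y : Euc N, ‖y - x0‖ ^ 2 = ‖y‖ ^ 2 - 2 * inner ℝ y x0 + R ^ 2 := by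
      intro y; rw [norm_sub_sq_real, hx0]
    have hin : inner ℝ (lref x y) x0 = 2 * (inner ℝ x y / ‖x‖ ^ 2) * inner ℝ x x0 - inner ℝ y x0 := by
      rw [lref_apply, inner_sub_left, real_inner_smul_left]
    have hRne := hR.ne'
    have key := scal_hr (R := R) (α := (‖x‖ ^ 2 - R ^ 2) / R) (β := (‖y‖ ^ 2 - R ^ 2) / R)
      (ε := (R ^ 2 - inner ℝ x x0) / R) (n := 1 - inner ℝ x y / ‖x‖ ^ 2) (r := ‖x - y‖) hR
      (norm_nonneg _) hr ?_ ?_ ?_ ?_ ?_ ((heps x).trans h1) ?_ ?_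
    · refine le_trans (le_of_eq ?_) key
      congr 1
      unfold qb
      rw [hsq, hsq, hsq, hny, hin]
      field_simp
      ring
    · apply div_nonneg _ hR.le; nlinarith
    · rw [div_le_iff₀ hR]; nlinarith
    · apply div_nonpos_of_nonpos_of_nonneg _ hR.le; nlinarith
    · rw [le_div_iff₀ hR]; nlinarith
    · rw [← sub_div, div_le_iff₀ hR]
      have : ‖x‖ ^ 2 - R ^ 2 - (‖y‖ ^ 2 - R ^ 2) = (‖x‖ - ‖y‖) * (‖x‖ + ‖y‖) := by ring
      rw [this]
      have : (‖x‖ - ‖y‖) * (‖x‖ + ‖y‖) ≤ ‖x - y‖ * (3 * R) := by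
        gcongr
        · linarith
      linarith
    · have : (R ^ 2 - inner ℝ x x0) / R - R = - (inner ℝ x x0 / R) := by field_simp; ring
      rw [this, abs_neg, abs_div, abs_of_pos hR, div_le_iff₀ hR]
      refine (abs_real_inner_le_norm _ _).trans ?_
      rw [hx0]; gcongr; linarith
    · have hxx : ‖x‖ ^ 2 = R ^ 2 + R * ((‖x‖ ^ 2 - R ^ 2) / R) := by field_simp; ring
      have hp : inner ℝ x y = (‖x‖ ^ 2 + ‖y‖ ^ 2 - ‖x - y‖ ^ 2) / 2 := by linarith
      rw [hp]
      field_simp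
      ring

/-- admissible function exists at every point of the closed ball -/
lemma exists_adm (hR : 0 < R) {x0 : Euc N} (hx0 : ‖x0‖ ≤ R) : ∃ q T0, Adm N R q x0 T0 := by
  rcases hx0.lt_or_eq with h | h
  · exact ⟨_, _, Adm.interior h (by linarith : 0 < R - ‖x0‖) le_rfl⟩
  · exact ⟨_, _, Adm.boundary hR h⟩

end FracNeumann

namespace FracNeumann

variable {N : ℕ} {s R lam : ℝ}

lemma pos_mono_mul {a b : ℝ} : 0 ≤ (a - b) * (max a 0 - max b 0) := by
  rcases le_total a b with h | h
  · have : max a 0 ≤ max b 0 := max_le_max h le_rfl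
    nlinarith
  · have : max b 0 ≤ max a 0 := max_le_max h le_rfl
    nlinarith

lemma half_core (hN : 2 ≤ N) (hs0 : 0 < s) (hs1 : s < 1) {q : Euc N → ℝ} {x0 : Euc N}
    {T0 : ℝ} (h : Adm N R q x0 T0) {u : Euc N → ℝ} (hu : WS N s R lam u) {M A J ρ T t θ g : ℝ}
    (hM : ∀ x, |u x| ≤ M) (hA : ∀ x ∈ Metric.ball x0 ρ, u x ≤ A) (hT : 0 < T)
    (hTT : T ≤ T0) (hTρ : 2 * T ≤ ρ) (ht : 0 < t) (htT : t ≤ T) (hθ : 0 < θ) (hθJ : θ ≤ J / 2)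
    (hg : 0 ≤ g)
    (hG : ENNReal.ofReal g ≤ volume {y | ‖y‖ ≤ R ∧ ‖y - x0‖ < t ∧ u y ≤ A - J})
    (hlt : |lam| * M + θ * (Cb N s * t ^ (-(2 * s))) + (M + |A| + J) * (Cb N s * T ^ (-(2 * s))) <
      g * (J / 2 * ((3 * t) ^ ((N : ℝ) + 2 * s))⁻¹)) :
    ∀ᵐ x : Euc N, u x ≤ A - θ * bmp q t x + (M + |A| + J) * (1 - bmp q T x) := by
  have hM0 : 0 ≤ M := (abs_nonneg _).trans (hM 0)
  have hJ : 0 < J := by linarith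
  set D := M + |A| + J with hD
  have hD0 : 0 ≤ D := by positivity
  have hbt := h.bmp_mem hN hs0 hs1 ht (htT.trans hTT)
  have hbT := h.bmp_mem hN hs0 hs1 hT hTT
  set b : Euc N → ℝ := fun x => A - θ * bmp q t x + D * (1 - bmp q T x) with hb
  set p : Euc N → ℝ := θ • bmp q t + D • bmp q T with hp
  have hpm : Mem N s R p := (hbt.smul θ).add (hbT.smul D)
  have hwm : Mem N s R (u + p - fun _ => A + D) := (hu.1.add hpm).sub (Mem.const _)
  set w := (u + p - fun _ => A + D) with hw
  have hwb : ∀ x, w x = u x - b x := by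
    intro x; simp only [hw, hp, hb, Pi.add_apply, Pi.sub_apply, Pi.smul_apply, smul_eq_mul]; ring
  set φ : Euc N → ℝ := fun x => max (w x) 0 with hφ
  have hφm : Mem N s R φ := hwm.pos
  have hφ0 : ∀ x, 0 ≤ φ x := fun x => le_max_right _ _
  have hB1 : ∀ x, b x = A - θ * bmp q t x + D * (1 - bmp q T x) := fun x => rfl
  have hB2 : ∀ x, A - θ ≤ b x := by
    intro x
    have h1 := h.bmp_le t x
    have h2 := mul_nonneg hD0 (sub_nonneg.2 (h.bmp_le T x))
    have h3 : θ * bmp q t x ≤ θ * 1 := by gcongr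
    rw [hB1]; linarith
  -- support
  have hsupp : ∀ x, φ x ≠ 0 → q x < t ^ 2 := by
    intro x hx
    by_contra hcon
    push Not at hcon
    apply hx
    refine max_eq_right ?_
    rw [hwb, hB1, Adm.bmp_zero ht hcon]
    rcases le_or_gt (T ^ 2) (q x) with h1 | h1
    · rw [Adm.bmp_zero hT h1]
      have := hM x
      have h3 := (abs_le.1 this).2
      have h4 := neg_abs_le A
      rw [hD]
      linarith
    · have h2 := mul_nonneg hD0 (sub_nonneg.2 (h.bmp_le T x))
      have h3 : u x ≤ A := by
        apply hA
        rw [Metric.mem_ball, dist_eq_norm]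
        have h4 := h.low x
        have h5 : ‖x - x0‖ < 2 * T := by
          refine lt_of_pow_lt_pow_left₀ 2 (by positivity) ?_
          nlinarith [sq_nonneg ‖x - x0‖]
        linarith
      linarith
  have hsuppn : ∀ x, φ x ≠ 0 → ‖x - x0‖ ≤ 2 * t := by
    intro x hx
    have h1 := hsupp x hx
    have h4 := h.low x
    refine (abs_le_of_sq_le_sq' ?_ (by positivity)).2
    nlinarith [sq_nonneg ‖x - x0‖]
  have hφi : Integrable φ := by
    have h1 : IntegrableOn φ (Metric.closedBall x0 (2 * t)) := by
      refine Integrable.mono' (g := fun _ => M + |A| + θ)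
        (integrableOn_const (isCompact_closedBall _ _).measure_lt_top.ne)
        hφm.1.aestronglyMeasurable (Eventually.of_forall fun x => ?_)
      rw [Real.norm_of_nonneg (hφ0 x)]
      refine max_le ?_ (by positivity)
      rw [hwb]
      have h1 := (abs_le.1 (hM x)).2
      have h2 := neg_abs_le A
      have h3 := hB2 x
      linarith
    rw [← integrableOn_univ]
    refine h1.of_forall_sdiff_eq_zero MeasurableSet.univ ?_
    intro x hx
    by_contra hne
    apply hx.2
    rw [Metric.mem_closedBall, dist_eq_norm]
    exact hsuppn x hne
  have hI0 : 0 ≤ ∫ x, φ x := integral_nonneg hφ0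
  set κ := J / 2 * ((3 * t) ^ ((N : ℝ) + 2 * s))⁻¹ with hκ
  have hκ0 : 0 ≤ κ := by positivity
  have key := LB (R := R) (m := g) (hwm.integrable_af hφm) ?_
    (S := {z | φ z.1 ≠ 0 ∧ ‖z.2‖ ≤ R ∧ ‖z.2 - x0‖ < t ∧ u z.2 ≤ A - J}) ?_ ?_
    (f := fun x => κ * φ x) (fun x => mul_nonneg hκ0 (hφ0 x)) (hφi.const_mul κ) ?_ hg ?_
  · change _ ≤ af N s R w φ at key
    have e1 : af N s R w φ = lam * (∫ x in CB N R, u x * φ x) +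
        (θ * af N s R (bmp q t) φ + D * af N s R (bmp q T) φ) := by
      rw [hw, af_sub_left (hu.1.add hpm) (Mem.const _) hφm, af_const_left, af_add_left hu.1 hpm hφm,
        hu.2.2 φ hφm, hp, af_add_left (hbt.smul θ) (hbT.smul D) hφm, af_smul_left, af_smul_left,
        sub_zero]
    have e2 : |∫ x in CB N R, u x * φ x| ≤ M * ∫ x, φ x := by
      rw [← integral_const_mul]
      refine (norm_integral_le_integral_norm (fun x => u x * φ x)).trans ?_
      refine (setIntegral_mono_on (hu.1.integrable_mul hφm).norm (hφi.const_mul M).integrableOn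
        measCB ?_).trans (setIntegral_le_integral (hφi.const_mul M)
          (Eventually.of_forall fun x => mul_nonneg hM0 (hφ0 x)))
      intro x _
      rw [norm_mul, Real.norm_eq_abs, Real.norm_of_nonneg (hφ0 x)]
      gcongr
      exact hM x
    have e3 := (abs_le.1 (h.bmp_af hN hs0 hs1 ht (htT.trans hTT) hφm hφi hφ0
      (fun x hx => (hsupp x hx).le))).2
    have e4 := (abs_le.1 (h.bmp_af hN hs0 hs1 hT hTT hφm hφi hφ0
      (fun x hx => (hsupp x hx).le.trans (by gcongr)))).2
    have e5 : lam * (∫ x in CB N R, u x * φ x) ≤ |lam| * (M * ∫ x, φ x) := by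
      refine (le_abs_self _).trans ?_
      rw [abs_mul]; gcongr
    have e6 := mul_le_mul_of_nonneg_left e3 hθ.le
    have e7 := mul_le_mul_of_nonneg_left e4 hD0
    rw [integral_const_mul] at key
    have hz : ∫ x, φ x = 0 := by
      by_contra hne
      have hpos : 0 < ∫ x, φ x := lt_of_le_of_ne hI0 (Ne.symm hne)
      have := mul_lt_mul_of_pos_right hlt hpos
      nlinarith
    rw [integral_eq_zero_iff_of_nonneg hφ0 hφi] at hz
    filter_upwards [hz] with x hx
    have h1 : w x ≤ φ x := le_max_left _ _
    rw [hx, hwb] at h1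
    have h2 : u x - b x ≤ 0 := h1
    rw [hB1] at h2
    linarith
  · intro z _
    exact mul_nonneg pos_mono_mul (Kz_nonneg _ _ _)
  · have m1 : MeasurableSet {z : Euc N × Euc N | φ z.1 ≠ 0} :=
      (hφm.1.comp measurable_fst) (measurableSet_singleton (0 : ℝ)).compl
    have m2 := measurableSet_le (measurable_snd (α := Euc N) (β := Euc N)).norm (measurable_const (a := R))
    have m3 : MeasurableSet {z : Euc N × Euc N | u z.2 ≤ A - J} :=
      measurableSet_le (hu.1.1.comp measurable_snd) measurable_const
    have m4 := measurableSet_lt ((measurable_snd (α := Euc N) (β := Euc N)).sub_const x0).norm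
      (measurable_const (a := t))
    exact m1.inter (m2.inter (m4.inter m3))
  · intro z hz; exact Or.inr hz.2.1
  · rintro ⟨x, y⟩ ⟨hx, hy, hyt, huy⟩
    simp only at hx hy hyt huy ⊢
    have hwy : w y ≤ - (J / 2) := by
      rw [hwb]; have := hB2 y; linarith
    have hφy : φ y = 0 := max_eq_right (by linarith)
    have hwx : 0 < w x := by
      by_contra hcon
      exact hx (max_eq_right (by linarith))
    have hne : x - y ≠ 0 := by
      intro h0; rw [sub_eq_zero] at h0; rw [h0] at hx; exact hx hφy
    have hd : ‖x - y‖ ≤ 3 * t := by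
      have h1 := hsuppn x hx
      have h2 : x - y = (x - x0) - (y - x0) := by abel
      rw [h2]
      exact (norm_sub_le _ _).trans (by linarith)
    have h1 := le_Kz_of_le (N := N) hs0 hne hd
    rw [hφy, sub_zero]
    have h3 := hφ0 x
    have h4 : J / 2 ≤ w x - w y := by linarith
    calc κ * φ x = (J / 2) * φ x * ((3 * t) ^ ((N : ℝ) + 2 * s))⁻¹ := by rw [hκ]; ring
        _ ≤ (w x - w y) * φ x * Kz N s (x - y) := by
          have h5 : 0 ≤ w x - w y := by linarith
          gcongr
  · intro x hx
    have hx' : φ x ≠ 0 := right_ne_zero_of_mul hx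
    refine hG.trans (measure_mono ?_)
    intro y hy
    exact ⟨hx', hy⟩

/-- essential upper bound near a point -/
def UB (u : Euc N → ℝ) (x0 : Euc N) (A : ℝ) : Prop :=
  ∃ ρ, 0 < ρ ∧ ∀ᵐ x : Euc N, x ∈ Metric.ball x0 ρ → u x ≤ A

lemma UB.congr {u v : Euc N → ℝ} (h : u =ᵐ[volume] v) {x0 : Euc N} {A : ℝ} (hu : UB u x0 A) :
    UB v x0 A := by
  obtain ⟨ρ, h1, h2⟩ := hu
  refine ⟨ρ, h1, ?_⟩
  filter_upwards [h, h2] with x hx h2 hb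
  rw [← hx]; exact h2 hb

lemma half_pt (hN : 2 ≤ N) (hs0 : 0 < s) (hs1 : s < 1) (hR : 0 < R) : ∃ κ : ℝ, 0 < κ ∧
    ∀ (u : Euc N → ℝ) (_ : WS N s R lam u) (x0 : Euc N) (_ : ‖x0‖ ≤ R) (M A J ρ : ℝ)
      (_ : ∀ x, |u x| ≤ M) (_ : 0 < ρ) (_ : ∀ x ∈ Metric.ball x0 ρ, u x ≤ A) (_ : 0 < J)
      (_ : ∀ t0 > 0, ∃ t, 0 < t ∧ t < t0 ∧ volume (CB N R ∩ Metric.ball x0 t) ≤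
        2 * volume {y | ‖y‖ ≤ R ∧ ‖y - x0‖ < t ∧ u y ≤ A - J}), UB u x0 (A - κ * J) := by
  have hcw := cw_pos (N := N)
  have hCb := Cb_nonneg (N := N) (s := s)
  set c1 : ℝ := cw N / (4 * 2 ^ N * 3 ^ ((N : ℝ) + 2 * s)) with hc1
  have hc1p : 0 < c1 := by positivity
  set κ1 := min (1 / 2) (c1 / (2 * (Cb N s + 1))) with hκ1
  have hκ1p : 0 < κ1 := lt_min (by norm_num) (by positivity)
  have hκ1C : κ1 * Cb N s ≤ c1 / 2 := by
    calc κ1 * Cb N s ≤ (c1 / (2 * (Cb N s + 1))) * (Cb N s + 1) := by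
          gcongr
          · exact min_le_right _ _
          · linarith
      _ = c1 / 2 := by field_simp
  refine ⟨κ1 / 2, by positivity, ?_⟩
  intro u hu x0 hx0 M A J ρ hM hρ hA hJ hdens
  obtain ⟨q, T0, h⟩ := exists_adm hR hx0
  set T := min T0 (ρ / 2) with hT
  have hTp : 0 < T := lt_min h.pos (by positivity)
  have hTT : T ≤ T0 := min_le_left _ _
  have hTρ : 2 * T ≤ ρ := by have := min_le_right T0 (ρ / 2); linarith
  obtain ⟨t0, ht0, hsm⟩ : ∃ t0 > 0, ∀ t, 0 < t → t < t0 → t ≤ T ∧ t ≤ R ∧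
      |lam| * M + (M + |A| + J) * (Cb N s * T ^ (-(2 * s))) < (c1 * J / 2) * t ^ (-(2 * s)) := by
    have hti : Tendsto (fun t : ℝ => (c1 * J / 2) * t ^ (-(2 * s))) (𝓝[>] 0) atTop :=
      (tendsto_rpow_neg_nhdsGT_zero (by linarith)).const_mul_atTop (by positivity)
    have h1 := (Ioc_mem_nhdsGT hTp)
    have h2 := (Ioc_mem_nhdsGT hR)
    have h3 := hti.eventually_gt_atTop (|lam| * M + (M + |A| + J) * (Cb N s * T ^ (-(2 * s))))
    obtain ⟨t0, ht0, hsub⟩ := mem_nhdsGT_iff_exists_Ioo_subset.1 (inter_mem (inter_mem h1 h2) h3)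
    refine ⟨t0, ht0, fun t a b => ?_⟩
    have := hsub ⟨a, b⟩
    exact ⟨this.1.1.2, this.1.2.2, this.2⟩
  obtain ⟨t, ht, htt, hvol⟩ := hdens t0 ht0
  obtain ⟨htT, htR, hlt⟩ := hsm t ht htt
  have hκ1h : κ1 ≤ 1 / 2 := min_le_left _ _
  have hg : ENNReal.ofReal (1 / 2 * ((t / 2) ^ N * cw N)) ≤
      volume {y | ‖y‖ ≤ R ∧ ‖y - x0‖ < t ∧ u y ≤ A - J} := by
    have h1 := (vol_lower (N := N) hR hx0 ht htR).trans hvol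
    rw [show (t / 2) ^ N * cw N = 2 * (1 / 2 * ((t / 2) ^ N * cw N)) by ring,
      ENNReal.ofReal_mul (by norm_num), ENNReal.ofReal_ofNat] at h1
    exact (ENNReal.mul_le_mul_iff_right (by norm_num) (by norm_num)).1 h1
  have hfin := half_core hN hs0 hs1 h hu hM hA hTp hTT hTρ ht htT (J := J) (θ := κ1 * J)
    (by positivity) (by nlinarith) (g := 1 / 2 * ((t / 2) ^ N * cw N)) (by positivity) hg ?_
  · set b : Euc N → ℝ := fun x => A - κ1 * J * bmp q t x + (M + |A| + J) * (1 - bmp q T x) with hb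
    have hbc : Continuous b := by
      have := h.bmp_cont t
      have := h.bmp_cont T
      fun_prop
    have hb0 : b x0 < A - κ1 / 2 * J := by
      have e : ∀ r, bmp q r x0 = 1 := by intro r; simp [bmp, h.zero, Hf]
      simp only [hb, e]
      have : 0 < κ1 * J := by positivity
      linarith
    obtain ⟨r, hr, hball⟩ := Metric.eventually_nhds_iff_ball.1
      (hbc.continuousAt.eventually_lt_const hb0)
    refine ⟨r, hr, ?_⟩
    filter_upwards [hfin] with x hx hxb
    exact hx.trans (hball x hxb).le
  · have e1 : 1 / 2 * ((t / 2) ^ N * cw N) * (J / 2 * ((3 * t) ^ ((N : ℝ) + 2 * s))⁻¹) =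
        c1 * J * t ^ (-(2 * s)) := by
      rw [Real.mul_rpow (by norm_num) ht.le, Real.rpow_add ht, Real.rpow_natCast, Real.rpow_neg ht.le,
        hc1, div_pow]
      have : t ^ (2 * s) ≠ 0 := (Real.rpow_pos_of_pos ht _).ne'
      field_simp
      norm_num
    rw [e1]
    have e2 : κ1 * J * (Cb N s * t ^ (-(2 * s))) ≤ (c1 * J / 2) * t ^ (-(2 * s)) := by
      have : 0 < t ^ (-(2 * s)) := Real.rpow_pos_of_pos ht _
      calc κ1 * J * (Cb N s * t ^ (-(2 * s))) = κ1 * Cb N s * (J * t ^ (-(2 * s))) := by ring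
        _ ≤ c1 / 2 * (J * t ^ (-(2 * s))) := by gcongr
        _ = _ := by ring
    linarith

end FracNeumann

namespace FracNeumann

variable {N : ℕ} {s R lam : ℝ}

lemma half_ae (hN : 2 ≤ N) (hs0 : 0 < s) (hs1 : s < 1) (hR : 0 < R) : ∃ κ : ℝ, 0 < κ ∧
    ∀ (u : Euc N → ℝ) (_ : WS N s R lam u) (x0 : Euc N) (_ : ‖x0‖ ≤ R) (A J : ℝ)
      (_ : UB u x0 A) (_ : 0 < J)
      (_ : ∀ t0 > 0, ∃ t, 0 < t ∧ t < t0 ∧ volume (CB N R ∩ Metric.ball x0 t) ≤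
        2 * volume {y | ‖y‖ ≤ R ∧ ‖y - x0‖ < t ∧ u y ≤ A - J}), UB u x0 (A - κ * J) := by
  obtain ⟨κ, hκ, H⟩ := half_pt (N := N) (s := s) (R := R) (lam := lam) hN hs0 hs1 hR
  refine ⟨κ, hκ, fun u hu x0 hx0 A J hUB hJ hd => ?_⟩
  obtain ⟨M, hM0, hM⟩ := hu.bdd_all hN hs0 hR
  obtain ⟨ρ, hρ, hA⟩ := hUB
  classical
  set P : Euc N → Prop := fun x => |u x| ≤ M ∧ (x ∈ Metric.ball x0 ρ → u x ≤ A) with hP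
  have hPm : MeasurableSet {x | P x} := by
    have m1 : MeasurableSet {x | |u x| ≤ M} := measurableSet_le hu.1.1.abs measurable_const
    have m2 : MeasurableSet {x | u x ≤ A} := measurableSet_le hu.1.1 measurable_const
    have m3 : MeasurableSet (Metric.ball x0 ρ) := Metric.isOpen_ball.measurableSet
    have e : {x | P x} = {x | |u x| ≤ M} ∩ ((Metric.ball x0 ρ)ᶜ ∪ {x | u x ≤ A}) := by
      ext x
      show (|u x| ≤ M ∧ (x ∈ Metric.ball x0 ρ → u x ≤ A)) ↔
        |u x| ≤ M ∧ (x ∉ Metric.ball x0 ρ ∨ u x ≤ A)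
      rw [imp_iff_not_or]
    rw [e]; exact m1.inter (m3.compl.union m2)
  set v : Euc N → ℝ := fun x => if P x then u x else -|A| with hv
  have hvm : Measurable v := Measurable.ite hPm hu.1.1 measurable_const
  have huv : u =ᵐ[volume] v := by
    filter_upwards [hM, hA] with x h1 h2
    have : P x := ⟨h1, h2⟩
    simp [hv, this]
  have hvW : WS N s R lam v := hu.congr hvm huv
  refine UB.congr huv.symm (H v hvW x0 hx0 (max M |A|) A J ρ ?_ hρ ?_ hJ ?_)
  · intro x
    simp only [hv]
    split_ifs with h
    · exact h.1.trans (le_max_left _ _)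
    · rw [abs_neg, abs_abs]; exact le_max_right _ _
  · intro x hx
    simp only [hv]
    split_ifs with h
    · exact h.2 hx
    · exact neg_abs_le A
  · intro t0 ht0
    obtain ⟨t, h1, h2, h3⟩ := hd t0 ht0
    refine ⟨t, h1, h2, h3.trans_eq ?_⟩
    congr 1
    apply measure_congr
    filter_upwards [huv] with y hy
    show (‖y‖ ≤ R ∧ ‖y - x0‖ < t ∧ u y ≤ A - J) = (‖y‖ ≤ R ∧ ‖y - x0‖ < t ∧ v y ≤ A - J)
    rw [hy]

lemma UB.mono {u : Euc N → ℝ} {x0 : Euc N} {A B : ℝ} (h : UB u x0 A) (hAB : A ≤ B) : UB u x0 B := by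
  obtain ⟨ρ, h1, h2⟩ := h
  exact ⟨ρ, h1, h2.mono fun x hx hb => (hx hb).trans hAB⟩

lemma exists_of_ae_ball {x0 : Euc N} {ρ : ℝ} (hρ : 0 < ρ) {P : Euc N → Prop}
    (h : ∀ᵐ x : Euc N, P x) : ∃ x ∈ Metric.ball x0 ρ, P x := by
  by_contra hcon
  push Not at hcon
  have h1 : Metric.ball x0 ρ ⊆ {x | ¬ P x} := fun x hx => hcon x hx
  have h2 := measure_mono_null h1 (ae_iff.1 h)
  exact (Metric.measure_ball_pos volume x0 hρ).ne' h2

lemma osc_zero (hN : 2 ≤ N) (hs0 : 0 < s) (hs1 : s < 1) (hR : 0 < R) {u : Euc N → ℝ}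
    (hu : WS N s R lam u) {x0 : Euc N} (hx0 : ‖x0‖ ≤ R) :
    ∃ c : ℝ, ∀ ε > 0, UB u x0 (c + ε) ∧ UB (-u) x0 (-c + ε) := by
  obtain ⟨κ, hκ, H⟩ := half_ae (N := N) (s := s) (R := R) (lam := lam) hN hs0 hs1 hR
  -- bounded below and nonempty
  have hne : ∀ u : Euc N → ℝ, WS N s R lam u → {A | UB u x0 A}.Nonempty ∧ BddBelow {A | UB u x0 A} := by
    intro u hu
    obtain ⟨M, hM0, hM⟩ := hu.bdd_all hN hs0 hR
    refine ⟨⟨M, 1, one_pos, hM.mono fun x hx _ => (abs_le.1 hx).2⟩, -M, ?_⟩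
    rintro A ⟨ρ, hρ, hA⟩
    obtain ⟨x, hx, h1, h2⟩ := exists_of_ae_ball hρ (hA.and hM)
    exact (abs_le.1 h2).1.trans (h1 hx)
  have hap : ∀ u : Euc N → ℝ, WS N s R lam u → ∀ ε > 0, UB u x0 (sInf {A | UB u x0 A} + ε) := by
    intro u hu ε hε
    obtain ⟨A, hA, hlt⟩ := Real.lt_sInf_add_pos (hne u hu).1 hε
    exact UB.mono hA hlt.le
  -- main step
  have step : ∀ u : Euc N → ℝ, WS N s R lam u → ∀ J > 0, ¬ (∀ t0 > 0, ∃ t, 0 < t ∧ t < t0 ∧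
      volume (CB N R ∩ Metric.ball x0 t) ≤
        2 * volume {y | ‖y‖ ≤ R ∧ ‖y - x0‖ < t ∧ u y ≤ sInf {A | UB u x0 A} - J}) := by
    intro u hu J hJ hd
    set I := sInf {A | UB u x0 A} with hI
    set ε := κ * J / 2 with hε
    have hε0 : 0 < ε := by positivity
    have h1 := H u hu x0 hx0 (I + ε) J (hap u hu ε hε0) hJ ?_
    · have h2 := csInf_le (hne u hu).2 h1
      rw [← hI] at h2
      linarith
    · intro t0 ht0
      obtain ⟨t, a, b, c⟩ := hd t0 ht0
      refine ⟨t, a, b, c.trans ?_⟩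
      gcongr
      linarith
  have hun := hu.neg
  set I := sInf {A | UB u x0 A} with hI
  set I' := sInf {A | UB (-u) x0 A} with hI'
  have hle : I + I' ≤ 0 := by
    by_contra hcon
    push Not at hcon
    set J := (I + I') / 2 with hJ
    have hJ0 : 0 < J := by positivity
    have s1 := step u hu J hJ0
    have s2 := step (-u) hun J hJ0
    apply s2
    push Not at s1
    obtain ⟨t1, ht1, hs1'⟩ := s1
    intro t0 ht0
    refine ⟨min t0 t1 / 2, by positivity, ?_, ?_⟩
    · have := min_le_left t0 t1
      have : 0 < min t0 t1 := lt_min ht0 ht1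
      linarith
    · have hm : 0 < min t0 t1 := lt_min ht0 ht1
      set t := min t0 t1 / 2 with ht
      have htt1 : t < t1 := by have := min_le_right t0 t1; linarith
      have h3 := hs1' t (by positivity) htt1
      set G1 := {y : Euc N | ‖y‖ ≤ R ∧ ‖y - x0‖ < t ∧ u y ≤ I - J}
      set G2 := {y : Euc N | ‖y‖ ≤ R ∧ ‖y - x0‖ < t ∧ (-u) y ≤ I' - J}
      have hsub : CB N R ∩ Metric.ball x0 t ⊆ G1 ∪ G2 := by
        rintro y ⟨hy1, hy2⟩
        have e1 : ‖y‖ ≤ R := by simpa using hy1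
        have e2 : ‖y - x0‖ < t := by rwa [Metric.mem_ball, dist_eq_norm] at hy2
        rcases le_total (u y) (I - J) with h | h
        · exact Or.inl ⟨e1, e2, h⟩
        · refine Or.inr ⟨e1, e2, ?_⟩
          show - u y ≤ I' - J
          linarith
      have h4 := (measure_mono hsub).trans (measure_union_le (μ := volume) G1 G2)
      have hfin : volume (CB N R ∩ Metric.ball x0 t) ≠ ⊤ :=
        ((measure_mono inter_subset_right).trans_lt measure_ball_lt_top).ne
      by_contra hcon2
      push Not at hcon2
      have h5 : 2 * volume G1 + 2 * volume G2 <
          volume (CB N R ∩ Metric.ball x0 t) + volume (CB N R ∩ Metric.ball x0 t) :=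
        ENNReal.add_lt_add h3 hcon2
      rw [← mul_add, ← two_mul] at h5
      have h6 : 2 * volume (CB N R ∩ Metric.ball x0 t) ≤ 2 * (volume G1 + volume G2) := by gcongr
      exact absurd h6 (not_le.2 h5)
  refine ⟨I, fun ε hε => ⟨hap u hu ε hε, (hap (-u) hun ε hε).mono ?_⟩⟩
  linarith

lemma osc_zero_out (hs0 : 0 < s) (hR : 0 < R) {u : Euc N → ℝ}
    (hu : WS N s R lam u) {x0 : Euc N} (hx0 : R < ‖x0‖) :
    ∃ c : ℝ, ∀ ε > 0, UB u x0 (c + ε) ∧ UB (-u) x0 (-c + ε) := by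
  refine ⟨PP N s R u x0, fun ε hε => ?_⟩
  have hc := PP_cont hs0 hR hu.1 hx0
  have h1 : ∀ᶠ x in 𝓝 x0, R < ‖x‖ := (continuous_norm.continuousAt).eventually_const_lt hx0
  have h2 := hc.eventually_lt_const (show PP N s R u x0 < PP N s R u x0 + ε by linarith)
  have h3 := hc.eventually_const_lt (show PP N s R u x0 - ε < PP N s R u x0 by linarith)
  obtain ⟨r, hr, hb⟩ := Metric.eventually_nhds_iff_ball.1 (h1.and (h2.and h3))
  refine ⟨⟨r, hr, ?_⟩, ⟨r, hr, ?_⟩⟩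
  · filter_upwards [hu.eq_PP hs0 hR] with x hx hxb
    obtain ⟨a, b, c⟩ := hb x hxb
    rw [hx a]; exact b.le
  · filter_upwards [hu.eq_PP hs0 hR] with x hx hxb
    obtain ⟨a, b, c⟩ := hb x hxb
    show - u x ≤ _
    rw [hx a]; linarith

lemma WS.exists_cont (hN : 2 ≤ N) (hs0 : 0 < s) (hs1 : s < 1) (hR : 0 < R) {u : Euc N → ℝ}
    (hu : WS N s R lam u) : ∃ v : Euc N → ℝ, Continuous v ∧ u =ᵐ[volume] v := by
  have h0 : ∀ x, ∃ c : ℝ, ∀ ε > 0, ∃ ρ > 0, ∀ᵐ y : Euc N, y ∈ Metric.ball x ρ → |u y - c| ≤ ε := by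
    intro x
    have : ∃ c : ℝ, ∀ ε > 0, UB u x (c + ε) ∧ UB (-u) x (-c + ε) := by
      rcases le_or_gt ‖x‖ R with h | h
      · exact osc_zero hN hs0 hs1 hR hu h
      · exact osc_zero_out hs0 hR hu h
    obtain ⟨c, hc⟩ := this
    refine ⟨c, fun ε hε => ?_⟩
    obtain ⟨⟨r1, h1, h1'⟩, ⟨r2, h2, h2'⟩⟩ := hc ε hε
    refine ⟨min r1 r2, lt_min h1 h2, ?_⟩
    filter_upwards [h1', h2'] with y a b hy
    have a' := a (Metric.ball_subset_ball (min_le_left _ _) hy)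
    have b' : - u y ≤ _ := b (Metric.ball_subset_ball (min_le_right _ _) hy)
    rw [abs_le]; constructor <;> linarith
  choose c hc using h0
  have key : ∀ x, ∀ ε > 0, ∃ ρ > 0, (∀ᵐ y : Euc N, y ∈ Metric.ball x ρ → |u y - c x| ≤ ε) ∧
      ∀ y ∈ Metric.ball x ρ, |c y - c x| ≤ 2 * ε := by
    intro x ε hε
    obtain ⟨ρ, hρ, h1⟩ := hc x ε hε
    refine ⟨ρ, hρ, h1, fun y hy => ?_⟩
    obtain ⟨r, hr, h2⟩ := hc y ε hε
    obtain ⟨δ, hδ, hsub⟩ := Metric.isOpen_iff.1 (Metric.isOpen_ball.inter Metric.isOpen_ball)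
      y ⟨hy, Metric.mem_ball_self hr⟩
    obtain ⟨z, hz, a, b⟩ := exists_of_ae_ball hδ (h1.and h2)
    have a' := abs_le.1 (a (hsub hz).1)
    have b' := abs_le.1 (b (hsub hz).2)
    rw [abs_le]; constructor <;> linarith
  refine ⟨c, ?_, ?_⟩
  · rw [Metric.continuous_iff]
    intro x ε hε
    obtain ⟨ρ, hρ, _, h2⟩ := key x (ε / 3) (by positivity)
    refine ⟨ρ, hρ, fun y hy => ?_⟩
    rw [Real.dist_eq]
    have := h2 y hy
    linarith
  · have hn : ∀ n : ℕ, ∀ᵐ y : Euc N, |u y - c y| ≤ 1 / ((n : ℝ) + 1) := by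
      intro n
      rw [ae_iff]
      apply measure_null_of_locally_null
      intro x _
      obtain ⟨ρ, hρ, h1, h2⟩ := key x (1 / ((n : ℝ) + 1) / 3) (by positivity)
      refine ⟨_, inter_mem_nhdsWithin _ (Metric.ball_mem_nhds x hρ), ?_⟩
      refine measure_mono_null ?_ (ae_iff.1 h1)
      rintro y ⟨hy1, hy2⟩
      show ¬ (y ∈ Metric.ball x ρ → |u y - c x| ≤ 1 / ((n : ℝ) + 1) / 3)
      intro hcon
      apply (show ¬ (|u y - c y| ≤ 1 / ((n : ℝ) + 1)) from hy1)
      have a := abs_le.1 (hcon hy2)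
      have b := abs_le.1 (h2 y hy2)
      rw [abs_le]; constructor <;> linarith
    filter_upwards [ae_all_iff.2 hn] with y hy
    have : |u y - c y| ≤ 0 := ge_of_tendsto' tendsto_one_div_add_atTop_nhds_zero_nat hy
    have := abs_nonpos_iff.1 this
    linarith

end FracNeumann

namespace FracNeumann

variable {N : ℕ} {s R lam : ℝ}

/-- The reflection across the hyperplane orthogonal to `e`. -/
def sg (e : Euc N) : Euc N ≃ₗᵢ[ℝ] Euc N := (Submodule.span ℝ {e})ᗮ.reflection

lemma sg_apply {e : Euc N} (he : ‖e‖ = 1) (x : Euc N) :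
    sg e x = x - (2 * (inner ℝ x e : ℝ)) • e := by
  rw [sg, Submodule.reflection_orthogonal_apply, Submodule.reflection_singleton_apply, he,
    real_inner_comm]
  simp
  rw [two_smul, two_mul, add_smul]

lemma sg_sg (e x : Euc N) : sg e (sg e x) = x := Submodule.reflection_reflection _ _

lemma sg_inner {e : Euc N} (he : ‖e‖ = 1) (x : Euc N) :
    (inner ℝ (sg e x) e : ℝ) = - inner ℝ x e := by
  rw [sg_apply he, inner_sub_left, real_inner_smul_left, real_inner_self_eq_norm_sq, he]; ring

lemma sg_dist {e : Euc N} (he : ‖e‖ = 1) (x y : Euc N) :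
    ‖x - sg e y‖ ^ 2 = ‖x - y‖ ^ 2 + 4 * (inner ℝ x e * inner ℝ y e) := by
  rw [sg_apply he, show x - (y - (2 * (inner ℝ y e : ℝ)) • e) = (x - y) + (2 * (inner ℝ y e : ℝ)) • e by abel,
    norm_add_sq_real, norm_smul, he, inner_smul_right, inner_sub_left, Real.norm_eq_abs, mul_one, sq_abs]
  ring

lemma sg_fix {e : Euc N} (he : ‖e‖ = 1) {x : Euc N} (h : (inner ℝ x e : ℝ) = 0) : sg e x = x := by
  rw [sg_apply he, h]; simp

lemma sg_swap {e : Euc N} (x y : Euc N) : ‖x - sg e y‖ = ‖sg e x - y‖ := by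
  rw [← (sg e).norm_map (x - sg e y), map_sub, sg_sg]

section
variable (g : Euc N ≃ₗᵢ[ℝ] Euc N)

lemma mp_snd : MeasurePreserving (fun q : Euc N × Euc N => (q.1, g q.2)) :=
  (MeasurePreserving.id volume).prod g.measurePreserving

lemma me_snd : MeasurableEmbedding (fun q : Euc N × Euc N => (q.1, g q.2)) :=
  (MeasurableEquiv.prodCongr (MeasurableEquiv.refl _) g.toHomeomorph.toMeasurableEquiv).measurableEmbedding

lemma pre_rg_snd : (fun q : Euc N × Euc N => (q.1, g q.2)) ⁻¹' (rg N R) = rg N R := by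
  ext q; simp [rg]

lemma int_snd (F : Euc N × Euc N → ℝ) : ∫ q in rg N R, F (q.1, g q.2) = ∫ q in rg N R, F q := by
  have := (mp_snd g).setIntegral_preimage_emb (me_snd g) F (rg N R)
  rwa [pre_rg_snd] at this

lemma integrable_snd {F : Euc N × Euc N → ℝ} (h : IntegrableOn F (rg N R)) :
    IntegrableOn (fun q => F (q.1, g q.2)) (rg N R) := by
  have := ((mp_snd g).integrableOn_comp_preimage (me_snd g) (f := F) (s := rg N R)).2 h
  rwa [pre_rg_snd] at this

/-- symmetrised integrand -/
def symF (N : ℕ) (s : ℝ) (g : Euc N ≃ₗᵢ[ℝ] Euc N) (u v : Euc N → ℝ) (q : Euc N × Euc N) : ℝ :=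
  (u q.1 - u q.2) * (v q.1 - v q.2) * Kz N s (q.1 - q.2) +
    (u q.1 + u q.2) * (v q.1 + v q.2) * Kz N s (q.1 - g q.2)

lemma af_sym {u v : Euc N → ℝ} (hu : Mem N s R u) (hv : Mem N s R v)
    (hu1 : ∀ x, u (g x) = - u x) (hv1 : ∀ x, v (g x) = - v x) :
    IntegrableOn (symF N s g u v) (rg N R) ∧ ∫ q in rg N R, symF N s g u v q = 2 * af N s R u v := by
  have h1 := hu.integrable_af hv
  have h2 := integrable_snd g h1
  have e2 := int_snd (R := R) g
    (fun q : Euc N × Euc N => (u q.1 - u q.2) * (v q.1 - v q.2) * Kz N s (q.1 - q.2))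
  simp only [hu1, hv1, sub_neg_eq_add] at h2 e2
  refine ⟨h1.add h2, ?_⟩
  unfold symF
  rw [integral_add h1 h2, e2]
  unfold af; ring

end

end FracNeumann

namespace FracNeumann

variable {N : ℕ} {s R lam : ℝ}

/-- the odd half positive part -/
def hp (e : Euc N) (v : Euc N → ℝ) (x : Euc N) : ℝ :=
  if 0 < (inner ℝ x e : ℝ) then max (v x) 0 else min (v x) 0

lemma Kz_refl_le (hs : 0 < s) {e : Euc N} (he : ‖e‖ = 1) {x y : Euc N} (hne : x ≠ y)
    (h : 0 ≤ (inner ℝ x e * inner ℝ y e : ℝ)) : Kz N s (x - sg e y) ≤ Kz N s (x - y) := by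
  refine Kz_anti hs (sub_ne_zero.2 hne) ?_
  refine le_of_sq_le_sq ?_ (norm_nonneg _)
  rw [sg_dist he]; linarith

lemma Kz_refl_lt (hs : 0 < s) {e : Euc N} (he : ‖e‖ = 1) {x y : Euc N} (hne : x ≠ y)
    (h : 0 < (inner ℝ x e * inner ℝ y e : ℝ)) : Kz N s (x - sg e y) < Kz N s (x - y) := by
  refine Kz_anti_lt hs (sub_ne_zero.2 hne) ?_
  refine lt_of_pow_lt_pow_left₀ 2 (norm_nonneg _) ?_
  rw [sg_dist he]; linarith

lemma Kz_refl_ge (hs : 0 < s) {e : Euc N} (he : ‖e‖ = 1) {x y : Euc N} (hne : x ≠ sg e y)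
    (h : (inner ℝ x e * inner ℝ y e : ℝ) ≤ 0) : Kz N s (x - y) ≤ Kz N s (x - sg e y) := by
  refine Kz_anti hs (sub_ne_zero.2 hne) ?_
  refine le_of_sq_le_sq ?_ (norm_nonneg _)
  rw [sg_dist he]; linarith

lemma odd_hyp {e : Euc N} (he : ‖e‖ = 1) {v : Euc N → ℝ} (hodd : ∀ x, v (sg e x) = - v x)
    {x : Euc N} (hx : (inner ℝ x e : ℝ) = 0) : v x = 0 := by
  have := hodd x; rw [sg_fix he hx] at this; linarith

lemma hp_odd {e : Euc N} (he : ‖e‖ = 1) {v : Euc N → ℝ} (hodd : ∀ x, v (sg e x) = - v x)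
    (x : Euc N) : hp e v (sg e x) = - hp e v x := by
  unfold hp
  rw [sg_inner he, hodd]
  rcases lt_trichotomy (inner ℝ x e : ℝ) 0 with h | h | h
  · rw [if_pos (by linarith), if_neg (by linarith)]
    rw [← neg_zero, max_neg_neg, neg_zero]
  · rw [odd_hyp he hodd h]; simp [h]
  · rw [if_neg (by linarith), if_pos (by linarith)]
    rw [← neg_zero, min_neg_neg, neg_zero]

lemma hp_meas {e : Euc N} {v : Euc N → ℝ} (hv : Measurable v) : Measurable (hp e v) := by
  unfold hp
  refine Measurable.ite ?_ (hv.max measurable_const) (hv.min measurable_const)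
  exact measurableSet_lt measurable_const (by fun_prop)

lemma hp_sq_le (e : Euc N) (v : Euc N → ℝ) (x : Euc N) : (hp e v x) ^ 2 ≤ (v x) ^ 2 := by
  unfold hp
  split_ifs
  · rcases le_total (v x) 0 with h | h
    · rw [max_eq_right h]; nlinarith
    · rw [max_eq_left h]
  · rcases le_total (v x) 0 with h | h
    · rw [min_eq_left h]
    · rw [min_eq_right h]; nlinarith

lemma hp_mem (hs : 0 < s) {e : Euc N} (he : ‖e‖ = 1) {v : Euc N → ℝ} (hv : Mem N s R v)
    (hodd : ∀ x, v (sg e x) = - v x) : Mem N s R (hp e v) := by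
  have hm := hp_meas (e := e) hv.1
  refine ⟨hm, ?_, ?_⟩
  · refine hv.2.1.mono' (hm.pow_const 2).aestronglyMeasurable (Eventually.of_forall fun x => ?_)
    rw [Real.norm_of_nonneg (sq_nonneg _)]
    exact hp_sq_le e v x
  · have h2 := integrable_snd (sg e) hv.2.2
    refine (hv.2.2.add h2).mono' ?_ (Eventually.of_forall fun q => ?_)
    · exact (((hm.comp measurable_fst).sub (hm.comp measurable_snd)).pow_const 2 |>.mul
        (measurable_Kz2 N s)).aestronglyMeasurable
    obtain ⟨x, y⟩ := q
    have k1 := Kz_nonneg N s (x - y)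
    have k2 := Kz_nonneg N s (x - sg e y)
    rw [Real.norm_of_nonneg (mul_nonneg (sq_nonneg _) k1)]
    simp only [Pi.add_apply, hodd, sub_neg_eq_add]
    have A : (hp e v x - hp e v y) ^ 2 ≤ (v x - v y) ^ 2 → (hp e v x - hp e v y) ^ 2 * Kz N s (x - y)
        ≤ (v x - v y) ^ 2 * Kz N s (x - y) + (v x + v y) ^ 2 * Kz N s (x - sg e y) := by
      intro h
      have := mul_le_mul_of_nonneg_right h k1
      have := mul_nonneg (sq_nonneg (v x + v y)) k2
      linarith
    have B : (inner ℝ x e * inner ℝ y e : ℝ) ≤ 0 → 0 ≤ v x * v y →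
      (hp e v x - hp e v y) ^ 2 ≤ (v x + v y) ^ 2 → (hp e v x - hp e v y) ^ 2 * Kz N s (x - y)
        ≤ (v x - v y) ^ 2 * Kz N s (x - y) + (v x + v y) ^ 2 * Kz N s (x - sg e y) := by
      intro h1 h2 h3
      by_cases hne : x = sg e y
      · have h4 : v x = - v y := by rw [hne, hodd]
        apply A
        nlinarith
      · have h4 := Kz_refl_ge hs he hne h1
        have h5 : (hp e v x - hp e v y) ^ 2 * Kz N s (x - y) ≤ (v x + v y) ^ 2 * Kz N s (x - sg e y) := by
          gcongr
        have := mul_nonneg (sq_nonneg (v x - v y)) k1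
        linarith
    have sq1 : ∀ a b : ℝ, |a| ≤ |b| → a ^ 2 ≤ b ^ 2 := fun a b h => sq_le_sq.2 h
    rcases lt_or_ge 0 (inner ℝ x e : ℝ) with hx | hx <;> rcases lt_or_ge 0 (inner ℝ y e : ℝ) with hy | hy
    · apply A
      apply sq1
      simp only [hp, if_pos hx, if_pos hy]
      exact abs_max_sub_max_le_abs _ _ _
    · have hpp : (inner ℝ x e * inner ℝ y e : ℝ) ≤ 0 := mul_nonpos_of_nonneg_of_nonpos hx.le hy
      simp only [hp, if_pos hx, if_neg hy.not_gt] at A B ⊢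
      rcases le_total (v x) 0 with h | h <;> rcases le_total (v y) 0 with h' | h' <;>
        simp only [h, h', max_eq_left, max_eq_right, min_eq_left, min_eq_right] at A B ⊢
      · exact B hpp (mul_nonneg_of_nonpos_of_nonpos h h') (by nlinarith)
      · exact A (by nlinarith)
      · exact A (by nlinarith)
      · exact B hpp (mul_nonneg h h') (by nlinarith)
    · have hpp : (inner ℝ x e * inner ℝ y e : ℝ) ≤ 0 := mul_nonpos_of_nonpos_of_nonneg hx hy.le
      simp only [hp, if_pos hy, if_neg hx.not_gt] at A B ⊢
      rcases le_total (v x) 0 with h | h <;> rcases le_total (v y) 0 with h' | h' <;>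
        simp only [h, h', max_eq_left, max_eq_right, min_eq_left, min_eq_right] at A B ⊢
      · exact B hpp (mul_nonneg_of_nonpos_of_nonpos h h') (by nlinarith)
      · exact A (by nlinarith)
      · exact A (by nlinarith)
      · exact B hpp (mul_nonneg h h') (by nlinarith)
    · apply A
      apply sq1
      simp only [hp, if_neg hx.not_gt, if_neg hy.not_gt]
      exact abs_min_sub_min_le_max _ _ _ _ |>.trans (by simp)

lemma hp_prod (e : Euc N) (v : Euc N → ℝ) (x : Euc N) : v x * hp e v x = hp e v x ^ 2 := by
  simp only [hp]
  split_ifs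
  · rcases le_total (v x) 0 with h | h
    · rw [max_eq_right h]; ring
    · rw [max_eq_left h]; ring
  · rcases le_total (v x) 0 with h | h
    · rw [min_eq_left h]; ring
    · rw [min_eq_right h]; ring

lemma hp_neg (hs : 0 < s) {e : Euc N} (he : ‖e‖ = 1) {v : Euc N → ℝ}
    (hodd : ∀ x, v (sg e x) = - v x) (q : Euc N × Euc N) :
    symF N s (sg e) (hp e v - v) (hp e v) q ≤ 0 := by
  revert q
  have hprod := hp_prod e v
  set φ := hp e v with hφ
  have hφo : ∀ x, φ (sg e x) = - φ x := hp_odd he hodd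
  have hψo : ∀ x, (φ - v) (sg e x) = - (φ - v) x := by
    intro x; simp only [Pi.sub_apply, hφo, hodd]; ring
  rintro ⟨x, y⟩
  set ψ := φ - v with hψ
  have z0 : ∀ x, ψ x * φ x = 0 := by
    intro x; simp only [hψ, Pi.sub_apply]; have := hprod x; nlinarith
  have e1 : symF N s (sg e) ψ φ (x, y) =
      (ψ x * φ y + ψ y * φ x) * (Kz N s (x - sg e y) - Kz N s (x - y)) := by
    unfold symF
    have a := z0 x
    have b := z0 y
    simp only
    linear_combination (Kz N s (x - sg e y) + Kz N s (x - y)) * a +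
      (Kz N s (x - sg e y) + Kz N s (x - y)) * b
  rw [e1]
  have sp : ∀ x, 0 < (inner ℝ x e : ℝ) → 0 ≤ φ x ∧ 0 ≤ ψ x := by
    intro x hx
    simp only [hψ, Pi.sub_apply, hφ, hp, if_pos hx]
    exact ⟨le_max_right _ _, sub_nonneg.2 (le_max_left _ _)⟩
  have sn : ∀ x, (inner ℝ x e : ℝ) < 0 → φ x ≤ 0 ∧ ψ x ≤ 0 := by
    intro x hx
    simp only [hψ, Pi.sub_apply, hφ, hp, if_neg hx.not_gt]
    exact ⟨min_le_right _ _, sub_nonpos.2 (min_le_left _ _)⟩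
  have s0 : ∀ x, (inner ℝ x e : ℝ) = 0 → φ x = 0 ∧ ψ x = 0 :=
    fun x hx => ⟨odd_hyp he hφo hx, odd_hyp he hψo hx⟩
  have P : 0 ≤ (inner ℝ x e * inner ℝ y e : ℝ) → 0 ≤ ψ x * φ y + ψ y * φ x →
      (ψ x * φ y + ψ y * φ x) * (Kz N s (x - sg e y) - Kz N s (x - y)) ≤ 0 := by
    intro h1 h2
    by_cases hxy : x = y
    · subst hxy; rw [z0]; simp
    · exact mul_nonpos_of_nonneg_of_nonpos h2 (sub_nonpos.2 (Kz_refl_le hs he hxy h1))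
  have Q : (inner ℝ x e * inner ℝ y e : ℝ) ≤ 0 → ψ x * φ y + ψ y * φ x ≤ 0 →
      (ψ x * φ y + ψ y * φ x) * (Kz N s (x - sg e y) - Kz N s (x - y)) ≤ 0 := by
    intro h1 h2
    by_cases hxy : x = sg e y
    · have : ψ x * φ y + ψ y * φ x = 0 := by
        rw [hxy, hψo, hφo]; have := z0 y; linarith
      rw [this]; simp
    · exact mul_nonpos_of_nonpos_of_nonneg h2 (sub_nonneg.2 (Kz_refl_ge hs he hxy h1))
  rcases lt_trichotomy (inner ℝ x e : ℝ) 0 with hx | hx | hx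
  · rcases lt_trichotomy (inner ℝ y e : ℝ) 0 with hy | hy | hy
    · obtain ⟨a, b⟩ := sn x hx
      obtain ⟨c, d⟩ := sn y hy
      exact P (by nlinarith) (by nlinarith)
    · obtain ⟨a, b⟩ := s0 y hy
      rw [a, b]; simp
    · obtain ⟨a, b⟩ := sn x hx
      obtain ⟨c, d⟩ := sp y hy
      exact Q (by nlinarith) (by nlinarith)
  · obtain ⟨a, b⟩ := s0 x hx
    rw [a, b]; simp
  · rcases lt_trichotomy (inner ℝ y e : ℝ) 0 with hy | hy | hy
    · obtain ⟨a, b⟩ := sp x hx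
      obtain ⟨c, d⟩ := sn y hy
      exact Q (by nlinarith) (by nlinarith)
    · obtain ⟨a, b⟩ := s0 y hy
      rw [a, b]; simp
    · obtain ⟨a, b⟩ := sp x hx
      obtain ⟨c, d⟩ := sp y hy
      exact P (by nlinarith) (by nlinarith)

lemma hp_key (hs : 0 < s) {e : Euc N} (he : ‖e‖ = 1) {v : Euc N → ℝ} (hv : WS N s R lam v)
    (hodd : ∀ x, v (sg e x) = - v x) (hm : MinH N s R lam) :
    ∀ᵐ q ∂(volume.restrict (rg N R)), symF N s (sg e) (hp e v - v) (hp e v) q = 0 := by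
  set φ := hp e v with hφ
  have hφm : Mem N s R φ := hp_mem hs he hv.1 hodd
  have hψm : Mem N s R (φ - v) := hφm.sub hv.1
  have hφo : ∀ x, φ (sg e x) = - φ x := hp_odd he hodd
  have hψo : ∀ x, (φ - v) (sg e x) = - (φ - v) x := by
    intro x; simp only [Pi.sub_apply, hφo, hodd]; ring
  obtain ⟨i1, i2⟩ := af_sym (sg e) hψm hφm hψo hφo
  have hintg : ∫ x in CB N R, φ x = 0 := by
    have h1 := setInt_comp (R := R) (sg e) φ
    simp only [hφo, integral_neg] at h1
    unfold CB
    linarith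
  have hprod : ∀ x, v x * φ x = φ x ^ 2 := hp_prod e v
  have haf : 0 ≤ af N s R (φ - v) φ := by
    rw [af_sub_left hφm hv.1 hφm, hv.2.2 φ hφm]
    simp only [hprod]
    have := hm φ hφm hintg
    linarith
  have hneg : ∀ q, symF N s (sg e) (φ - v) φ q ≤ 0 := hp_neg hs he hodd
  have hz : ∫ q in rg N R, - symF N s (sg e) (φ - v) φ q = 0 := by
    apply le_antisymm
    · rw [integral_neg, i2]; linarith
    · exact integral_nonneg fun q => neg_nonneg.2 (hneg q)
  rw [integral_eq_zero_iff_of_nonneg (fun q => neg_nonneg.2 (hneg q)) i1.neg] at hz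
  filter_upwards [hz] with q hq
  have : - symF N s (sg e) (φ - v) φ q = 0 := hq
  linarith

lemma hp_pair (hs : 0 < s) {e : Euc N} (he : ‖e‖ = 1) {v : Euc N → ℝ} (hv : WS N s R lam v)
    (hc : Continuous v) (hodd : ∀ x, v (sg e x) = - v x) (hm : MinH N s R lam) {a b : Euc N}
    (ha : 0 < (inner ℝ a e : ℝ)) (hb : 0 < (inner ℝ b e : ℝ)) (hva : v a < 0) (hvb : 0 < v b)
    (hab : ‖a‖ < R ∨ ‖b‖ < R) : False := by
  have hk := hp_key hs he hv hodd hm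
  rw [ae_restrict_iff' (measurableSet_rg N R)] at hk
  set U : Set (Euc N × Euc N) := {q | (v q.1 < 0 ∧ 0 < v q.2) ∧ (0 < (inner ℝ q.1 e : ℝ) ∧
    0 < (inner ℝ q.2 e : ℝ)) ∧ (‖q.1‖ < R ∨ ‖q.2‖ < R)} with hU
  have hUo : IsOpen U := by
    refine IsOpen.inter (IsOpen.inter ?_ ?_) (IsOpen.inter (IsOpen.inter ?_ ?_) (IsOpen.union ?_ ?_))
    · exact isOpen_lt (hc.comp continuous_fst) continuous_const
    · exact isOpen_lt continuous_const (hc.comp continuous_snd)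
    · exact isOpen_lt continuous_const
        ((continuous_fst.inner continuous_const : Continuous fun q : Euc N × Euc N => (inner ℝ q.1 e : ℝ)))
    · exact isOpen_lt continuous_const
        ((continuous_snd.inner continuous_const : Continuous fun q : Euc N × Euc N => (inner ℝ q.2 e : ℝ)))
    · exact isOpen_lt continuous_fst.norm continuous_const
    · exact isOpen_lt continuous_snd.norm continuous_const
  have hpos : 0 < volume U := hUo.measure_pos volume ⟨(a, b), ⟨hva, hvb⟩, ⟨ha, hb⟩, hab⟩
  apply hpos.ne'
  refine measure_mono_null ?_ hk
  rintro ⟨x, y⟩ ⟨⟨h1, h2⟩, ⟨h3, h4⟩, h5⟩ hcon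
  simp only at h1 h2 h3 h4 h5
  have h6 := hcon (h5.imp le_of_lt le_of_lt)
  have hne : x ≠ y := by rintro rfl; linarith
  have hlt := Kz_refl_lt hs he hne (mul_pos h3 h4)
  have p1 : hp e v x = 0 := by simp only [hp, if_pos h3, max_eq_right h1.le]
  have p2 : hp e v y = v y := by simp only [hp, if_pos h4, max_eq_left h2.le]
  simp only [symF, Pi.sub_apply, p1, p2] at h6
  have h7 : (-v x * v y) * (Kz N s (x - sg e y) - Kz N s (x - y)) = 0 := by linear_combination h6
  have h8 : 0 < -v x * v y := mul_pos (by linarith) h2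
  have h9 := (mul_eq_zero.1 h7).resolve_left h8.ne'
  linarith

lemma zero_of_ball (hs : 0 < s) (hR : 0 < R) {v : Euc N → ℝ} (hv : WS N s R lam v)
    (hc : Continuous v) (h : ∀ x, ‖x‖ < R → v x = 0) : v = 0 := by
  have h1 : v =ᵐ[volume.restrict (CB N R)] 0 := by
    rw [← restr_eq hR]
    refine (ae_restrict_iff' Metric.isOpen_ball.measurableSet).2 (Eventually.of_forall fun x hx => ?_)
    exact h x (by simpa using hx)
  exact (hc.ae_eq_iff_eq volume continuous_zero).1 (hv.ae_zero hs hR h1)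

lemma zero_of_half (hs : 0 < s) (hR : 0 < R) {e : Euc N} (he : ‖e‖ = 1) {v : Euc N → ℝ}
    (hv : WS N s R lam v) (hc : Continuous v) (hodd : ∀ x, v (sg e x) = - v x)
    (h : ∀ x, ‖x‖ < R → 0 < (inner ℝ x e : ℝ) → v x = 0) : v = 0 := by
  apply zero_of_ball hs hR hv hc
  intro x hx
  rcases lt_trichotomy (inner ℝ x e : ℝ) 0 with h1 | h1 | h1
  · have := h (sg e x) (by rwa [LinearIsometryEquiv.norm_map]) (by rw [sg_inner he]; linarith)
    rw [hodd] at this; linarith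
  · exact odd_hyp he hodd h1
  · exact h x hx h1

lemma sign_half (hs : 0 < s) (hR : 0 < R) {e : Euc N} (he : ‖e‖ = 1) {v : Euc N → ℝ}
    (hv : WS N s R lam v) (hc : Continuous v) (hodd : ∀ x, v (sg e x) = - v x)
    (hm : MinH N s R lam) : (∀ x, 0 < (inner ℝ x e : ℝ) → 0 ≤ v x) ∨
      (∀ x, 0 < (inner ℝ x e : ℝ) → 0 ≤ - v x) := by
  by_contra hcon
  push Not at hcon
  obtain ⟨⟨a, ha, hva⟩, ⟨b, hb, hvb⟩⟩ := hcon
  have hvb' : 0 < v b := by linarith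
  by_cases hz : ∀ x, ‖x‖ < R → 0 < (inner ℝ x e : ℝ) → v x = 0
  · have := zero_of_half hs hR he hv hc hodd hz
    rw [this] at hva; simp at hva
  · push Not at hz
    obtain ⟨x, hxR, hx, hvx⟩ := hz
    rcases lt_or_gt_of_ne hvx with h | h
    · exact hp_pair hs he hv hc hodd hm hx hb h hvb' (Or.inl hxR)
    · exact hp_pair hs he hv hc hodd hm ha hx hva h (Or.inr hxR)

end FracNeumann

namespace FracNeumann

variable {N : ℕ} {s R lam : ℝ}

lemma inner_near {e : Euc N} (he : ‖e‖ = 1) (x y : Euc N) :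
    (inner ℝ y e : ℝ) - ‖x - y‖ ≤ inner ℝ x e := by
  have h1 := abs_real_inner_le_norm (x - y) e
  rw [he, mul_one, inner_sub_left] at h1
  have := (abs_le.1 h1).1
  linarith

lemma symF_sub (g : Euc N ≃ₗᵢ[ℝ] Euc N) (u v w : Euc N → ℝ) (q : Euc N × Euc N) :
    symF N s g u w q = symF N s g v w q - symF N s g (v - u) w q := by
  unfold symF; simp only [Pi.sub_apply]; ring

lemma symF_self (g : Euc N ≃ₗᵢ[ℝ] Euc N) (u : Euc N → ℝ) (q : Euc N × Euc N) :
    0 ≤ symF N s g u u q := by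
  unfold symF
  have h1 := mul_nonneg (mul_self_nonneg (u q.1 - u q.2)) (Kz_nonneg N s (q.1 - q.2))
  have h2 := mul_nonneg (mul_self_nonneg (u q.1 + u q.2)) (Kz_nonneg N s (q.1 - g q.2))
  linarith

/-- bound for the reflected bump -/
lemma refl_bmp_af (hN : 2 ≤ N) (hs0 : 0 < s) (hs1 : s < 1) {e : Euc N} (he : ‖e‖ = 1)
    {x0 : Euc N} {β φ : Euc N → ℝ} {t : ℝ} (ht : 0 < t) (hx0 : 2 * t ≤ (inner ℝ x0 e : ℝ))
    (hβm : Mem N s R β) (hβ0 : ∀ x, 0 ≤ β x) (hβ1 : ∀ x, β x ≤ 1)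
    (hβs : ∀ x, t ≤ ‖x - x0‖ → β x = 0) (hφ : Mem N s R φ) (hφi : Integrable φ)
    (hφ0 : ∀ x, 0 ≤ φ x) (hsupp : ∀ x, φ x ≠ 0 → ‖x - x0‖ < t) (hB : ∀ x, φ x ≠ 0 → ‖x‖ ≤ R) :
    |af N s R (fun x => β (sg e x)) φ| ≤ 2 * t ^ (-(2 * s)) * I0 N s * ∫ x, φ x := by
  have hz : ∀ y, 0 < (inner ℝ y e : ℝ) → β (sg e y) = 0 := by
    intro y hy
    apply hβs
    have h1 := inner_near he (sg e y) x0
    rw [sg_inner he] at h1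
    linarith
  refine lemAB hN hs0 hs1 (hβm.comp (sg e)) (fun x => ?_) hφ hφi hφ0 (by norm_num) ht ?_ ?_
  · rw [abs_of_nonneg (hβ0 _)]; exact hβ1 _
  · intro x hx _ y
    have hxt := hsupp x hx
    have hpx : t < (inner ℝ x e : ℝ) := by
      have := inner_near he x x0
      linarith
    rw [hz x (by linarith)]
    rcases lt_or_ge ‖x - y‖ t with h | h
    · have h1 := inner_near he y x
      have h2 := inner_near he ((2 : ℝ) • x - y) x
      rw [norm_sub_rev] at h1
      rw [show (2 : ℝ) • x - y - x = x - y by rw [two_smul]; abel] at h2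
      rw [hz y (by linarith), hz _ (by linarith)]
      simp only [mul_zero, sub_zero, abs_zero]
      positivity
    · have h3 : (1 : ℝ) ≤ ‖x - y‖ ^ 2 / t ^ 2 := by
        rw [one_le_div (by positivity)]; gcongr
      rw [min_eq_left h3, abs_le]
      have a1 := hβ0 (sg e y)
      have a2 := hβ1 (sg e y)
      have a3 := hβ0 (sg e ((2 : ℝ) • x - y))
      have a4 := hβ1 (sg e ((2 : ℝ) • x - y))
      constructor <;> linarith
  · intro x hx hxR
    exact absurd (hB x hx) (not_le.2 hxR)

lemma smp_core (hN : 2 ≤ N) (hs0 : 0 < s) (hs1 : s < 1) (hlam : 0 ≤ lam) {e : Euc N}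
    (he : ‖e‖ = 1) {v : Euc N → ℝ} (hv : WS N s R lam v) (hc : Continuous v)
    (hodd : ∀ x, v (sg e x) = - v x) (hpos : ∀ x, 0 < (inner ℝ x e : ℝ) → 0 ≤ v x)
    {x0 : Euc N} (hx0 : ‖x0‖ < R) {t : ℝ} (ht : 0 < t) (htR : t ≤ R - ‖x0‖)
    (hte : 2 * t ≤ (inner ℝ x0 e : ℝ)) {y0 : Euc N} {r η κ : ℝ} (hr : 0 < r) (hη : 0 < η) (hκ : 0 < κ)
    (hG : ∀ y ∈ Metric.ball y0 r, 0 < (inner ℝ y e : ℝ) ∧ t ≤ ‖y - x0‖ ∧ η ≤ v y)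
    (hK : ∀ x, ‖x - x0‖ < t → ∀ y ∈ Metric.ball y0 r, κ ≤ Kz N s (x - y) - Kz N s (x - sg e y)) :
    v x0 ≠ 0 := by
  intro hv0
  have hadm : Adm N R (fun y => ‖y - x0‖ ^ 2) x0 t := Adm.interior hx0 ht htR
  set q : Euc N → ℝ := fun y => ‖y - x0‖ ^ 2 with hq
  set β := bmp q t with hβ
  have hβm : Mem N s R β := hadm.bmp_mem hN hs0 hs1 ht le_rfl
  have hβ0 : ∀ x, 0 ≤ β x := Adm.bmp_nonneg t
  have hβ1 : ∀ x, β x ≤ 1 := hadm.bmp_le t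
  have hβs : ∀ x, t ≤ ‖x - x0‖ → β x = 0 := by
    intro x hx
    apply Adm.bmp_zero ht
    simp only [hq]; gcongr
  have hβx0 : β x0 = 1 := by simp [hβ, bmp, hadm.zero, Hf]
  have hβc : Continuous β := hadm.bmp_cont t
  set b : Euc N → ℝ := β - fun x => β (sg e x) with hb
  have hbm : Mem N s R b := hβm.sub (hβm.comp (sg e))
  have hbo : ∀ x, b (sg e x) = - b x := by
    intro x; simp only [hb, Pi.sub_apply, sg_sg]; ring
  have hcw : 0 < (volume (Metric.ball y0 r)).toReal :=
    ENNReal.toReal_pos (Metric.measure_ball_pos volume y0 hr).ne' measure_ball_lt_top.ne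
  set gg := (volume (Metric.ball y0 r)).toReal with hgg
  have hI := I0_nonneg N s
  have hCb := Cb_nonneg (N := N) (s := s)
  set C1 := Cb N s * t ^ (-(2 * s)) + 2 * t ^ (-(2 * s)) * I0 N s with hC1
  have hC10 : 0 ≤ C1 := by positivity
  obtain ⟨θ, hθ, hθC⟩ : ∃ θ : ℝ, 0 < θ ∧ 4 * θ * C1 < gg * (η * κ) := by
    refine ⟨gg * (η * κ) / (8 * (C1 + 1)), by positivity, ?_⟩
    have h1 : 0 < gg * (η * κ) := by positivity
    rw [show 4 * (gg * (η * κ) / (8 * (C1 + 1))) * C1 = gg * (η * κ) * (C1 / (2 * (C1 + 1))) by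
      field_simp; ring]
    have h2 : C1 / (2 * (C1 + 1)) < 1 := by rw [div_lt_one (by positivity)]; linarith
    nlinarith
  set Z : Euc N → ℝ := θ • b - v with hZ
  have hZm : Mem N s R Z := (hbm.smul θ).sub hv.1
  have hZo : ∀ x, Z (sg e x) = - Z x := by
    intro x; simp only [hZ, Pi.sub_apply, Pi.smul_apply, smul_eq_mul, hbo, hodd]; ring
  have hZc : Continuous Z := by
    have : Continuous b := hβc.sub (hβc.comp (sg e).continuous)
    exact (this.const_smul θ).sub hc
  have hbH : ∀ x, 0 < (inner ℝ x e : ℝ) → b x = β x := by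
    intro x hx
    have : β (sg e x) = 0 := by
      apply hβs
      have h1 := inner_near he (sg e x) x0
      rw [sg_inner he] at h1
      linarith
    simp only [hb, Pi.sub_apply, this, sub_zero]
  have hZH : ∀ x, 0 < (inner ℝ x e : ℝ) → Z x = θ * β x - v x := by
    intro x hx
    simp only [hZ, Pi.sub_apply, Pi.smul_apply, smul_eq_mul, hbH x hx]
  set Φ := hp e Z with hΦ
  have hΦm : Mem N s R Φ := hp_mem hs0 he hZm hZo
  have hΦo : ∀ x, Φ (sg e x) = - Φ x := hp_odd he hZo
  have hΦp : ∀ x, 0 < (inner ℝ x e : ℝ) → 0 ≤ Φ x := by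
    intro x hx; simp only [hΦ, hp, if_pos hx]; exact le_max_right _ _
  have hΦn : ∀ x, ¬ 0 < (inner ℝ x e : ℝ) → Φ x ≤ 0 := by
    intro x hx; simp only [hΦ, hp, if_neg hx]; exact min_le_right _ _
  set φ : Euc N → ℝ := fun x => max (Φ x) 0 with hφ
  have hφm : Mem N s R φ := hΦm.pos
  have hφ0 : ∀ x, 0 ≤ φ x := fun x => le_max_right _ _
  have hφH : ∀ x, φ x ≠ 0 → 0 < (inner ℝ x e : ℝ) ∧ φ x = Φ x ∧ Φ x = Z x ∧ 0 < Z x := by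
    intro x hx
    have h1 : 0 < (inner ℝ x e : ℝ) := by
      by_contra hcon
      exact hx (max_eq_right (hΦn x hcon))
    have h2 : φ x = Φ x := max_eq_left (hΦp x h1)
    have h3 : Φ x = max (Z x) 0 := by simp only [hΦ, hp, if_pos h1]
    have h4 : 0 < Z x := by
      by_contra hcon
      rw [h2, h3] at hx
      exact hx (max_eq_right (not_lt.1 hcon))
    exact ⟨h1, h2, by rw [h3, max_eq_left h4.le], h4⟩
  have hsupp : ∀ x, φ x ≠ 0 → ‖x - x0‖ < t := by
    intro x hx
    obtain ⟨h1, -, -, h4⟩ := hφH x hx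
    by_contra hcon
    rw [hZH x h1, hβs x (not_lt.1 hcon)] at h4
    have := hpos x h1
    linarith
  have hB : ∀ x, φ x ≠ 0 → ‖x‖ ≤ R := by
    intro x hx
    have h1 := hsupp x hx
    have h2 := norm_add_le (x - x0) x0
    rw [sub_add_cancel] at h2
    linarith
  have hφi : Integrable φ := by
    have h1 := hφm.integrableOn
    rw [← integrableOn_univ]
    refine h1.of_forall_sdiff_eq_zero MeasurableSet.univ ?_
    intro x hx
    by_contra hne
    apply hx.2
    rw [mem_closedBall_zero_iff]
    exact hB x hne
  have hI0 : 0 ≤ ∫ x, φ x := integral_nonneg hφ0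
  have hΦφ : Φ = φ - fun x => φ (sg e x) := by
    ext x
    simp only [Pi.sub_apply, hφ, hΦo]
    by_cases hx : 0 < (inner ℝ x e : ℝ)
    · have := hΦp x hx
      rw [max_eq_left this, max_eq_right (by linarith)]; ring
    · have := hΦn x hx
      rw [max_eq_right this, max_eq_left (by linarith)]; ring
  -- upper bound
  have hup : af N s R Z Φ ≤ θ * (2 * (C1 * ∫ x, φ x)) := by
    have e1 : af N s R Z Φ = θ * af N s R b Φ - lam * ∫ x in CB N R, v x * Φ x := by
      rw [hZ, af_sub_left (hbm.smul θ) hv.1 hΦm, af_smul_left, hv.2.2 Φ hΦm]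
    have e2 : 0 ≤ ∫ x in CB N R, v x * Φ x := by
      apply integral_nonneg
      intro x
      by_cases hx : 0 < (inner ℝ x e : ℝ)
      · exact mul_nonneg (hpos x hx) (hΦp x hx)
      · refine mul_nonneg_of_nonpos_of_nonpos ?_ (hΦn x hx)
        rcases (not_lt.1 hx).lt_or_eq with h | h
        · have := hpos (sg e x) (by rw [sg_inner he]; linarith)
          rw [hodd] at this; linarith
        · exact (odd_hyp he hodd h).le
    have e3 : af N s R b Φ = 2 * af N s R b φ := by
      have h1 := af_comp (s := s) (R := R) (sg e) b φ
      have h2 : (fun x => b (sg e x)) = - b := by ext x; exact hbo x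
      rw [h2, af_neg_left] at h1
      rw [hΦφ, af_comm, af_sub_left hφm (hφm.comp (sg e)) hbm, af_comm φ b,
        af_comm (fun x => φ (sg e x)) b]
      linarith
    have e4 : af N s R b φ ≤ C1 * ∫ x, φ x := by
      have h1 := (abs_le.1 (hadm.bmp_af hN hs0 hs1 ht le_rfl hφm hφi hφ0 (fun x hx => by
        exact pow_le_pow_left₀ (norm_nonneg _) (hsupp x hx).le 2))).2
      have h2 := (abs_le.1 (refl_bmp_af hN hs0 hs1 he ht hte hβm hβ0 hβ1 hβs hφm hφi hφ0 hsupp hB)).1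
      rw [hb, af_sub_left hβm (hβm.comp (sg e)) hφm, hC1, add_mul]
      linarith
    have e5 := mul_nonneg hlam e2
    rw [e1, e3]
    nlinarith
  obtain ⟨i1, i2⟩ := af_sym (sg e) hZm hΦm hZo hΦo
  have hnn : ∀ z, 0 ≤ symF N s (sg e) Z Φ z := by
    intro z
    rw [symF_sub (sg e) Z Φ Φ]
    have h1 := symF_self (s := s) (sg e) Φ z
    have h2 := hp_neg hs0 he hZo z
    linarith
  have key := LB (R := R) (m := gg) i1 (fun z _ => hnn z)
    (S := {z | φ z.1 ≠ 0 ∧ z.2 ∈ Metric.ball y0 r}) ?_ ?_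
    (f := fun x => η * κ * φ x) (fun x => mul_nonneg (by positivity) (hφ0 x))
    (hφi.const_mul (η * κ)) ?_ hcw.le ?_
  · rw [i2, integral_const_mul] at key
    have hz : ∫ x, φ x = 0 := by
      by_contra hne
      have hp0 : 0 < ∫ x, φ x := lt_of_le_of_ne hI0 (Ne.symm hne)
      have := mul_lt_mul_of_pos_right hθC hp0
      nlinarith
    rw [integral_eq_zero_iff_of_nonneg hφ0 hφi] at hz
    have hUo : IsOpen {x : Euc N | 0 < (inner ℝ x e : ℝ) ∧ 0 < Z x} :=
      (isOpen_lt continuous_const (continuous_id.inner continuous_const :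
        Continuous fun x : Euc N => (inner ℝ x e : ℝ))).inter (isOpen_lt continuous_const hZc)
    have hx0e : 0 < (inner ℝ x0 e : ℝ) := by linarith
    have hUp := hUo.measure_pos volume ⟨x0, hx0e, by rw [hZH x0 hx0e, hβx0, hv0]; linarith⟩
    apply hUp.ne'
    refine measure_mono_null ?_ hz
    rintro x ⟨h1, h2⟩ hcon
    have h3 : φ x = 0 := hcon
    have h4 : Φ x ≤ φ x := le_max_left _ _
    have h5 : Z x ≤ Φ x := by simp only [hΦ, hp, if_pos h1]; exact le_max_left _ _
    linarith
  · exact ((hφm.1.comp measurable_fst) (measurableSet_singleton (0 : ℝ)).compl).inter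
      (measurable_snd Metric.isOpen_ball.measurableSet)
  · intro z hz; exact Or.inl (hB _ hz.1)
  · rintro ⟨x, y⟩ ⟨hx, hy⟩
    simp only at hx hy ⊢
    obtain ⟨h1, h2, h3, h4⟩ := hφH x hx
    obtain ⟨g1, g2, g3⟩ := hG y hy
    have hZy : Z y = - v y := by rw [hZH y g1, hβs y g2]; ring
    have hΦy : Φ y = 0 := by
      simp only [hΦ, hp, if_pos g1]; exact max_eq_right (by linarith)
    have hk := hK x (hsupp x hx) y hy
    have k1 := Kz_nonneg N s (x - y)
    have k2 := Kz_nonneg N s (x - sg e y)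
    simp only [symF, hΦy, hZy, h3, h2]
    have h5 : η * κ ≤ v y * (Kz N s (x - y) - Kz N s (x - sg e y)) :=
      mul_le_mul g3 hk hκ.le (hη.le.trans g3)
    have h6 : 0 ≤ Z x * (Kz N s (x - y) + Kz N s (x - sg e y)) := by positivity
    have h7 : η * κ * Z x ≤ (v y * (Kz N s (x - y) - Kz N s (x - sg e y)) +
      Z x * (Kz N s (x - y) + Kz N s (x - sg e y))) * Z x := by gcongr; linarith
    linarith
  · intro x hx
    have hx' : φ x ≠ 0 := right_ne_zero_of_mul hx
    rw [hgg, ENNReal.ofReal_toReal measure_ball_lt_top.ne]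
    refine measure_mono ?_
    intro y hy
    exact ⟨hx', hy⟩

lemma Kz_contAt {z : Euc N} (hz : z ≠ 0) : ContinuousAt (Kz N s) z := by
  have := norm_pos_iff.2 hz
  unfold Kz
  refine ContinuousAt.inv₀ (continuous_norm.continuousAt.rpow_const (Or.inl this.ne')) ?_
  positivity

lemma smp (hN : 2 ≤ N) (hs0 : 0 < s) (hs1 : s < 1) (hR : 0 < R) (hlam : 0 ≤ lam) {e : Euc N}
    (he : ‖e‖ = 1) {v : Euc N → ℝ} (hv : WS N s R lam v) (hc : Continuous v)
    (hodd : ∀ x, v (sg e x) = - v x) (hpos : ∀ x, 0 < (inner ℝ x e : ℝ) → 0 ≤ v x)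
    (hne : v ≠ 0) {x0 : Euc N} (hx0 : ‖x0‖ < R) (hxe : 0 < (inner ℝ x0 e : ℝ)) : 0 < v x0 := by
  refine lt_of_le_of_ne (hpos x0 hxe) (Ne.symm ?_)
  intro hv0
  obtain ⟨y0, hy0, hvy⟩ : ∃ y0, 0 < (inner ℝ y0 e : ℝ) ∧ 0 < v y0 := by
    by_contra hcon
    push Not at hcon
    exact hne (zero_of_half hs0 hR he hv hc hodd fun x _ hx => le_antisymm (hcon x hx) (hpos x hx))
  have hxy : x0 ≠ y0 := by rintro rfl; linarith
  have hxy2 : x0 ≠ sg e y0 := by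
    intro h
    rw [h, sg_inner he] at hxe; linarith
  have hd : 0 < ‖y0 - x0‖ := norm_pos_iff.2 (sub_ne_zero.2 hxy.symm)
  have hK0 := Kz_refl_lt hs0 he hxy (mul_pos hxe hy0)
  set κ := (Kz N s (x0 - y0) - Kz N s (x0 - sg e y0)) / 2 with hκ
  have hκp : 0 < κ := by rw [hκ]; linarith
  have hct : ContinuousAt (fun z : Euc N × Euc N => Kz N s (z.1 - z.2) - Kz N s (z.1 - sg e z.2))
      (x0, y0) := by
    refine ContinuousAt.sub ?_ ?_
    · exact ContinuousAt.comp (g := Kz N s) (f := fun z : Euc N × Euc N => z.1 - z.2)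
        (Kz_contAt (sub_ne_zero.2 hxy)) (by fun_prop)
    · refine ContinuousAt.comp (g := Kz N s) (f := fun z : Euc N × Euc N => z.1 - sg e z.2)
        (Kz_contAt (sub_ne_zero.2 hxy2)) ?_
      exact (continuous_fst.sub ((sg e).continuous.comp continuous_snd)).continuousAt
  have hev := hct.eventually_const_lt (u := κ) (by simp only [hκ]; linarith)
  obtain ⟨r1, hr1, hb1⟩ := Metric.eventually_nhds_iff_ball.1 hev
  have hev2 : ∀ᶠ y in 𝓝 y0, 0 < (inner ℝ y e : ℝ) ∧ ‖y0 - x0‖ / 2 < ‖y - x0‖ ∧ v y0 / 2 < v y := by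
    have c1 : ContinuousAt (fun y : Euc N => (inner ℝ y e : ℝ)) y0 := by fun_prop
    have c2 : ContinuousAt (fun y : Euc N => ‖y - x0‖) y0 := by fun_prop
    exact (c1.eventually_const_lt hy0).and ((c2.eventually_const_lt (by linarith)).and
        (hc.continuousAt.eventually_const_lt (by linarith)))
  obtain ⟨r2, hr2, hb2⟩ := Metric.eventually_nhds_iff_ball.1 hev2
  set t := min (min r1 (‖y0 - x0‖ / 2)) (min (R - ‖x0‖) ((inner ℝ x0 e : ℝ) / 2)) with ht
  have htp : 0 < t := lt_min (lt_min hr1 (by positivity)) (lt_min (by linarith) (by positivity))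
  have t1 : t ≤ r1 := (min_le_left _ _).trans (min_le_left _ _)
  have t2 : t ≤ ‖y0 - x0‖ / 2 := (min_le_left _ _).trans (min_le_right _ _)
  have t3 : t ≤ R - ‖x0‖ := (min_le_right _ _).trans (min_le_left _ _)
  have t4 : t ≤ (inner ℝ x0 e : ℝ) / 2 := (min_le_right _ _).trans (min_le_right _ _)
  refine smp_core hN hs0 hs1 hlam he hv hc hodd hpos hx0 htp t3 (by linarith) (y0 := y0)
    (r := min r1 r2) (η := v y0 / 2) (κ := κ) (lt_min hr1 hr2) (by linarith) hκp ?_ ?_ hv0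
  · intro y hy
    obtain ⟨a, b, c⟩ := hb2 y (Metric.ball_subset_ball (min_le_right _ _) hy)
    exact ⟨a, by linarith, c.le⟩
  · intro x hx y hy
    refine (hb1 (x, y) ?_).le
    rw [← ball_prod_same]
    refine ⟨?_, Metric.ball_subset_ball (min_le_left _ _) hy⟩
    simp only [Metric.mem_ball, dist_eq_norm]
    linarith

end FracNeumann

namespace FracNeumann

variable {N : ℕ} {s R lam : ℝ}

/-- Continuous weak solutions. -/
def Ev (N : ℕ) (s R lam : ℝ) : Submodule ℝ (Euc N → ℝ) where
  carrier := {u | Continuous u ∧ WS N s R lam u}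
  add_mem' := fun ha hb => ⟨ha.1.add hb.1, ha.2.add hb.2⟩
  zero_mem' := ⟨continuous_zero, WS.zero⟩
  smul_mem' := fun c _ ha => ⟨ha.1.const_smul c, ha.2.smul c⟩

lemma mem_Ev {u : Euc N → ℝ} : u ∈ Ev N s R lam ↔ Continuous u ∧ WS N s R lam u := Iff.rfl

/-- Abstract properties of the eigenspace. -/
structure Good (E : Submodule ℝ (Euc N → ℝ)) (R : ℝ) : Prop where
  comp : ∀ u ∈ E, ∀ g : Euc N ≃ₗᵢ[ℝ] Euc N, (fun x => u (g x)) ∈ E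
  odd : ∀ e : Euc N, ‖e‖ = 1 → ∀ v ∈ E, (∀ x, v (sg e x) = - v x) → ∀ x, ‖x‖ < R →
    0 < (inner ℝ x e : ℝ) → v x = 0 → v = 0

lemma Ev_good (hN : 2 ≤ N) (hs0 : 0 < s) (hs1 : s < 1) (hR : 0 < R) (hlam : 0 ≤ lam)
    (hm : MinH N s R lam) : Good (Ev N s R lam) R where
  comp := fun u hu g => ⟨hu.1.comp g.continuous, hu.2.comp g⟩
  odd := by
    intro e he v hv hodd x hx hxe hvx
    by_contra hne
    rcases sign_half hs0 hR he hv.2 hv.1 hodd hm with h | h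
    · exact absurd hvx (smp hN hs0 hs1 hR hlam he hv.2 hv.1 hodd h hne hx hxe).ne'
    · have := smp hN hs0 hs1 hR hlam he hv.2.neg hv.1.neg (fun x => by simp [hodd]) h
        (by simpa using hne) hx hxe
      simp [hvx] at this

lemma sg_transport {e f : Euc N} (he : ‖e‖ = 1) (hf : ‖f‖ = 1) (g : Euc N ≃ₗᵢ[ℝ] Euc N) (hg : g f = e)
    (x : Euc N) : g (sg f x) = sg e (g x) := by
  rw [sg_apply hf, sg_apply he, map_sub, map_smul, hg, ← hg, g.inner_map_map]

lemma sg_sub {e f : Euc N} (h : ‖f‖ = ‖e‖) : sg (f - e) f = e := Submodule.reflection_sub h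

lemma sg_smul {c : ℝ} (hc : c ≠ 0) (e : Euc N) : sg (c • e) = sg e := by
  unfold sg
  simp only [Submodule.span_singleton_smul_eq (IsUnit.mk0 c hc)]

lemma half_in (hR : 0 < R) {e : Euc N} (he : ‖e‖ = 1) : ‖(R / 2) • e‖ < R ∧
    0 < (inner ℝ ((R / 2) • e) e : ℝ) := by
  constructor
  · rw [norm_smul, he, Real.norm_of_nonneg (by linarith)]; linarith
  · rw [real_inner_smul_left, real_inner_self_eq_norm_sq, he]; linarith

lemma Good.odd_span {E : Submodule ℝ (Euc N → ℝ)} (hE : Good E R) (hR : 0 < R) {e : Euc N}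
    (he : ‖e‖ = 1) {v w : Euc N → ℝ} (hv : v ∈ E) (hw : w ∈ E) (hv0 : v ≠ 0)
    (hov : ∀ x, v (sg e x) = - v x) (how : ∀ x, w (sg e x) = - w x) : ∃ c : ℝ, w = c • v := by
  have h1 := half_in hR he
  set p := (R / 2) • e
  have hp : v p ≠ 0 := fun h => hv0 (hE.odd e he v hv hov p h1.1 h1.2 h)
  refine ⟨w p / v p, sub_eq_zero.1 (hE.odd e he _ (E.sub_mem hw (E.smul_mem _ hv)) ?_ p h1.1 h1.2 ?_)⟩
  · intro x
    simp only [Pi.sub_apply, Pi.smul_apply, hov, how, smul_eq_mul]; ring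
  · simp only [Pi.sub_apply, Pi.smul_apply, smul_eq_mul]
    field_simp; ring

lemma Good.odd_neg {E : Submodule ℝ (Euc N → ℝ)} (hE : Good E R) (hR : 0 < R) {e : Euc N}
    (he : ‖e‖ = 1) {v : Euc N → ℝ} (hv : v ∈ E) (hov : ∀ x, v (sg e x) = - v x) (x : Euc N) :
    v (-x) = - v x := by
  have h1 := half_in hR he
  have hc := hE.comp v hv (LinearIsometryEquiv.neg ℝ)
  simp only [LinearIsometryEquiv.coe_neg] at hc
  have h2 := hE.odd e he _ (E.add_mem hc hv) (fun x => by
    simp only [Pi.add_apply, ← map_neg, hov]; ring) _ h1.1 h1.2 (by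
    simp only [Pi.add_apply]
    have : sg e ((R / 2) • e) = - ((R / 2) • e) := by
      rw [map_smul, sg_apply he, real_inner_self_eq_norm_sq, he]
      module
    rw [← this, hov]; ring)
  have := congrFun h2 x
  simp only [Pi.add_apply, Pi.zero_apply] at this
  linarith

/-- unit vectors -/
abbrev ei (i : Fin N) : Euc N := EuclideanSpace.single i 1

lemma ei_norm (i : Fin N) : ‖ei i‖ = 1 := by simp [ei]

lemma ei_inner (x : Euc N) (i : Fin N) : (inner ℝ x (ei i) : ℝ) = x i := by simp [ei, EuclideanSpace.inner_single_right]

lemma Good.even_other {E : Submodule ℝ (Euc N → ℝ)} (hE : Good E R) (hR : 0 < R) {i j : Fin N}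
    (hij : i ≠ j) {v : Euc N → ℝ} (hv : v ∈ E) (hov : ∀ x, v (sg (ei i) x) = - v x) (x : Euc N) :
    v (sg (ei j) x) = v x := by
  have h1 := half_in hR (ei_norm i)
  have hfix : sg (ei j) (ei i) = ei i := sg_fix (ei_norm j) (by rw [ei_inner]; simp [ei, hij.symm])
  have h2 := hE.odd _ (ei_norm i) _ (E.sub_mem (hE.comp v hv (sg (ei j))) hv) (fun x => by
    simp only [Pi.sub_apply]
    rw [sg_transport (ei_norm i) (ei_norm i) _ hfix, hov, hov]; ring) _ h1.1 h1.2 (by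
    simp only [Pi.sub_apply, map_smul, hfix, sub_self])
  have := congrFun h2 x
  simp only [Pi.sub_apply, Pi.zero_apply] at this
  linarith

lemma sg_ei (x : Euc N) (i : Fin N) : sg (ei i) x = WithLp.toLp 2 (fun j => if j = i then - x j else x j) := by
  rw [sg_apply (ei_norm i), ei_inner]
  ext j
  by_cases h : j = i
  · subst h; simp [ei]; ring
  · simp [ei, h]

lemma flips_even {g : Euc N → ℝ} (h : ∀ i x, g (sg (ei i) x) = g x) (x : Euc N) : g (-x) = g x := by
  have key : ∀ S : Finset (Fin N), ∀ x : Euc N,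
      g (WithLp.toLp 2 (fun j => if j ∈ S then - x j else x j)) = g x := by
    intro S
    induction S using Finset.induction_on with
    | empty => intro x; simp
    | insert a S ha ih =>
      intro x
      rw [← ih x, ← h a (WithLp.toLp 2 (fun j => if j ∈ S then - x j else x j)), sg_ei]
      congr 1
      ext j
      by_cases hj : j = a
      · subst hj; simp [ha]
      · simp [hj]
  have := key Finset.univ x
  rw [← this]
  congr 1
  ext j; simp

lemma Good.radial_of_even {E : Submodule ℝ (Euc N → ℝ)} (hE : Good E R) (hR : 0 < R) (hN : 2 ≤ N)
    {g : Euc N → ℝ} (hg : g ∈ E) (h : ∀ x, g (-x) = g x) : Radial N g := by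
  have key : ∀ x y : Euc N, ‖x‖ = ‖y‖ → g x = g y := by
    intro x y hxy
    by_cases hne : x = y
    · rw [hne]
    have hd : ‖x - y‖ ≠ 0 := norm_ne_zero_iff.2 (sub_ne_zero.2 hne)
    set e := ‖x - y‖⁻¹ • (x - y) with he_def
    have he : ‖e‖ = 1 := by rw [he_def, norm_smul, norm_inv, norm_norm]; field_simp
    have hse : sg e = sg (x - y) := sg_smul (inv_ne_zero hd) _
    have hk := E.sub_mem hg (hE.comp g hg (sg e))
    have h3 := hE.odd_neg hR he hk (fun z => by simp only [Pi.sub_apply, sg_sg]; ring) x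
    simp only [Pi.sub_apply, map_neg, h, hse, sg_sub hxy] at h3
    linarith
  let i0 : Fin N := ⟨0, by omega⟩
  refine ⟨fun r => g (r • ei i0), fun x => key _ _ ?_⟩
  rw [norm_smul, ei_norm, norm_norm, mul_one]

lemma Good.exists_odd {E : Submodule ℝ (Euc N → ℝ)} (hE : Good E R)
    {u : Euc N → ℝ} (hu : u ∈ E) (hr : ¬ Radial N u) (hN : 2 ≤ N) (i : Fin N) :
    ∃ v ∈ E, v ≠ 0 ∧ ∀ x, v (sg (ei i) x) = - v x := by
  obtain ⟨x, y, hxy, hne⟩ : ∃ x y : Euc N, ‖x‖ = ‖y‖ ∧ u x ≠ u y := by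
    by_contra hcon
    push Not at hcon
    let i0 : Fin N := ⟨0, by omega⟩
    refine hr ⟨fun r => u (r • ei i0), fun x => hcon _ _ ?_⟩
    rw [norm_smul, ei_norm, norm_norm, mul_one]
  have hne' : x ≠ y := fun h => hne (by rw [h])
  have hd : ‖x - y‖ ≠ 0 := norm_ne_zero_iff.2 (sub_ne_zero.2 hne')
  set e := ‖x - y‖⁻¹ • (x - y) with he_def
  have he : ‖e‖ = 1 := by rw [he_def, norm_smul, norm_inv, norm_norm]; field_simp
  have hse : sg e = sg (x - y) := sg_smul (inv_ne_zero hd) _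
  set k : Euc N → ℝ := u - (fun x => u (sg e x)) with hk_def
  have hk : k ∈ E := E.sub_mem hu (hE.comp u hu (sg e))
  have hko : ∀ z, k (sg e z) = - k z := fun z => by
    simp only [hk_def, Pi.sub_apply, sg_sg]; ring
  have hkx : k x ≠ 0 := by
    simp only [hk_def, Pi.sub_apply, hse, sg_sub hxy]
    exact sub_ne_zero.2 hne
  have hg : sg (ei i - e) (ei i) = e := sg_sub (by rw [ei_norm, he])
  refine ⟨fun z => k (sg (ei i - e) z), hE.comp k hk _, ?_, fun z => ?_⟩
  · intro h0
    have := congrFun h0 (sg (ei i - e) x)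
    simp only [sg_sg] at this
    exact hkx this
  · simp only [sg_transport he (ei_norm i) _ hg, hko]

lemma Good.decomp {E : Submodule ℝ (Euc N → ℝ)} (hE : Good E R) (hR : 0 < R) (hN : 2 ≤ N)
    {v : Fin N → Euc N → ℝ} (hv : ∀ i, v i ∈ E) (hv0 : ∀ i, v i ≠ 0)
    (hov : ∀ i x, v i (sg (ei i) x) = - v i x) {u : Euc N → ℝ} (hu : u ∈ E) :
    ∃ (b : Fin N → ℝ) (g : Euc N → ℝ), g ∈ E ∧ Radial N g ∧ ∀ x, u x = g x + ∑ i, b i * v i x := by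
  have h1 : ∀ i, ∃ c : ℝ, u - (fun x => u (sg (ei i) x)) = c • v i := fun i =>
    hE.odd_span hR (ei_norm i) (hv i) (E.sub_mem hu (hE.comp u hu _)) (hv0 i) (hov i) (fun x => by
      simp only [Pi.sub_apply, sg_sg]; ring)
  choose c hc using h1
  have hcx : ∀ i x, u (sg (ei i) x) = u x - c i * v i x := by
    intro i x
    have := congrFun (hc i) x
    simp only [Pi.sub_apply, Pi.smul_apply, smul_eq_mul] at this
    linarith
  set g : Euc N → ℝ := u - ∑ i, (c i / 2) • v i with hg_def
  have hg : g ∈ E := E.sub_mem hu (E.sum_mem fun i _ => E.smul_mem _ (hv i))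
  have hgx : ∀ x, g x = u x - ∑ i, (c i / 2) * v i x := by
    intro x; simp [hg_def, Finset.sum_apply]
  refine ⟨fun i => c i / 2, g, hg, hE.radial_of_even hR hN hg (flips_even ?_), fun x => by rw [hgx]; ring⟩
  intro j x
  rw [hgx, hgx, hcx]
  have : ∀ i, (c i / 2) * v i (sg (ei j) x) = (c i / 2) * v i x - if i = j then c j * v j x else 0 := by
    intro i
    by_cases h : i = j
    · subst h; rw [hov, if_pos rfl]; ring
    · rw [hE.even_other hR h (hv i) (hov i), if_neg h]; ring
  simp only [this, Finset.sum_sub_distrib, Finset.sum_ite_eq', Finset.mem_univ, if_true]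
  ring

end FracNeumann

namespace FracNeumann

variable {N : ℕ} {s R lam : ℝ}

lemma abs_fd {V : Type*} [AddCommGroup V] [Module ℝ V] (core : InnerProductSpace.Core ℝ V) (n : ℕ)
    (h : ∀ (k : ℕ) (b : Fin k → V), (∀ i j, core.inner (b i) (b j) = if i = j then 1 else 0) → k ≤ n) :
    Module.Finite ℝ V := by
  rw [← Module.rank_lt_aleph0_iff]
  refine lt_of_le_of_lt (rank_le (n := n) ?_) Cardinal.natCast_lt_aleph0
  intro S hS
  letI i1 : NormedAddCommGroup V := @InnerProductSpace.Core.toNormedAddCommGroup ℝ V _ _ _ core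
  letI i2 : InnerProductSpace ℝ V := InnerProductSpace.ofCore core.toCore
  have hfr : Module.finrank ℝ (Submodule.span ℝ (S : Set V)) = S.card := finrank_span_finset_eq_card hS
  rw [← hfr]
  let b := stdOrthonormalBasis ℝ (Submodule.span ℝ (S : Set V))
  refine h _ (fun i => (b i : V)) ?_
  intro i j
  exact orthonormal_iff_ite.1 b.orthonormal i j

lemma Ev_core_zero (hs0 : 0 < s) (hR : 0 < R) {u : Euc N → ℝ} (hu : u ∈ Ev N s R lam)
    (h : ∫ x in CB N R, u x * u x = 0) : u = 0 := by
  have h1 := (integral_eq_zero_iff_of_nonneg (fun x => mul_self_nonneg (u x))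
    (hu.2.1.integrable_mul hu.2.1)).1 h
  have h2 : u =ᵐ[volume.restrict (CB N R)] 0 := by
    filter_upwards [h1] with x hx
    exact mul_self_eq_zero.1 hx
  exact (hu.1.ae_eq_iff_eq volume continuous_zero).1 (hu.2.ae_zero hs0 hR h2)

/-- The inner product on the eigenspace -/
def EvCore (hs0 : 0 < s) (hR : 0 < R) : InnerProductSpace.Core ℝ (Ev N s R lam) where
  inner u v := ∫ x in CB N R, u.1 x * v.1 x
  conj_inner_symm u v := by
    simp only [conj_trivial]
    congr 1; ext x; ring
  re_inner_nonneg u := integral_nonneg (fun x => mul_self_nonneg _)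
  add_left u v w := by
    rw [← integral_add (u.2.2.1.integrable_mul w.2.2.1) (v.2.2.1.integrable_mul w.2.2.1)]
    congr 1; ext x
    simp [add_mul]
  smul_left u v r := by
    rw [← integral_const_mul]
    congr 1; ext x
    simp [mul_assoc]
  definite u h := Subtype.ext (Ev_core_zero hs0 hR u.2 h)

lemma pt_bound (hN : 2 ≤ N) (hs0 : 0 < s) (hR : 0 < R) : ∃ C : ℝ, ∀ u ∈ Ev N s R lam,
    (∫ x in CB N R, u x * u x) ≤ 1 → ∀ x, ‖x‖ < R → u x ≤ C := by
  obtain ⟨m, hm, h⟩ := bdd_unif hN hs0 hR lam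
  set V := ∫ x in CB N R, (1 : ℝ)
  refine ⟨2 * (((1 + V) / 2) / m + 1), ?_⟩
  intro u hu h1 x hx
  have hfin : IsFiniteMeasure ((volume : Measure (Euc N)).restrict (CB N R)) :=
    isFiniteMeasure_restrict.2 (isCompact_closedBall (0 : Euc N) R).measure_lt_top.ne
  have hI : (∫ x in CB N R, |u x|) ≤ (1 + V) / 2 := by
    have : (∫ x in CB N R, |u x|) ≤ ∫ x in CB N R, (u x * u x + 1) / 2 := by
      apply integral_mono hu.2.1.integrableOn.abs
      · exact ((hu.2.1.integrable_mul hu.2.1).add (integrable_const (1 : ℝ))).div_const 2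
      · intro x
        simp only
        nlinarith [sq_nonneg (|u x| - 1), abs_mul_abs_self (u x)]
    rw [integral_div, integral_add (hu.2.1.integrable_mul hu.2.1) (integrable_const (1 : ℝ))] at this
    linarith
  set C := 2 * (((1 + V) / 2) / m + 1)
  have h2 : (fun x => max (u x) C) =ᵐ[volume.restrict (Metric.ball (0 : Euc N) R)] fun _ => C := by
    rw [restr_eq hR]
    filter_upwards [h u hu.2] with y hy
    apply max_eq_right
    refine hy.trans ?_
    simp only [C]
    gcongr
  have h3 := Measure.eqOn_open_of_ae_eq h2 Metric.isOpen_ball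
    (hu.1.max continuous_const).continuousOn continuousOn_const
  have := h3 (show x ∈ Metric.ball (0 : Euc N) R by simpa using hx)
  exact max_eq_right_iff.1 this

lemma Ev_fd (hN : 2 ≤ N) (hs0 : 0 < s) (hR : 0 < R) : Module.Finite ℝ (Ev N s R lam) := by
  obtain ⟨C, hC⟩ := pt_bound (lam := lam) hN hs0 hR
  have hfin : IsFiniteMeasure ((volume : Measure (Euc N)).restrict (CB N R)) :=
    isFiniteMeasure_restrict.2 (isCompact_closedBall (0 : Euc N) R).measure_lt_top.ne
  refine abs_fd (EvCore hs0 hR) ⌈∫ x in CB N R, C ^ 2⌉₊ ?_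
  intro k b hb
  have hb' : ∀ i j, (∫ x in CB N R, (b i).1 x * (b j).1 x) = if i = j then 1 else 0 := hb
  have hbi : ∀ i j, Integrable (fun x => (b i).1 x * (b j).1 x) (volume.restrict (CB N R)) :=
    fun i j => (b i).2.2.1.integrable_mul (b j).2.2.1
  have hpt : ∀ x, ‖x‖ < R → (∑ i, (b i).1 x * (b i).1 x) ≤ C ^ 2 := by
    intro x hx
    set S := ∑ i, (b i).1 x * (b i).1 x with hS
    have hS0 : 0 ≤ S := Finset.sum_nonneg fun i _ => mul_self_nonneg _
    rcases hS0.eq_or_lt with h0 | h0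
    · rw [← h0]; positivity
    set t := √S
    have ht : 0 < t := Real.sqrt_pos.2 h0
    have htS : t * t = S := Real.mul_self_sqrt hS0
    set u : Euc N → ℝ := ∑ i, ((b i).1 x / t) • (b i).1 with hu_def
    have hu : u ∈ Ev N s R lam := Submodule.sum_mem _ fun i _ => Submodule.smul_mem _ _ (b i).2
    have hux : ∀ y, u y = ∑ i, ((b i).1 x / t) * (b i).1 y := by
      intro y; simp [hu_def, Finset.sum_apply]
    have hintg : (∫ y in CB N R, u y * u y) = 1 := by
      have e1 : ∀ y, u y * u y = ∑ i, ∑ j, (((b i).1 x / t) * ((b j).1 x / t)) * ((b i).1 y * (b j).1 y) := by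
        intro y
        rw [hux, Finset.sum_mul_sum]
        refine Finset.sum_congr rfl fun i _ => Finset.sum_congr rfl fun j _ => by ring
      simp_rw [e1]
      rw [integral_finsetSum _ fun i _ => integrable_finsetSum _ fun j _ => (hbi i j).const_mul _]
      have e2 : ∀ i, (∫ y in CB N R, ∑ j, (((b i).1 x / t) * ((b j).1 x / t)) * ((b i).1 y * (b j).1 y))
          = (b i).1 x * (b i).1 x / S := by
        intro i
        rw [integral_finsetSum _ fun j _ => (hbi i j).const_mul _]
        simp_rw [integral_const_mul, hb']
        simp only [mul_ite, mul_one, mul_zero, Finset.sum_ite_eq, Finset.mem_univ, if_true]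
        rw [← htS]; field_simp
      simp_rw [e2]
      rw [← Finset.sum_div, ← hS, div_self h0.ne']
    have := hC u hu hintg.le x hx
    have e3 : u x = t := by
      rw [hux]
      have : ∀ i, ((b i).1 x / t) * (b i).1 x = ((b i).1 x * (b i).1 x) / t := fun i => by ring
      simp_rw [this]
      rw [← Finset.sum_div, ← hS, ← htS]; field_simp
    rw [e3] at this
    nlinarith
  have hk : (k : ℝ) = ∫ x in CB N R, ∑ i, (b i).1 x * (b i).1 x := by
    rw [integral_finsetSum _ fun i _ => hbi i i]
    simp [hb']
  have hle : (k : ℝ) ≤ ∫ x in CB N R, C ^ 2 := by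
    rw [hk, ← restr_eq hR]
    have hfin' : IsFiniteMeasure ((volume : Measure (Euc N)).restrict (Metric.ball 0 R)) := by
      rw [restr_eq hR]; exact hfin
    refine integral_mono_ae ?_ (integrable_const _) ?_
    · rw [restr_eq hR]; exact integrable_finsetSum _ fun i _ => hbi i i
    · refine (ae_restrict_iff' Metric.isOpen_ball.measurableSet).2 (Eventually.of_forall fun x hx => ?_)
      exact hpt x (by simpa using hx)
  exact_mod_cast hle.trans (Nat.le_ceil _)

end FracNeumann

namespace FracNeumann

variable {N : ℕ} {s R lam : ℝ}

/-- A space that is the disjoint union of two nonempty open preconnected sets has exactly two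
components. -/
lemma card_two {X : Type*} [TopologicalSpace X] {A B : Set X} (hA : IsOpen A) (hB : IsOpen B)
    (hAc : IsPreconnected A) (hBc : IsPreconnected B) (hAB : ∀ x, x ∈ A ↔ ¬ x ∈ B)
    {a b : X} (ha : a ∈ A) (hb : b ∈ B) : Nat.card (ConnectedComponents X) = 2 := by
  have hcl : IsClopen A := by
    refine ⟨⟨?_⟩, hA⟩
    have : Aᶜ = B := by ext x; simp [hAB]
    rwa [this]
  rw [Nat.card_eq_two_iff]
  refine ⟨(a : ConnectedComponents X), (b : ConnectedComponents X), ?_, ?_⟩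
  · intro h
    rw [ConnectedComponents.coe_eq_coe'] at h
    have h1 := hcl.connectedComponent_subset ha
    have h2 : b ∈ connectedComponent a := by
      rw [← connectedComponent_eq h]; exact mem_connectedComponent
    exact (hAB b).1 (h1 h2) hb
  · refine eq_univ_of_forall fun q => ?_
    obtain ⟨x, rfl⟩ := ConnectedComponents.surjective_coe q
    by_cases hx : x ∈ A
    · left
      rw [ConnectedComponents.coe_eq_coe']
      exact hAc.subset_connectedComponent ha hx
    · right
      have hxB : x ∈ B := by
        by_contra h; exact hx ((hAB x).2 h)
      show (x : ConnectedComponents X) = b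
      rw [ConnectedComponents.coe_eq_coe']
      exact hBc.subset_connectedComponent hb hxB

lemma Good.twoNodal {E : Submodule ℝ (Euc N → ℝ)} (hE : Good E R) (hR : 0 < R) {e : Euc N}
    (he : ‖e‖ = 1) {v : Euc N → ℝ} (hv : v ∈ E) (hv0 : v ≠ 0) (hov : ∀ x, v (sg e x) = - v x) :
    TwoNodal N (Metric.ball 0 R) v := by
  have hpos : ∀ x, ‖x‖ < R → 0 < (inner ℝ x e : ℝ) → v x ≠ 0 := fun x hx hxe h =>
    hv0 (hE.odd e he v hv hov x hx hxe h)
  have hneg : ∀ x, ‖x‖ < R → (inner ℝ x e : ℝ) < 0 → v x ≠ 0 := fun x hx hxe h =>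
    hpos (sg e x) (by rwa [LinearIsometryEquiv.norm_map]) (by rw [sg_inner he]; linarith)
      (by rw [hov, h, neg_zero])
  have hzero : ∀ x, v x ≠ 0 → (inner ℝ x e : ℝ) ≠ 0 := fun x hx h => hx (odd_hyp he hov h)
  have hcont : Continuous (fun x : Euc N => (inner ℝ x e : ℝ)) := by fun_prop
  have hhalf := half_in hR he
  have hconv : ∀ (P : ℝ → Prop), Convex ℝ {r | P r} → (∀ x : Euc N, ‖x‖ < R → P (inner ℝ x e) → v x ≠ 0) →
      IsPreconnected {x : {x : Euc N // x ∈ Metric.ball (0 : Euc N) R ∧ v x ≠ 0} | P (inner ℝ x.1 e)} := by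
    intro P hP h
    have himg : (Subtype.val '' {x : {x : Euc N // x ∈ Metric.ball (0 : Euc N) R ∧ v x ≠ 0} | P (inner ℝ x.1 e)})
        = Metric.ball (0 : Euc N) R ∩ (fun x : Euc N => (inner ℝ x e : ℝ)) ⁻¹' {r | P r} := by
      ext x
      constructor
      · rintro ⟨y, hy, rfl⟩
        exact ⟨y.2.1, hy⟩
      · rintro ⟨h1, h2⟩
        exact ⟨⟨x, h1, h x (by simpa using h1) h2⟩, h2, rfl⟩
    have hpre : IsPreconnected (Metric.ball (0 : Euc N) R ∩ (fun x : Euc N => (inner ℝ x e : ℝ)) ⁻¹' {r | P r}) := by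
      refine Convex.isPreconnected ((convex_ball _ _).inter ?_)
      refine hP.is_linear_preimage ⟨fun x y => by rw [inner_add_left], fun c x => by
        rw [real_inner_smul_left, smul_eq_mul]⟩
    rw [← himg] at hpre
    exact (Topology.IsInducing.isPreconnected_image (Topology.IsInducing.subtypeVal (t := {x : Euc N | x ∈ Metric.ball (0 : Euc N) R ∧ v x ≠ 0}))).1 hpre
  refine card_two (A := {x | 0 < (inner ℝ x.1 e : ℝ)}) (B := {x | (inner ℝ x.1 e : ℝ) < 0}) ?_ ?_
    (hconv (fun r => 0 < r) (convex_Ioi 0) hpos) (hconv (fun r => r < 0) (convex_Iio 0) hneg) ?_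
    (a := ⟨(R / 2) • e, by simpa using hhalf.1, hpos _ hhalf.1 hhalf.2⟩)
    (b := ⟨-((R / 2) • e), by simpa using hhalf.1, hneg _ (by simpa using hhalf.1)
      (by rw [inner_neg_left]; linarith [hhalf.2])⟩) hhalf.2 ?_
  · exact isOpen_Ioi.preimage (hcont.comp continuous_subtype_val)
  · exact isOpen_Iio.preimage (hcont.comp continuous_subtype_val)
  · intro x
    have := hzero x.1 x.2.2
    show 0 < (inner ℝ x.1 e : ℝ) ↔ ¬ ((inner ℝ x.1 e : ℝ) < 0)
    exact ⟨fun h => not_lt.2 h.le, fun h => lt_of_le_of_ne (not_lt.1 h) this.symm⟩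
  · show (inner ℝ (-((R / 2) • e)) e : ℝ) < 0
    rw [inner_neg_left]; linarith [hhalf.2]

theorem main_thm (N : ℕ) (hN : 2 ≤ N) (s : ℝ) (hs : s ∈ Set.Ioo (0 : ℝ) 1)
    (R : ℝ) (hR : 0 < R) (B : Set (Euc N)) (hB : B = Metric.ball (0 : Euc N) R) :
    (∀ u : Euc N → ℝ, IsFirstEigen N s B u → RadialAE N u) ∨
    (∃ (k : ℕ) (w : Fin k → Euc N → ℝ) (v : Fin N → Euc N → ℝ),
      (∀ j : Fin k, IsFirstEigen N s B (w j) ∧ RadialAE N (w j)) ∧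
      (∀ i : Fin N, IsFirstEigen N s B (v i) ∧ Continuous (v i) ∧
        (∀ x : Euc N, v i (reflect N (EuclideanSpace.single i 1) x) = - v i x) ∧
        TwoNodal N B (v i)) ∧
      (∀ u : Euc N → ℝ, IsFirstEigen N s B u →
        ∃ (a : Fin k → ℝ) (b : Fin N → ℝ),
          ∀ᵐ x : Euc N ∂volume, u x = (∑ j, a j * w j x) + ∑ i, b i * v i x)) := by
  subst hB
  have hs0 := hs.1
  have hs1 := hs.2
  have hE := Ev_good hN hs0 hs1 hR (lam1_nonneg (R := R) hN hs) (minH hN hs hR)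
  set E := Ev N s R (lam1 N s R) with hE_def
  have hfirst : ∀ u ∈ E, u ≠ 0 → IsFirstEigen N s (Metric.ball 0 R) u := by
    intro u hu h0
    rw [isFirst_iff hN hs hR]
    exact ⟨hu.2, fun h => h0 ((hu.1.ae_eq_iff_eq volume continuous_zero).1 (hu.2.ae_zero hs0 hR h))⟩
  have hvers : ∀ u, IsFirstEigen N s (Metric.ball 0 R) u → ∃ w ∈ E, u =ᵐ[volume] w := by
    intro u hu
    have hu' := ((isFirst_iff hN hs hR u).1 hu).1
    obtain ⟨w, hw, huw⟩ := hu'.exists_cont hN hs0 hs1 hR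
    exact ⟨w, ⟨hw, hu'.congr hw.measurable huw⟩, huw⟩
  by_cases hall : ∀ u : Euc N → ℝ, IsFirstEigen N s (Metric.ball 0 R) u → RadialAE N u
  · exact Or.inl hall
  right
  push Not at hall
  obtain ⟨u0, hu0, hnr⟩ := hall
  obtain ⟨u1, hu1, hae⟩ := hvers u0 hu0
  have hnr1 : ¬ Radial N u1 := by
    rintro ⟨f, hf⟩
    refine hnr ⟨f, ?_⟩
    filter_upwards [hae] with x hx
    rw [hx, hf]
  choose v hv hv0 hov using fun i => hE.exists_odd hu1 hnr1 hN i
  have hfin : Module.Finite ℝ E := Ev_fd hN hs0 hR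
  let Rd : Submodule ℝ (Euc N → ℝ) :=
    { carrier := {u | Radial N u}
      add_mem' := by
        rintro a b ⟨f, hf⟩ ⟨g, hg⟩
        exact ⟨fun r => f r + g r, fun x => by rw [Pi.add_apply, hf, hg]⟩
      zero_mem' := ⟨fun _ => 0, fun x => rfl⟩
      smul_mem' := by
        rintro c a ⟨f, hf⟩
        exact ⟨fun r => c * f r, fun x => by rw [Pi.smul_apply, hf, smul_eq_mul]⟩ }
  let F : Submodule ℝ (Euc N → ℝ) := E ⊓ Rd
  have hFfin : Module.Finite ℝ F := Submodule.finiteDimensional_of_le (inf_le_left : F ≤ E)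
  let bs := Module.finBasis ℝ F
  refine ⟨Module.finrank ℝ F, fun j => (bs j).1, v, ?_, ?_, ?_⟩
  · intro j
    refine ⟨hfirst _ (bs j).2.1 fun h => bs.ne_zero j (Subtype.ext h), ?_⟩
    obtain ⟨f, hf⟩ : Radial N (bs j).1 := (bs j).2.2
    exact ⟨f, Eventually.of_forall hf⟩
  · intro i
    refine ⟨hfirst _ (hv i) (hv0 i), (hv i).1, fun x => ?_, hE.twoNodal hR (ei_norm i) (hv i) (hv0 i) (hov i)⟩
    rw [reflect, ← sg_apply (ei_norm i)]
    exact hov i x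
  · intro u hu
    obtain ⟨w, hw, huw⟩ := hvers u hu
    obtain ⟨b, g, hg, hgr, hdec⟩ := hE.decomp hR hN hv hv0 hov hw
    let g' : F := ⟨g, hg, hgr⟩
    refine ⟨fun j => bs.repr g' j, b, ?_⟩
    filter_upwards [huw] with x hx
    rw [hx, hdec]
    congr 1
    have h1 := congrArg (fun z : F => z.1 x) (bs.sum_repr g')
    simp only [Submodule.coe_sum, Submodule.coe_smul, Finset.sum_apply, Pi.smul_apply, smul_eq_mul] at h1
    exact h1.symm

end FracNeumann

namespace FracNeumann

/-- Theorem 1.1: structure of the first nontrivial eigenspace in a ball: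
either all first nontrivial eigenfunctions are radially symmetric, or the eigenspace is spanned
by `k` radial eigenfunctions and `N` antisymmetric eigenfunctions with two nodal domains. -/
theorem statement0 (N : ℕ) (hN : 2 ≤ N) (s : ℝ) (hs : s ∈ Set.Ioo (0 : ℝ) 1)
    (R : ℝ) (hR : 0 < R) (B : Set (Euc N)) (hB : B = Metric.ball (0 : Euc N) R) :
    (∀ u : Euc N → ℝ, IsFirstEigen N s B u → RadialAE N u) ∨
    (∃ (k : ℕ) (w : Fin k → Euc N → ℝ) (v : Fin N → Euc N → ℝ),
      (∀ j : Fin k, IsFirstEigen N s B (w j) ∧ RadialAE N (w j)) ∧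
      (∀ i : Fin N, IsFirstEigen N s B (v i) ∧ Continuous (v i) ∧
        (∀ x : Euc N, v i (reflect N (EuclideanSpace.single i 1) x) = - v i x) ∧
        TwoNodal N B (v i)) ∧
      (∀ u : Euc N → ℝ, IsFirstEigen N s B u →
        ∃ (a : Fin k → ℝ) (b : Fin N → ℝ),
          ∀ᵐ x : Euc N ∂volume, u x = (∑ j, a j * w j x) + ∑ i, b i * v i x)) := by
  exact main_thm N hN s hs R hR B hB

end FracNeumann
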